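/- arXiv:1204.6178 — 2 statements merged into one kernel-verified Lean document; each statement's English description precedes it below -/
import Mathlib

section
/- There exist gain matrices F*(k) for k=0,…,N−1 (block diagonal with blocks F*_{ii}(k) ∈ ℝ^{q_i×p_i}) and F¹*(k) for k=1,…,N−1 (with zero blocks in positions (1,2),(2,3),(3,1)) such that the admissible control law determined recursively by u(k) = F*(k)(y(k) − C x̂¹(k)) + F¹*(k)(y(k−1) − C x̂(k−1|k−2)) + L(k) x̂(k), where x̂(k) = x̂¹(k) − (B F*(k−1) + K¹(k−1)) (y(k−1) − C x̂(k−1|k−2)) (with the convention that estimates based on an empty measurement record are zero and terms with negative time indices are absent), minimizes the cost J over all admissible control laws; moreover, along this law, x̂(k) = E[x(k) | σ(y(0),…,y(k−2))] almost surely for every k. -/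
open MeasureTheory ProbabilityTheory Matrix Finset

noncomputable section

/-- Index type for vectors partitioned into three blocks of sizes `v 0, v 1, v 2`. -/
abbrev idx (v : Fin 3 → ℕ) : Type := Σ i : Fin 3, Fin (v i)

/-- The block-index sets `S1 = {1,3}`, `S2 = {1,2}`, `S3 = {2,3}` (0-based:
`{0,2}, {0,1}, {1,2}`). -/
def Sset : Fin 3 → Finset (Fin 3) := ![{0, 2}, {0, 1}, {1, 2}]

/-- Index type for block rows/columns restricted to the blocks in `s`. -/
abbrev ridx (v : Fin 3 → ℕ) (s : Finset (Fin 3)) : Type := {a : idx v // a.1 ∈ s}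

/-- A block-partitioned matrix is block diagonal when all off-diagonal blocks vanish. -/
def BlockDiag {v w : Fin 3 → ℕ} (M : Matrix (idx v) (idx w) ℝ) : Prop :=
  ∀ a b, a.1 ≠ b.1 → M a b = 0

/-- A block-partitioned matrix has zero blocks in positions `(1,2), (2,3), (3,1)`
(1-based), i.e. in positions `(i, i+1 mod 3)` (0-based). -/
def CyclicSparse {v w : Fin 3 → ℕ} (M : Matrix (idx v) (idx w) ℝ) : Prop :=
  ∀ a b, b.1 = a.1 + 1 → M a b = 0

/-- `[M]_{s t}`: the submatrix of the block rows in `s` and block columns in `t`. -/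
def subBB {v w : Fin 3 → ℕ} (M : Matrix (idx v) (idx w) ℝ) (s t : Finset (Fin 3)) :
    Matrix (ridx v s) (ridx w t) ℝ := fun a b => M a.1 b.1

/-- `[M]_{{1,2,3} t}`: all block rows, block columns restricted to `t`. -/
def subCols {v w : Fin 3 → ℕ} (M : Matrix (idx v) (idx w) ℝ) (t : Finset (Fin 3)) :
    Matrix (idx v) (ridx w t) ℝ := fun a b => M a b.1

/-- `[M]ᵢ`: the `i`-th block row of `M`. -/
def blockRow {v w : Fin 3 → ℕ} (M : Matrix (idx v) (idx w) ℝ) (i : Fin 3) :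
    Matrix (Fin (v i)) (idx w) ℝ := fun a b => M ⟨i, a⟩ b

variable {nv qv pv : Fin 3 → ℕ}

/-- The gain `K¹` of the three-player estimator, built from the error covariance `P`: its
`i`-th block row is supported on the block columns in `Sᵢ`, where it equals
`[A]ᵢ [P]_{{1,2,3} Sᵢ} [C]ᵀ_{SᵢSᵢ} ([C]_{SᵢSᵢ}[P]_{SᵢSᵢ}[C]ᵀ_{SᵢSᵢ} + [V]_{SᵢSᵢ})⁻¹`. -/
def K1mat (A : Matrix (idx nv) (idx nv) ℝ) (C : Matrix (idx pv) (idx nv) ℝ)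
    (V : Matrix (idx pv) (idx pv) ℝ) (P : Matrix (idx nv) (idx nv) ℝ) :
    Matrix (idx nv) (idx pv) ℝ := fun a b =>
  if h : b.1 ∈ Sset a.1 then
    (blockRow A a.1 * subCols P (Sset a.1) * (subBB C (Sset a.1) (Sset a.1))ᵀ *
      (subBB C (Sset a.1) (Sset a.1) * subBB P (Sset a.1) (Sset a.1) *
        (subBB C (Sset a.1) (Sset a.1))ᵀ + subBB V (Sset a.1) (Sset a.1))⁻¹) a.2 ⟨b, h⟩
  else 0

/-- The standard Kalman gain `K = A P Cᵀ (C P Cᵀ + V)⁻¹`. -/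
def Kgain (A : Matrix (idx nv) (idx nv) ℝ) (C : Matrix (idx pv) (idx nv) ℝ)
    (V : Matrix (idx pv) (idx pv) ℝ) (P : Matrix (idx nv) (idx nv) ℝ) :
    Matrix (idx nv) (idx pv) ℝ :=
  A * P * Cᵀ * (C * P * Cᵀ + V)⁻¹

/-- The Kalman error covariance recursion `P(0) = P0`,
`P(k+1) = A P(k) Aᵀ + W − K(k) C P(k) Aᵀ`. -/
def Pmat (A : Matrix (idx nv) (idx nv) ℝ) (C : Matrix (idx pv) (idx nv) ℝ)
    (V : Matrix (idx pv) (idx pv) ℝ) (W P0 : Matrix (idx nv) (idx nv) ℝ) :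
    ℕ → Matrix (idx nv) (idx nv) ℝ
  | 0 => P0
  | k + 1 =>
      A * Pmat A C V W P0 k * Aᵀ + W -
        Kgain A C V (Pmat A C V W P0 k) * (C * Pmat A C V W P0 k * Aᵀ)

variable {Ω : Type} [MeasurableSpace Ω]

/-- The one-step Kalman predictor `x̂(k | k−1)`: `x̂(0 | −1) = 0` and
`x̂(k+1 | k) = A x̂(k | k−1) + B u(k) + K(k)(y(k) − C x̂(k | k−1))`. -/
def xpred (A : Matrix (idx nv) (idx nv) ℝ) (B : Matrix (idx nv) (idx qv) ℝ)
    (C : Matrix (idx pv) (idx nv) ℝ) (V : Matrix (idx pv) (idx pv) ℝ)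
    (W P0 : Matrix (idx nv) (idx nv) ℝ)
    (u : ℕ → Ω → idx qv → ℝ) (y : ℕ → Ω → idx pv → ℝ) :
    ℕ → Ω → idx nv → ℝ
  | 0 => fun _ => 0
  | k + 1 => fun ω =>
      A *ᵥ xpred A B C V W P0 u y k ω + B *ᵥ u k ω +
        Kgain A C V (Pmat A C V W P0 k) *ᵥ (y k ω - C *ᵥ xpred A B C V W P0 u y k ω)

/-- The innovation `ỹ(k) = y(k) − C x̂(k | k−1)`. -/
def innov (A : Matrix (idx nv) (idx nv) ℝ) (B : Matrix (idx nv) (idx qv) ℝ)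
    (C : Matrix (idx pv) (idx nv) ℝ) (V : Matrix (idx pv) (idx pv) ℝ)
    (W P0 : Matrix (idx nv) (idx nv) ℝ)
    (u : ℕ → Ω → idx qv → ℝ) (y : ℕ → Ω → idx pv → ℝ) (k : ℕ) : Ω → idx pv → ℝ :=
  fun ω => y k ω - C *ᵥ xpred A B C V W P0 u y k ω

/-- The improved local estimate
`x̂¹(k) = A x̂(k−1 | k−2) + B u(k−1) + K¹(k−1)(y(k−1) − C x̂(k−1 | k−2))` (for `k ≥ 1`). -/
def xh1 (A : Matrix (idx nv) (idx nv) ℝ) (B : Matrix (idx nv) (idx qv) ℝ)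
    (C : Matrix (idx pv) (idx nv) ℝ) (V : Matrix (idx pv) (idx pv) ℝ)
    (W P0 : Matrix (idx nv) (idx nv) ℝ)
    (u : ℕ → Ω → idx qv → ℝ) (y : ℕ → Ω → idx pv → ℝ) (k : ℕ) : Ω → idx nv → ℝ :=
  fun ω =>
    A *ᵥ xpred A B C V W P0 u y (k - 1) ω + B *ᵥ u (k - 1) ω +
      K1mat A C V (Pmat A C V W P0 (k - 1)) *ᵥ innov A B C V W P0 u y (k - 1) ω

/-- A random vector is (jointly) Gaussian when every linear functional of it has a
(possibly degenerate) one-dimensional Gaussian distribution. -/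
def IsGaussianVec {d : Type} [Fintype d] (μ : Measure Ω) (X : Ω → d → ℝ) : Prop :=
  ∀ l : d → ℝ, ∃ m s, μ.map (fun ω => ∑ i, l i * X ω i) = gaussianReal m s

/-- The standing noise assumptions: `x(0), w(0),…,w(N−1), v(0),…,v(N−1)` are measurable,
mutually independent and Gaussian with mean zero and covariances `P0`, `W`, `V`. -/
def NoiseOK (μ : Measure Ω) (N : ℕ) (P0 W : Matrix (idx nv) (idx nv) ℝ)
    (V : Matrix (idx pv) (idx pv) ℝ) (x0 : Ω → idx nv → ℝ)
    (w : ℕ → Ω → idx nv → ℝ) (v : ℕ → Ω → idx pv → ℝ) : Prop :=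
  Measurable x0 ∧ (∀ k, Measurable (w k)) ∧ (∀ k, Measurable (v k)) ∧
  iIndep (fun i : Unit ⊕ Fin N ⊕ Fin N =>
    Sum.elim (fun _ => MeasurableSpace.comap x0 inferInstance)
      (Sum.elim (fun k : Fin N => MeasurableSpace.comap (w ↑k) inferInstance)
        (fun k : Fin N => MeasurableSpace.comap (v ↑k) inferInstance)) i) μ ∧
  IsGaussianVec μ x0 ∧ (∀ k < N, IsGaussianVec μ (w k)) ∧ (∀ k < N, IsGaussianVec μ (v k)) ∧
  (∀ i, ∫ ω, x0 ω i ∂μ = 0) ∧ (∀ i j, ∫ ω, x0 ω i * x0 ω j ∂μ = P0 i j) ∧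
  (∀ k < N, ∀ i, ∫ ω, w k ω i ∂μ = 0) ∧
  (∀ k < N, ∀ i j, ∫ ω, w k ω i * w k ω j ∂μ = W i j) ∧
  (∀ k < N, ∀ i, ∫ ω, v k ω i ∂μ = 0) ∧
  (∀ k < N, ∀ i j, ∫ ω, v k ω i * v k ω j ∂μ = V i j)

/-- The closed-loop equations induced by the admissible control law `(F, G, Φ)`:
`x(k+1) = A x(k) + B u(k) + w(k)`, `y(k) = C x(k) + v(k)`, and
`u(k) = F(k) y(k) + G(k) y(k−1) + ∑_{j ≤ k−2} Φ(k,j) y(j)` (absent terms for `k = 0`). -/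
def ClosedLoop (A : Matrix (idx nv) (idx nv) ℝ) (B : Matrix (idx nv) (idx qv) ℝ)
    (C : Matrix (idx pv) (idx nv) ℝ) (x0 : Ω → idx nv → ℝ)
    (w : ℕ → Ω → idx nv → ℝ) (v : ℕ → Ω → idx pv → ℝ)
    (F G : ℕ → Matrix (idx qv) (idx pv) ℝ) (Φ : ℕ → ℕ → Matrix (idx qv) (idx pv) ℝ)
    (x : ℕ → Ω → idx nv → ℝ) (u : ℕ → Ω → idx qv → ℝ) (y : ℕ → Ω → idx pv → ℝ) : Prop :=
  (∀ ω, x 0 ω = x0 ω) ∧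
  (∀ k, ∀ ω, x (k + 1) ω = A *ᵥ x k ω + B *ᵥ u k ω + w k ω) ∧
  (∀ k, ∀ ω, y k ω = C *ᵥ x k ω + v k ω) ∧
  (∀ k, ∀ ω, u k ω = F k *ᵥ y k ω +
    (if 1 ≤ k then G k *ᵥ y (k - 1) ω else 0) +
    ∑ j ∈ Finset.range (k - 1), Φ k j *ᵥ y j ω)

/-- Sparsity constraints of the three-player information structure: `F(k)` block diagonal
and `G(k)` with zero blocks at `(1,2), (2,3), (3,1)`. -/
def Admissible (F G : ℕ → Matrix (idx qv) (idx pv) ℝ) : Prop :=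
  (∀ k, BlockDiag (F k)) ∧ (∀ k, CyclicSparse (G k))

/-- `σ(y(0), …, y(k−2))`: the common two-step-delayed information. -/
def pastSigma (y : ℕ → Ω → idx pv → ℝ) (k : ℕ) : MeasurableSpace Ω :=
  ⨆ j ∈ Finset.range (k - 1), MeasurableSpace.comap (y j) inferInstance

/-- The finite-horizon quadratic cost
`J = E[∑_{k<N} [x(k);u(k)]ᵀ Q [x(k);u(k)] + x(N)ᵀ Q0 x(N)]`. -/
def cost (μ : Measure Ω) (Qxx : Matrix (idx nv) (idx nv) ℝ)
    (Qxu : Matrix (idx nv) (idx qv) ℝ) (Quu : Matrix (idx qv) (idx qv) ℝ)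
    (Q0 : Matrix (idx nv) (idx nv) ℝ) (N : ℕ)
    (x : ℕ → Ω → idx nv → ℝ) (u : ℕ → Ω → idx qv → ℝ) : ℝ :=
  ∫ ω, ((∑ k ∈ Finset.range N,
      (Sum.elim (x k ω) (u k ω)) ⬝ᵥ
        (Matrix.fromBlocks Qxx Qxu Qxuᵀ Quu) *ᵥ (Sum.elim (x k ω) (u k ω)))
    + (x N ω) ⬝ᵥ Q0 *ᵥ (x N ω)) ∂μ

/-- The closed loop driven by the control law determined recursively by
`u(k) = F*(k)(y(k) − C x̂¹(k)) + F¹*(k)(y(k−1) − C x̂(k−1|k−2)) + L(k) x̂(k)`, where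
`x̂(k) = x̂¹(k) − (B F*(k−1) + K¹(k−1)) (y(k−1) − C x̂(k−1|k−2))`; for `k = 0` the
estimates based on an empty measurement record are zero and the terms with negative time
indices are absent, so `u(0) = F*(0) y(0)`. -/
def OptLoop (A : Matrix (idx nv) (idx nv) ℝ) (B : Matrix (idx nv) (idx qv) ℝ)
    (C : Matrix (idx pv) (idx nv) ℝ) (V : Matrix (idx pv) (idx pv) ℝ)
    (W P0 : Matrix (idx nv) (idx nv) ℝ)
    (x0 : Ω → idx nv → ℝ) (w : ℕ → Ω → idx nv → ℝ) (v : ℕ → Ω → idx pv → ℝ)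
    (Fs F1s : ℕ → Matrix (idx qv) (idx pv) ℝ) (Lm : ℕ → Matrix (idx qv) (idx nv) ℝ)
    (x : ℕ → Ω → idx nv → ℝ) (u : ℕ → Ω → idx qv → ℝ) (y : ℕ → Ω → idx pv → ℝ) : Prop :=
  (∀ ω, x 0 ω = x0 ω) ∧
  (∀ k, ∀ ω, x (k + 1) ω = A *ᵥ x k ω + B *ᵥ u k ω + w k ω) ∧
  (∀ k, ∀ ω, y k ω = C *ᵥ x k ω + v k ω) ∧
  (∀ ω, u 0 ω = Fs 0 *ᵥ y 0 ω) ∧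
  (∀ k, 1 ≤ k → ∀ ω, u k ω =
    Fs k *ᵥ (y k ω - C *ᵥ xh1 A B C V W P0 u y k ω) +
    F1s k *ᵥ innov A B C V W P0 u y (k - 1) ω +
    Lm k *ᵥ (xh1 A B C V W P0 u y k ω -
      (B * Fs (k - 1) + K1mat A C V (Pmat A C V W P0 (k - 1))) *ᵥ
        innov A B C V W P0 u y (k - 1) ω))

namespace TP

set_option linter.unusedSectionVars false

section Lin

variable {Ω : Type} [MeasurableSpace Ω] {Ξ ι κ τ : Type} [Fintype Ξ] [Fintype ι] [Fintype κ]
  [Fintype τ]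

/-- `X` is a linear function of the primitive vector `ξ`. -/
def Lin (ξ : Ω → Ξ → ℝ) (X : Ω → ι → ℝ) : Prop :=
  ∃ M : Matrix ι Ξ ℝ, ∀ ω, X ω = M *ᵥ ξ ω

/-- Cross second-moment matrix. -/
def cv (μ : Measure Ω) (X : Ω → ι → ℝ) (Y : Ω → κ → ℝ) : Matrix ι κ ℝ :=
  fun i j => ∫ ω, X ω i * Y ω j ∂μ

theorem Lin.add {ξ : Ω → Ξ → ℝ} {X Y : Ω → ι → ℝ} (hX : Lin ξ X) (hY : Lin ξ Y) :
    Lin ξ (fun ω => X ω + Y ω) := by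
  obtain ⟨M, hM⟩ := hX
  obtain ⟨M', hM'⟩ := hY
  exact ⟨M + M', fun ω => by simp only [hM, hM', add_mulVec]⟩

theorem Lin.sub {ξ : Ω → Ξ → ℝ} {X Y : Ω → ι → ℝ} (hX : Lin ξ X) (hY : Lin ξ Y) :
    Lin ξ (fun ω => X ω - Y ω) := by
  obtain ⟨M, hM⟩ := hX
  obtain ⟨M', hM'⟩ := hY
  exact ⟨M - M', fun ω => by simp only [hM, hM', sub_mulVec]⟩

theorem Lin.mulVec {ξ : Ω → Ξ → ℝ} {X : Ω → ι → ℝ} (hX : Lin ξ X) (L : Matrix κ ι ℝ) :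
    Lin ξ (fun ω => L *ᵥ X ω) := by
  obtain ⟨M, hM⟩ := hX
  exact ⟨L * M, fun ω => by simp only [hM, mulVec_mulVec]⟩

theorem Lin.zero {ξ : Ω → Ξ → ℝ} : Lin ξ (fun _ => (0 : ι → ℝ)) :=
  ⟨0, fun ω => by simp⟩

theorem Lin.sum {ξ : Ω → Ξ → ℝ} (s : Finset ℕ) (X : ℕ → Ω → ι → ℝ)
    (h : ∀ j ∈ s, Lin ξ (X j)) : Lin ξ (fun ω => ∑ j ∈ s, X j ω) := by
  classical
  induction s using Finset.induction_on with
  | empty => simpa using Lin.zero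
  | insert a s ha ih =>
    have := (h a (by simp)).add (ih fun j hj => h j (by simp [hj]))
    simpa [Finset.sum_insert ha] using this

variable {μ : Measure Ω} {ξ : Ω → Ξ → ℝ}

theorem cv_transpose (X : Ω → ι → ℝ) (Y : Ω → κ → ℝ) : (cv μ X Y)ᵀ = cv μ Y X := by
  ext i j
  simp [cv, mul_comm]

theorem gauss_coord (hξ : HasGaussianLaw ξ μ) (a : Ξ) : MemLp (fun ω => ξ ω a) 2 μ := by
  have := hξ.map_fun (ContinuousLinearMap.proj (R := ℝ) (φ := fun _ : Ξ => ℝ) a)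
  exact this.memLp_two

theorem Lin.memLp (hξ : HasGaussianLaw ξ μ) {X : Ω → ι → ℝ} (hX : Lin ξ X) (i : ι) :
    MemLp (fun ω => X ω i) 2 μ := by
  obtain ⟨M, hM⟩ := hX
  have : (fun ω => X ω i) = fun ω => ∑ a, M i a * ξ ω a := by
    ext ω; rw [hM]; rfl
  rw [this]
  exact memLp_finsetSum _ fun a _ => (gauss_coord hξ a).const_mul _

theorem Lin.gauss (hξ : HasGaussianLaw ξ μ) {X : Ω → ι → ℝ} (hX : Lin ξ X) :
    HasGaussianLaw X μ := by
  obtain ⟨M, hM⟩ := hX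
  have : X = fun ω => (M.mulVecLin.toContinuousLinearMap) (ξ ω) := by
    ext ω; rw [hM]; rfl
  rw [this]
  exact hξ.map_fun _

theorem Lin.gauss_pair (hξ : HasGaussianLaw ξ μ) {X : Ω → ι → ℝ} {Y : Ω → κ → ℝ}
    (hX : Lin ξ X) (hY : Lin ξ Y) : HasGaussianLaw (fun ω => (X ω, Y ω)) μ := by
  obtain ⟨M, hM⟩ := hX
  obtain ⟨M', hM'⟩ := hY
  have : (fun ω => (X ω, Y ω)) = fun ω => ((M.mulVecLin.toContinuousLinearMap).prod
      (M'.mulVecLin.toContinuousLinearMap)) (ξ ω) := by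
    ext ω : 1; rw [hM, hM']; rfl
  rw [this]
  exact hξ.map_fun _

theorem Lin.mean (hξ : HasGaussianLaw ξ μ) (h0 : ∀ a, ∫ ω, ξ ω a ∂μ = 0)
    {X : Ω → ι → ℝ} (hX : Lin ξ X) (i : ι) : ∫ ω, X ω i ∂μ = 0 := by
  have := hξ.isProbabilityMeasure
  obtain ⟨M, hM⟩ := hX
  have : (fun ω => X ω i) = fun ω => ∑ a, M i a * ξ ω a := by
    ext ω; rw [hM]; rfl
  rw [this, integral_finsetSum]
  · simp [integral_const_mul, h0]
  · intro a _
    exact ((gauss_coord hξ a).integrable (by norm_num)).const_mul _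

theorem Lin.int_mul (hξ : HasGaussianLaw ξ μ) {X : Ω → ι → ℝ} {Y : Ω → κ → ℝ}
    (hX : Lin ξ X) (hY : Lin ξ Y) (i : ι) (j : κ) :
    Integrable (fun ω => X ω i * Y ω j) μ :=
  (hX.memLp hξ i).integrable_mul (hY.memLp hξ j)

theorem cv_add_left (hξ : HasGaussianLaw ξ μ) {X X' : Ω → ι → ℝ} {Y : Ω → κ → ℝ}
    (hX : Lin ξ X) (hX' : Lin ξ X') (hY : Lin ξ Y) :
    cv μ (fun ω => X ω + X' ω) Y = cv μ X Y + cv μ X' Y := by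
  ext i j
  simp only [cv, Matrix.add_apply, Pi.add_apply, add_mul]
  exact integral_add (hX.int_mul hξ hY i j) (hX'.int_mul hξ hY i j)

theorem cv_sub_left (hξ : HasGaussianLaw ξ μ) {X X' : Ω → ι → ℝ} {Y : Ω → κ → ℝ}
    (hX : Lin ξ X) (hX' : Lin ξ X') (hY : Lin ξ Y) :
    cv μ (fun ω => X ω - X' ω) Y = cv μ X Y - cv μ X' Y := by
  ext i j
  simp only [cv, Matrix.sub_apply, Pi.sub_apply, sub_mul]
  exact integral_sub (hX.int_mul hξ hY i j) (hX'.int_mul hξ hY i j)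

theorem cv_mulVec_left (hξ : HasGaussianLaw ξ μ) {X : Ω → ι → ℝ} {Y : Ω → κ → ℝ}
    (hX : Lin ξ X) (hY : Lin ξ Y) (L : Matrix τ ι ℝ) :
    cv μ (fun ω => L *ᵥ X ω) Y = L * cv μ X Y := by
  ext i j
  simp only [cv, Matrix.mul_apply, mulVec, dotProduct, Finset.sum_mul]
  rw [integral_finsetSum]
  · simp only [mul_assoc, integral_const_mul]
  · intro a _
    simp only [mul_assoc]
    exact (hX.int_mul hξ hY a j).const_mul _

theorem cv_add_right (hξ : HasGaussianLaw ξ μ) {X X' : Ω → ι → ℝ} {Y : Ω → κ → ℝ}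
    (hX : Lin ξ X) (hX' : Lin ξ X') (hY : Lin ξ Y) :
    cv μ Y (fun ω => X ω + X' ω) = cv μ Y X + cv μ Y X' := by
  rw [← cv_transpose, cv_add_left hξ hX hX' hY, transpose_add, cv_transpose, cv_transpose]

theorem cv_sub_right (hξ : HasGaussianLaw ξ μ) {X X' : Ω → ι → ℝ} {Y : Ω → κ → ℝ}
    (hX : Lin ξ X) (hX' : Lin ξ X') (hY : Lin ξ Y) :
    cv μ Y (fun ω => X ω - X' ω) = cv μ Y X - cv μ Y X' := by
  rw [← cv_transpose, cv_sub_left hξ hX hX' hY, transpose_sub, cv_transpose, cv_transpose]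

theorem cv_mulVec_right (hξ : HasGaussianLaw ξ μ) {X : Ω → ι → ℝ} {Y : Ω → κ → ℝ}
    (hX : Lin ξ X) (hY : Lin ξ Y) (L : Matrix τ ι ℝ) :
    cv μ Y (fun ω => L *ᵥ X ω) = cv μ Y X * Lᵀ := by
  rw [← cv_transpose, cv_mulVec_left hξ hX hY, transpose_mul, cv_transpose]

theorem cv_zero_comm {X : Ω → ι → ℝ} {Y : Ω → κ → ℝ} (h : cv μ X Y = 0) : cv μ Y X = 0 := by
  rw [← cv_transpose, h, transpose_zero]

theorem cv_sum_left_zero (hξ : HasGaussianLaw ξ μ) (s : Finset ℕ) (X : ℕ → Ω → ι → ℝ)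
    {Y : Ω → κ → ℝ} (hY : Lin ξ Y)
    (h : ∀ j ∈ s, Lin ξ (X j)) (h0 : ∀ j ∈ s, cv μ (X j) Y = 0) :
    cv μ (fun ω => ∑ j ∈ s, X j ω) Y = 0 := by
  classical
  induction s using Finset.induction_on with
  | empty => ext i j; simp [cv]
  | insert a s ha ih =>
    simp only [Finset.sum_insert ha]
    rw [cv_add_left hξ (h a (by simp)) (Lin.sum s X fun j hj => h j (by simp [hj])) hY,
      h0 a (by simp), ih (fun j hj => h j (by simp [hj])) (fun j hj => h0 j (by simp [hj])),
      add_zero]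

theorem cv_posSemidef (hξ : HasGaussianLaw ξ μ) {X : Ω → ι → ℝ} (hX : Lin ξ X) :
    (cv μ X X).PosSemidef := by
  refine Matrix.PosSemidef.of_dotProduct_mulVec_nonneg ?_ ?_
  · ext i j; simp [cv, mul_comm]
  · intro c
    have h1 := cv_mulVec_left hξ hX (hX.mulVec (Matrix.of fun (_ : Unit) => c))
      (Matrix.of fun (_ : Unit) => c)
    rw [cv_mulVec_right hξ hX hX] at h1
    have h2 := congrFun (congrFun h1 ()) ()
    have h3 : star c ⬝ᵥ (cv μ X X) *ᵥ c = cv μ (fun ω => (Matrix.of fun (_ : Unit) => c) *ᵥ X ω)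
        (fun ω => (Matrix.of fun (_ : Unit) => c) *ᵥ X ω) () () := by
      rw [h2, Matrix.mul_apply]
      simp [dotProduct, mulVec, Matrix.mul_apply]
    rw [h3]
    exact integral_nonneg fun ω => mul_self_nonneg _

theorem int_quad (hξ : HasGaussianLaw ξ μ) {X : Ω → ι → ℝ} {Y : Ω → κ → ℝ}
    (hX : Lin ξ X) (hY : Lin ξ Y) (H : Matrix ι κ ℝ) :
    Integrable (fun ω => X ω ⬝ᵥ H *ᵥ Y ω) μ := by
  simp only [dotProduct, mulVec, Finset.mul_sum]
  refine integrable_finsetSum _ fun i _ => integrable_finsetSum _ fun j _ => ?_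
  have := (hX.int_mul hξ hY i j).const_mul (H i j)
  exact this.congr (ae_of_all _ fun ω => by simp; ring)

theorem quad_eq (hξ : HasGaussianLaw ξ μ) {X : Ω → ι → ℝ} {Y : Ω → κ → ℝ}
    (hX : Lin ξ X) (hY : Lin ξ Y) (H : Matrix ι κ ℝ) :
    ∫ ω, X ω ⬝ᵥ H *ᵥ Y ω ∂μ = (H * cv μ Y X).trace := by
  simp only [dotProduct, mulVec, Finset.mul_sum, trace, Matrix.diag, Matrix.mul_apply, cv]
  have hi : ∀ i j, Integrable (fun ω => X ω i * (H i j * Y ω j)) μ := fun i j => by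
    have := (hX.int_mul hξ hY i j).const_mul (H i j)
    exact this.congr (ae_of_all _ fun ω => by simp; ring)
  rw [integral_finsetSum _ fun i _ => integrable_finsetSum _ fun j _ => hi i j]
  refine Finset.sum_congr rfl fun i _ => ?_
  rw [integral_finsetSum _ fun j _ => hi i j]
  refine Finset.sum_congr rfl fun j _ => ?_
  rw [← integral_const_mul]
  congr 1; ext ω; ring

/-- Pythagoras for quadratic forms of uncorrelated vectors. -/
theorem quad_add (hξ : HasGaussianLaw ξ μ) {X Y : Ω → ι → ℝ}
    (hX : Lin ξ X) (hY : Lin ξ Y) (h : cv μ X Y = 0) (H : Matrix ι ι ℝ) :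
    ∫ ω, (X ω + Y ω) ⬝ᵥ H *ᵥ (X ω + Y ω) ∂μ =
      ∫ ω, X ω ⬝ᵥ H *ᵥ X ω ∂μ + ∫ ω, Y ω ⬝ᵥ H *ᵥ Y ω ∂μ := by
  rw [quad_eq hξ (hX.add hY) (hX.add hY), quad_eq hξ hX hX, quad_eq hξ hY hY,
    cv_add_left hξ hX hY (hX.add hY), cv_add_right hξ hX hY hX, cv_add_right hξ hX hY hY,
    h, cv_zero_comm h]
  simp [mul_add]

theorem indep_of_cv (hξ : HasGaussianLaw ξ μ) (h0 : ∀ a, ∫ ω, ξ ω a ∂μ = 0)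
    {X : Ω → ι → ℝ} {Y : Ω → κ → ℝ} (hX : Lin ξ X) (hY : Lin ξ Y) (h : cv μ X Y = 0) :
    IndepFun X Y μ := by
  have := hξ.isProbabilityMeasure
  refine HasGaussianLaw.indepFun_of_covariance_eval (X := fun i ω => X ω i)
    (Y := fun j ω => Y ω j) (hX.gauss_pair hξ hY) fun i j => ?_
  rw [covariance_eq_sub (hX.memLp hξ i) (hY.memLp hξ j)]
  have h1 := congrFun (congrFun h i) j
  simp only [cv, Matrix.zero_apply] at h1
  rw [hX.mean hξ h0 i]
  simpa using h1

theorem gaussVec_hasGaussianLaw [IsProbabilityMeasure μ] {X : Ω → ι → ℝ} (hm : Measurable X)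
    (h : IsGaussianVec μ X) : HasGaussianLaw X μ := by
  classical
  refine ⟨⟨fun L => ?_⟩⟩
  obtain ⟨m, s, hms⟩ := h (fun i => L (Pi.single i 1))
  have hL : (fun ω => ∑ i, L (Pi.single i 1) * X ω i) = fun ω => L (X ω) := by
    ext ω
    have : X ω = ∑ i, (X ω i) • (Pi.single i (1:ℝ) : ι → ℝ) := by
      ext j; simp [Finset.sum_apply, Pi.single_apply]
    conv_rhs => rw [this]
    simp [mul_comm]
  rw [hL] at hms
  have hmap : (μ.map X).map L = gaussianReal m s := by
    rw [Measure.map_map (by fun_prop) hm]; exact hms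
  have h1 : ∫ x, L x ∂(μ.map X) = m := by
    have := integral_id_gaussianReal (μ := m) (v := s)
    rw [← hmap, integral_map (by fun_prop) (by fun_prop)] at this
    exact this
  have h2 : Var[L; μ.map X] = s := by
    have := variance_id_gaussianReal (μ := m) (v := s)
    rw [← hmap, variance_map (by fun_prop) (by fun_prop)] at this
    exact this
  rw [hmap, h1, h2]
  simp

end Lin

end TP
namespace TP

set_option linter.unusedSectionVars false

section Noise

variable {nv qv pv : Fin 3 → ℕ} {Ω : Type} [MeasurableSpace Ω]

/-- The linear-algebraic form of the noise assumptions. -/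
structure NoiseLin {Ξ : Type} [Fintype Ξ] (μ : Measure Ω) (N : ℕ)
    (P0 W : Matrix (idx nv) (idx nv) ℝ)
    (V : Matrix (idx pv) (idx pv) ℝ) (x0 : Ω → idx nv → ℝ)
    (w : ℕ → Ω → idx nv → ℝ) (v : ℕ → Ω → idx pv → ℝ) (ξ : Ω → Ξ → ℝ) : Prop where
  gauss : HasGaussianLaw ξ μ
  mean : ∀ a, ∫ ω, ξ ω a ∂μ = 0
  lin0 : Lin ξ x0
  linw : ∀ k < N, Lin ξ (w k)
  linv : ∀ k < N, Lin ξ (v k)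
  c00 : cv μ x0 x0 = P0
  cww : ∀ k < N, cv μ (w k) (w k) = W
  cvv : ∀ k < N, cv μ (v k) (v k) = V
  c0w : ∀ k < N, cv μ x0 (w k) = 0
  c0v : ∀ k < N, cv μ x0 (v k) = 0
  cwv : ∀ j < N, ∀ k < N, cv μ (w j) (v k) = 0
  cww' : ∀ j < N, ∀ k < N, j ≠ k → cv μ (w j) (w k) = 0
  cvv' : ∀ j < N, ∀ k < N, j ≠ k → cv μ (v j) (v k) = 0

/-- Padded noise vectors. -/
def padZ {N : ℕ} (x0 : Ω → idx nv → ℝ) (w : ℕ → Ω → idx nv → ℝ) (v : ℕ → Ω → idx pv → ℝ) :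
    Unit ⊕ Fin N ⊕ Fin N → Ω → (idx nv ⊕ idx pv) → ℝ
  | Sum.inl _, ω => Sum.elim (x0 ω) 0
  | Sum.inr (Sum.inl k), ω => Sum.elim (w k ω) 0
  | Sum.inr (Sum.inr k), ω => Sum.elim 0 (v k ω)

theorem pad_left {X : Ω → idx nv → ℝ} :
    Lin X (fun ω => (Sum.elim (X ω) 0 : idx nv ⊕ idx pv → ℝ)) :=
  ⟨Matrix.fromRows 1 0, fun ω => by simp [Matrix.fromRows_mulVec]⟩

theorem pad_right {X : Ω → idx pv → ℝ} :
    Lin X (fun ω => (Sum.elim 0 (X ω) : idx nv ⊕ idx pv → ℝ)) :=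
  ⟨Matrix.fromRows 0 1, fun ω => by simp [Matrix.fromRows_mulVec]⟩

theorem measurable_of_lin {ι κ : Type} [Fintype ι] [Fintype κ] {m : MeasurableSpace Ω}
    {X : Ω → ι → ℝ} {Y : Ω → κ → ℝ}
    (hX : Measurable X) (h : Lin X Y) : Measurable Y := by
  obtain ⟨M, hM⟩ := h
  have : Y = (fun z => M *ᵥ z) ∘ X := by ext1 ω; exact hM ω
  rw [this]
  have h2 : Measurable (fun z : ι → ℝ => M *ᵥ z) :=
    (M.mulVecLin.toContinuousLinearMap).continuous.measurable
  exact h2.comp hX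

theorem comap_le_of_lin {ι κ : Type} [Fintype ι] [Fintype κ] {X : Ω → ι → ℝ} {Y : Ω → κ → ℝ}
    (h : Lin X Y) : MeasurableSpace.comap Y inferInstance ≤
      MeasurableSpace.comap X inferInstance :=
  (measurable_of_lin (m := MeasurableSpace.comap X inferInstance)
    (comap_measurable X) h).comap_le

theorem exists_noiseLin (μ : Measure Ω) [IsProbabilityMeasure μ] (N : ℕ)
    (P0 W : Matrix (idx nv) (idx nv) ℝ)
    (V : Matrix (idx pv) (idx pv) ℝ) (x0 : Ω → idx nv → ℝ)
    (w : ℕ → Ω → idx nv → ℝ) (v : ℕ → Ω → idx pv → ℝ) (h : NoiseOK μ N P0 W V x0 w v) :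
    ∃ ξ : Ω → ((Unit ⊕ Fin N ⊕ Fin N) × (idx nv ⊕ idx pv)) → ℝ,
      NoiseLin μ N P0 W V x0 w v ξ := by
  obtain ⟨m0, mw, mv, hind, g0, gw, gv, e0, c0, ew, cw, ev, cv'⟩ := h
  have hG : ∀ i, HasGaussianLaw (padZ (N := N) x0 w v i) μ := by
    rintro (_ | k | k)
    · exact pad_left.gauss (gaussVec_hasGaussianLaw m0 g0)
    · exact pad_left.gauss (gaussVec_hasGaussianLaw (mw k) (gw k k.2))
    · exact pad_right.gauss (gaussVec_hasGaussianLaw (mv k) (gv k k.2))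
  have hI : iIndepFun (padZ (N := N) x0 w v) μ := by
    refine iIndep_of_iIndep_of_le hind ?_
    rintro (_ | k | k)
    · exact comap_le_of_lin pad_left
    · exact comap_le_of_lin pad_left
    · exact comap_le_of_lin pad_right
  have hZ := hI.hasGaussianLaw hG
  have hM : ∀ i d, ∫ ω, padZ (N := N) x0 w v i ω d ∂μ = 0 := by
    rintro (_ | k | k) (d | d) <;> simp [padZ, e0, ew, ev]
  have hC : ∀ i j, i ≠ j → ∀ d d', ∫ ω, padZ (N := N) x0 w v i ω d *
      padZ (N := N) x0 w v j ω d' ∂μ = 0 := by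
    intro i j hij d d'
    have h1 := hI.indepFun hij
    have hm : ∀ d, Measurable (fun z : idx nv ⊕ idx pv → ℝ => z d) :=
      fun d => measurable_pi_apply d
    have h2 := h1.comp (hm d) (hm d')
    have h3 := h2.integral_fun_mul_eq_mul_integral
      (((hG i).map_fun (ContinuousLinearMap.proj (R := ℝ)
        (φ := fun _ : idx nv ⊕ idx pv => ℝ) d)).memLp_two.1)
      (((hG j).map_fun (ContinuousLinearMap.proj (R := ℝ)
        (φ := fun _ : idx nv ⊕ idx pv => ℝ) d')).memLp_two.1)
    simp only [Function.comp] at h3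
    rw [h3, hM, zero_mul]
  refine ⟨fun ω a => padZ (N := N) x0 w v a.1 ω a.2, ?_⟩
  constructor
  · exact hZ.map_fun (ContinuousLinearMap.pi fun a : (Unit ⊕ Fin N ⊕ Fin N) × (idx nv ⊕ idx pv) =>
      (ContinuousLinearMap.proj (R := ℝ) (φ := fun _ : idx nv ⊕ idx pv => ℝ) a.2).comp
        (ContinuousLinearMap.proj (R := ℝ)
          (φ := fun _ : Unit ⊕ Fin N ⊕ Fin N => (idx nv ⊕ idx pv → ℝ)) a.1))
  · exact fun a => hM a.1 a.2
  · classical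
    refine ⟨Matrix.of fun i => Pi.single (Sum.inl (), Sum.inl i) 1, fun ω => ?_⟩
    ext i
    simp [mulVec, padZ]
  · classical
    intro k hk
    refine ⟨Matrix.of fun i => Pi.single (Sum.inr (Sum.inl ⟨k, hk⟩), Sum.inl i) 1, fun ω => ?_⟩
    ext i
    simp [mulVec, padZ]
  · classical
    intro k hk
    refine ⟨Matrix.of fun i => Pi.single (Sum.inr (Sum.inr ⟨k, hk⟩), Sum.inr i) 1, fun ω => ?_⟩
    ext i
    simp [mulVec, padZ]
  · ext i j; exact c0 i j
  · intro k hk; ext i j; exact cw k hk i j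
  · intro k hk; ext i j; exact cv' k hk i j
  · intro k hk; ext i j
    exact hC (Sum.inl ()) (Sum.inr (Sum.inl ⟨k, hk⟩)) (by simp) (Sum.inl i) (Sum.inl j)
  · intro k hk; ext i j
    exact hC (Sum.inl ()) (Sum.inr (Sum.inr ⟨k, hk⟩)) (by simp) (Sum.inl i) (Sum.inr j)
  · intro j hj k hk; ext i i'
    exact hC (Sum.inr (Sum.inl ⟨j, hj⟩)) (Sum.inr (Sum.inr ⟨k, hk⟩)) (by simp) (Sum.inl i)
      (Sum.inr i')
  · intro j hj k hk hjk; ext i i'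
    exact hC (Sum.inr (Sum.inl ⟨j, hj⟩)) (Sum.inr (Sum.inl ⟨k, hk⟩)) (by simpa using hjk)
      (Sum.inl i) (Sum.inl i')
  · intro j hj k hk hjk; ext i i'
    exact hC (Sum.inr (Sum.inr ⟨j, hj⟩)) (Sum.inr (Sum.inr ⟨k, hk⟩)) (by simpa using hjk)
      (Sum.inr i) (Sum.inr i')

end Noise

end TP
namespace TP

set_option linter.unusedSectionVars false

section Err

variable {nv qv pv : Fin 3 → ℕ} {Ω : Type} [MeasurableSpace Ω] {Ξ : Type} [Fintype Ξ]

/-- The estimation error. -/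
def err (A : Matrix (idx nv) (idx nv) ℝ) (C : Matrix (idx pv) (idx nv) ℝ)
    (V : Matrix (idx pv) (idx pv) ℝ) (W P0 : Matrix (idx nv) (idx nv) ℝ)
    (x0 : Ω → idx nv → ℝ) (w : ℕ → Ω → idx nv → ℝ) (v : ℕ → Ω → idx pv → ℝ) :
    ℕ → Ω → idx nv → ℝ
  | 0 => x0
  | k + 1 => fun ω => A *ᵥ err A C V W P0 x0 w v k ω + w k ω -
      Kgain A C V (Pmat A C V W P0 k) *ᵥ (C *ᵥ err A C V W P0 x0 w v k ω + v k ω)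

/-- The innovation, as a function of the noises only. -/
def yt (A : Matrix (idx nv) (idx nv) ℝ) (C : Matrix (idx pv) (idx nv) ℝ)
    (V : Matrix (idx pv) (idx pv) ℝ) (W P0 : Matrix (idx nv) (idx nv) ℝ)
    (x0 : Ω → idx nv → ℝ) (w : ℕ → Ω → idx nv → ℝ) (v : ℕ → Ω → idx pv → ℝ)
    (k : ℕ) : Ω → idx pv → ℝ :=
  fun ω => C *ᵥ err A C V W P0 x0 w v k ω + v k ω

variable {μ : Measure Ω} {N : ℕ}
    {A : Matrix (idx nv) (idx nv) ℝ} {C : Matrix (idx pv) (idx nv) ℝ}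
    {P0 W : Matrix (idx nv) (idx nv) ℝ}
    {V : Matrix (idx pv) (idx pv) ℝ} {x0 : Ω → idx nv → ℝ}
    {w : ℕ → Ω → idx nv → ℝ} {v : ℕ → Ω → idx pv → ℝ} {ξ : Ω → Ξ → ℝ}

theorem err_succ (k : ℕ) : err A C V W P0 x0 w v (k + 1) = fun ω =>
    A *ᵥ err A C V W P0 x0 w v k ω + w k ω -
      Kgain A C V (Pmat A C V W P0 k) *ᵥ yt A C V W P0 x0 w v k ω := rfl

theorem yt_eq (k : ℕ) : yt A C V W P0 x0 w v k =
    fun ω => C *ᵥ err A C V W P0 x0 w v k ω + v k ω := rfl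

theorem lin_err_yt (h : NoiseLin μ N P0 W V x0 w v ξ) (k : ℕ) :
    (k ≤ N → Lin ξ (err A C V W P0 x0 w v k)) ∧ (k < N → Lin ξ (yt A C V W P0 x0 w v k)) := by
  have key : ∀ k, (k ≤ N → Lin ξ (err A C V W P0 x0 w v k)) →
      (k < N → Lin ξ (yt A C V W P0 x0 w v k)) := fun k hk hkN =>
    ((hk hkN.le).mulVec C).add (h.linv k hkN)
  induction k with
  | zero => exact ⟨fun _ => h.lin0, key 0 fun _ => h.lin0⟩
  | succ k ih =>
    have : k + 1 ≤ N → Lin ξ (err A C V W P0 x0 w v (k + 1)) := fun hk => by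
      rw [err_succ]
      exact (((ih.1 (by omega)).mulVec A).add (h.linw k (by omega))).sub
        ((ih.2 (by omega)).mulVec _)
    exact ⟨this, key _ this⟩

theorem lin_err (h : NoiseLin μ N P0 W V x0 w v ξ) {k : ℕ} (hk : k ≤ N) :
    Lin ξ (err A C V W P0 x0 w v k) := (lin_err_yt h k).1 hk

theorem lin_yt (h : NoiseLin μ N P0 W V x0 w v ξ) {k : ℕ} (hk : k < N) :
    Lin ξ (yt A C V W P0 x0 w v k) := (lin_err_yt h k).2 hk

theorem cv_err_w_v (h : NoiseLin μ N P0 W V x0 w v ξ) (k : ℕ) :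
    ∀ j < N, k ≤ j → cv μ (err A C V W P0 x0 w v k) (w j) = 0 ∧
      cv μ (err A C V W P0 x0 w v k) (v j) = 0 := by
  induction k with
  | zero => exact fun j hj _ => ⟨h.c0w j hj, h.c0v j hj⟩
  | succ k ih =>
    intro j hj hkj
    have hk : k < N := by omega
    have he := lin_err (A := A) (C := C) h hk.le
    have hy := lin_yt (A := A) (C := C) h hk
    have hw := h.linw k hk
    have hv := h.linv k hk
    have hwj := h.linw j hj
    have hvj := h.linv j hj
    have hg := h.gauss
    obtain ⟨i1, i2⟩ := ih j hj (by omega)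
    rw [err_succ, cv_sub_left hg ((he.mulVec A).add hw) (hy.mulVec _) hwj,
      cv_sub_left hg ((he.mulVec A).add hw) (hy.mulVec _) hvj,
      cv_add_left hg (he.mulVec A) hw hwj, cv_add_left hg (he.mulVec A) hw hvj,
      cv_mulVec_left hg he hwj, cv_mulVec_left hg he hvj, cv_mulVec_left hg hy hwj,
      cv_mulVec_left hg hy hvj, yt_eq, cv_add_left hg (he.mulVec C) hv hwj,
      cv_add_left hg (he.mulVec C) hv hvj, cv_mulVec_left hg he hwj, cv_mulVec_left hg he hvj,
      i1, i2, h.cww' k hk j hj (by omega), h.cvv' k hk j hj (by omega), h.cwv k hk j hj,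
      cv_zero_comm (h.cwv j hj k hk)]
    simp

theorem cv_yt_w (h : NoiseLin μ N P0 W V x0 w v ξ) {j k : ℕ} (hk : k < N) (hjk : j ≤ k) :
    cv μ (yt A C V W P0 x0 w v j) (w k) = 0 := by
  have hj : j < N := by omega
  rw [yt_eq, cv_add_left h.gauss ((lin_err h hj.le).mulVec C) (h.linv j hj) (h.linw k hk),
    cv_mulVec_left h.gauss (lin_err h hj.le) (h.linw k hk), (cv_err_w_v h j k hk hjk).1,
    cv_zero_comm (h.cwv k hk j hj)]
  simp

theorem cv_yt_v (h : NoiseLin μ N P0 W V x0 w v ξ) {j k : ℕ} (hk : k < N) (hjk : j < k) :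
    cv μ (yt A C V W P0 x0 w v j) (v k) = 0 := by
  have hj : j < N := by omega
  rw [yt_eq, cv_add_left h.gauss ((lin_err h hj.le).mulVec C) (h.linv j hj) (h.linv k hk),
    cv_mulVec_left h.gauss (lin_err h hj.le) (h.linv k hk), (cv_err_w_v h j k hk hjk.le).2,
    h.cvv' j hj k hk hjk.ne]
  simp

theorem cv_yt_self (h : NoiseLin μ N P0 W V x0 w v ξ) {k : ℕ} (hk : k < N) :
    cv μ (err A C V W P0 x0 w v k) (yt A C V W P0 x0 w v k) =
      cv μ (err A C V W P0 x0 w v k) (err A C V W P0 x0 w v k) * Cᵀ ∧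
    cv μ (yt A C V W P0 x0 w v k) (yt A C V W P0 x0 w v k) =
      C * cv μ (err A C V W P0 x0 w v k) (err A C V W P0 x0 w v k) * Cᵀ + V := by
  have he := lin_err (A := A) (C := C) h hk.le
  have hy := lin_yt (A := A) (C := C) h hk
  have hv := h.linv k hk
  have hg := h.gauss
  have h1 : cv μ (err A C V W P0 x0 w v k) (yt A C V W P0 x0 w v k) =
      cv μ (err A C V W P0 x0 w v k) (err A C V W P0 x0 w v k) * Cᵀ := by
    rw [yt_eq, cv_add_right hg (he.mulVec C) hv he, cv_mulVec_right hg he he,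
      (cv_err_w_v h k k hk le_rfl).2, add_zero]
  refine ⟨h1, ?_⟩
  conv_lhs => arg 2; rw [yt_eq]
  rw [cv_add_left hg (he.mulVec C) hv hy, cv_mulVec_left hg he hy, h1, yt_eq,
    cv_add_right hg (he.mulVec C) hv hv, cv_mulVec_right hg he hv,
    cv_zero_comm (cv_err_w_v h k k hk le_rfl).2, h.cvv k hk, Matrix.mul_assoc]
  simp

theorem det_ne (hV : V.PosDef) {P : Matrix (idx nv) (idx nv) ℝ} (hP : P.PosSemidef) :
    IsUnit (C * P * Cᵀ + V).det := by
  have h1 : (C * P * Cᵀ).PosSemidef := by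
    have := hP.mul_mul_conjTranspose_same C
    simpa using this
  have := Matrix.PosDef.posSemidef_add h1 hV
  exact (Matrix.isUnit_iff_isUnit_det _).1 this.isUnit

theorem cv_err_err (h : NoiseLin μ N P0 W V x0 w v ξ) (hV : V.PosDef) (k : ℕ) (hk : k ≤ N) :
    cv μ (err A C V W P0 x0 w v k) (err A C V W P0 x0 w v k) = Pmat A C V W P0 k := by
  induction k with
  | zero => exact h.c00
  | succ k ih =>
    have hk' : k < N := by omega
    have ih := ih hk'.le
    have he := lin_err (A := A) (C := C) h hk'.le
    have he' := lin_err (A := A) (C := C) h hk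
    have hy := lin_yt (A := A) (C := C) h hk'
    have hw := h.linw k hk'
    have hv := h.linv k hk'
    have hg := h.gauss
    obtain ⟨c1, c2⟩ := cv_yt_self (A := A) (C := C) h hk'
    have c1' : cv μ (yt A C V W P0 x0 w v k) (err A C V W P0 x0 w v k) =
        C * cv μ (err A C V W P0 x0 w v k) (err A C V W P0 x0 w v k) := by
      rw [← cv_transpose, c1, transpose_mul, cv_transpose, transpose_transpose]
    have hP := cv_posSemidef hg he
    have hPT : (Pmat A C V W P0 k)ᵀ = Pmat A C V W P0 k := by rw [← ih, cv_transpose]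
    have hdet := det_ne (C := C) hV hP
    rw [err_succ]
    rw [cv_sub_left hg ((he.mulVec A).add hw) (hy.mulVec _) 
        (((he.mulVec A).add hw).sub (hy.mulVec _)),
      cv_sub_right hg ((he.mulVec A).add hw) (hy.mulVec _) ((he.mulVec A).add hw),
      cv_sub_right hg ((he.mulVec A).add hw) (hy.mulVec _) (hy.mulVec _),
      cv_add_left hg (he.mulVec A) hw ((he.mulVec A).add hw),
      cv_add_right hg (he.mulVec A) hw (he.mulVec A),
      cv_add_right hg (he.mulVec A) hw hw,
      cv_add_left hg (he.mulVec A) hw (hy.mulVec _),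
      cv_add_right hg (he.mulVec A) hw (hy.mulVec _),
      cv_mulVec_left hg he (he.mulVec A), cv_mulVec_right hg he he,
      cv_mulVec_left hg he hw, cv_mulVec_right hg he hw,
      (cv_err_w_v h k k hk' le_rfl).1, cv_zero_comm (cv_err_w_v h k k hk' le_rfl).1,
      h.cww k hk', cv_mulVec_left hg he (hy.mulVec _), cv_mulVec_right hg hy he,
      cv_mulVec_right hg hy hw, cv_zero_comm (cv_yt_w h hk' le_rfl),
      cv_mulVec_left hg hy (he.mulVec _), cv_mulVec_right hg he hy,
      cv_mulVec_left hg hy hw, (cv_yt_w h hk' le_rfl),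
      cv_mulVec_left hg hy (hy.mulVec _), cv_mulVec_right hg hy hy, c1, c2, c1', ih]
    rw [ih] at hdet
    have hK : Kgain A C V (Pmat A C V W P0 k) * (C * Pmat A C V W P0 k * Cᵀ + V) =
        A * Pmat A C V W P0 k * Cᵀ := by
      rw [Kgain, Matrix.mul_assoc, Matrix.nonsing_inv_mul _ hdet, Matrix.mul_one]
    have e1 : Kgain A C V (Pmat A C V W P0 k) * ((C * Pmat A C V W P0 k * Cᵀ + V) *
        (Kgain A C V (Pmat A C V W P0 k))ᵀ) =
        A * (Pmat A C V W P0 k * Cᵀ * (Kgain A C V (Pmat A C V W P0 k))ᵀ) := by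
      rw [← Matrix.mul_assoc, hK]; simp only [Matrix.mul_assoc]
    rw [e1, Pmat]
    simp only [Matrix.mul_zero, Matrix.zero_mul, add_zero, zero_add, Matrix.mul_assoc]
    abel

theorem cv_err_yt (h : NoiseLin μ N P0 W V x0 w v ξ) (hV : V.PosDef) (k : ℕ) (hk : k ≤ N) :
    ∀ j < k, cv μ (err A C V W P0 x0 w v k) (yt A C V W P0 x0 w v j) = 0 := by
  induction k with
  | zero => intro j hj; omega
  | succ k ih =>
    intro j hj
    have hk' : k < N := by omega
    have ih := ih hk'.le
    have he := lin_err (A := A) (C := C) h hk'.le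
    have hy := lin_yt (A := A) (C := C) h hk'
    have hyj := lin_yt (A := A) (C := C) (k := j) h (by omega)
    have hw := h.linw k hk'
    have hv := h.linv k hk'
    have hg := h.gauss
    rw [err_succ, cv_sub_left hg ((he.mulVec A).add hw) (hy.mulVec _) hyj,
      cv_add_left hg (he.mulVec A) hw hyj, cv_mulVec_left hg he hyj, cv_mulVec_left hg hy hyj,
      cv_zero_comm (cv_yt_w h hk' (by omega))]
    rcases eq_or_lt_of_le (Nat.lt_succ_iff.1 hj) with rfl | hlt
    · obtain ⟨c1, c2⟩ := cv_yt_self (A := A) (C := C) h hk'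
      have hP := cv_posSemidef hg he
      have hdet := det_ne (C := C) hV hP
      rw [cv_err_err h hV j hk'.le] at c1 c2 hdet
      rw [c1, c2, Kgain, Matrix.mul_assoc (A * _ * _), Matrix.nonsing_inv_mul _ hdet,
        Matrix.mul_one]
      simp [Matrix.mul_assoc]
    · rw [ih j hlt]
      conv_lhs => enter [2, 2, 2]; rw [yt_eq]
      rw [cv_add_left hg (he.mulVec C) hv hyj, cv_mulVec_left hg he hyj, ih j hlt,
        cv_zero_comm (cv_yt_v h hk' hlt)]
      simp

theorem cv_yt_yt (h : NoiseLin μ N P0 W V x0 w v ξ) (hV : V.PosDef) {j k : ℕ} (hk : k < N)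
    (hj : j < k) : cv μ (yt A C V W P0 x0 w v k) (yt A C V W P0 x0 w v j) = 0 := by
  have he := lin_err (A := A) (C := C) h hk.le
  have hyj := lin_yt (A := A) (C := C) (k := j) h (by omega)
  have hv := h.linv k hk
  have hg := h.gauss
  conv_lhs => enter [2]; rw [yt_eq]
  rw [cv_add_left hg (he.mulVec C) hv hyj, cv_mulVec_left hg he hyj, cv_err_yt h hV k hk.le j hj,
    cv_zero_comm (cv_yt_v h hk hj)]
  simp

end Err

end TP
namespace TP

set_option linter.unusedSectionVars false

section Rep

variable {Ω : Type} {ι κ τ σ : Type} [Fintype ι] [Fintype κ] [Fintype τ] [Fintype σ]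

/-- `X` is a linear combination of `s 0, …, s (m-1)`. -/
def InPast (s : ℕ → Ω → τ → ℝ) (m : ℕ) (X : Ω → ι → ℝ) : Prop :=
  ∃ c : ℕ → Matrix ι τ ℝ, ∀ ω, X ω = ∑ j ∈ Finset.range m, c j *ᵥ s j ω

variable {s : ℕ → Ω → τ → ℝ} {m : ℕ}

theorem InPast.add {X Y : Ω → ι → ℝ} (hX : InPast s m X) (hY : InPast s m Y) :
    InPast s m (fun ω => X ω + Y ω) := by
  obtain ⟨c, hc⟩ := hX
  obtain ⟨d, hd⟩ := hY
  exact ⟨fun j => c j + d j, fun ω => by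
    simp only [hc, hd, add_mulVec, Finset.sum_add_distrib]⟩

theorem InPast.sub {X Y : Ω → ι → ℝ} (hX : InPast s m X) (hY : InPast s m Y) :
    InPast s m (fun ω => X ω - Y ω) := by
  obtain ⟨c, hc⟩ := hX
  obtain ⟨d, hd⟩ := hY
  exact ⟨fun j => c j - d j, fun ω => by
    simp only [hc, hd, sub_mulVec, Finset.sum_sub_distrib]⟩

theorem InPast.mulVec {X : Ω → ι → ℝ} (hX : InPast s m X) (L : Matrix κ ι ℝ) :
    InPast s m (fun ω => L *ᵥ X ω) := by
  obtain ⟨c, hc⟩ := hX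
  exact ⟨fun j => L * c j, fun ω => by
    simp only [hc, mulVec_sum, mulVec_mulVec]⟩

theorem InPast.zero : InPast s m (fun _ => (0 : ι → ℝ)) :=
  ⟨0, fun ω => by simp⟩

theorem InPast.congr {X Y : Ω → ι → ℝ} (hX : InPast s m X) (h : ∀ ω, Y ω = X ω) :
    InPast s m Y := by
  obtain ⟨c, hc⟩ := hX
  exact ⟨c, fun ω => by rw [h, hc]⟩

theorem InPast.mono {X : Ω → ι → ℝ} (hX : InPast s m X) {m' : ℕ} (h : m ≤ m') :
    InPast s m' X := by
  obtain ⟨c, hc⟩ := hX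
  refine ⟨fun j => if j < m then c j else 0, fun ω => ?_⟩
  rw [hc]
  rw [← Finset.sum_subset (Finset.range_mono h)]
  · refine Finset.sum_congr rfl fun j hj => ?_
    simp [Finset.mem_range.1 hj]
  · intro j _ hj
    have : ¬ j < m := by simpa using hj
    simp [this]

theorem InPast.single {j : ℕ} (hj : j < m) : InPast s m (s j) := by
  classical
  refine ⟨fun i => if i = j then 1 else 0, fun ω => ?_⟩
  rw [Finset.sum_eq_single j]
  · simp
  · intro b _ hb; simp [hb]
  · intro h; simp at h; omega

theorem InPast.sum (S : Finset ℕ) (X : ℕ → Ω → ι → ℝ)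
    (h : ∀ j ∈ S, InPast s m (X j)) : InPast s m (fun ω => ∑ j ∈ S, X j ω) := by
  classical
  induction S using Finset.induction_on with
  | empty => simpa using InPast.zero
  | insert a S ha ih =>
    have := (h a (by simp)).add (ih fun j hj => h j (by simp [hj]))
    simpa [Finset.sum_insert ha] using this

/-- previous innovation, `0` at time `0`. -/
def tp (t : ℕ → Ω → τ → ℝ) : ℕ → Ω → τ → ℝ
  | 0 => fun _ => 0
  | k + 1 => t k

/-- Innovation dynamics of the predictor. -/
structure Dyn (A : Matrix ι ι ℝ) (B : Matrix ι κ ℝ) (C : Matrix τ ι ℝ) (K : ℕ → Matrix ι τ ℝ)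
    (u : ℕ → Ω → κ → ℝ) (y z' : ℕ → Ω → τ → ℝ) (z : ℕ → Ω → ι → ℝ) : Prop where
  z0 : ∀ ω, z 0 ω = 0
  zs : ∀ k ω, z (k + 1) ω = A *ᵥ z k ω + B *ᵥ u k ω + K k *ᵥ z' k ω
  y : ∀ k ω, y k ω = z' k ω + C *ᵥ z k ω

/-- The representation of predictor and control at time `k`. -/
def RepAt (B : Matrix ι κ ℝ) (C : Matrix τ ι ℝ) (K : ℕ → Matrix ι τ ℝ)
    (F G : ℕ → Matrix κ τ ℝ)
    (u : ℕ → Ω → κ → ℝ) (t : ℕ → Ω → τ → ℝ) (z : ℕ → Ω → ι → ℝ) (k : ℕ)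
    (p : Ω → κ → ℝ) (r : Ω → ι → ℝ) : Prop :=
  InPast t (k - 1) p ∧ InPast t (k - 1) r ∧
  (∀ ω, z k ω = (B * F (k - 1) + K (k - 1)) *ᵥ tp t k ω + r ω) ∧
  (∀ ω, u k ω = F k *ᵥ t k ω + (F k * C * K (k - 1) + G k) *ᵥ tp t k ω + p ω)

variable {A : Matrix ι ι ℝ} {B : Matrix ι κ ℝ} {C : Matrix τ ι ℝ} {K : ℕ → Matrix ι τ ℝ}
    {u : ℕ → Ω → κ → ℝ} {y t : ℕ → Ω → τ → ℝ} {z : ℕ → Ω → ι → ℝ}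

theorem closed_past (h : Dyn A B C K u y t z) {F G : ℕ → Matrix κ τ ℝ}
    {Φ : ℕ → ℕ → Matrix κ τ ℝ}
    (hu : ∀ k, ∀ ω, u k ω = F k *ᵥ y k ω +
      (if 1 ≤ k then G k *ᵥ y (k - 1) ω else 0) +
      ∑ j ∈ Finset.range (k - 1), Φ k j *ᵥ y j ω) (k : ℕ) :
    InPast t k (z k) ∧ InPast t (k + 1) (y k) ∧ InPast t (k + 1) (u k) := by
  induction k using Nat.strong_induction_on with
  | _ k ih =>
    have hz : InPast t k (z k) := by
      cases k with
      | zero => exact InPast.zero.congr h.z0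
      | succ k =>
        have ih' := ih k (by omega)
        exact ((((ih'.1.mono (Nat.le_succ k)).mulVec A).add (ih'.2.2.mulVec B)).add
          ((InPast.single (Nat.lt_succ_self k)).mulVec (K k))).congr (h.zs k)
    have hy : InPast t (k + 1) (y k) :=
      ((InPast.single (Nat.lt_succ_self k)).add ((hz.mono (Nat.le_succ k)).mulVec C)).congr (h.y k)
    refine ⟨hz, hy, ?_⟩
    refine (((hy.mulVec (F k)).add ?_).add
      (InPast.sum (Finset.range (k - 1)) (fun j ω => Φ k j *ᵥ y j ω) fun j hj => ?_)).congr (hu k)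
    · split_ifs with h1
      · exact ((ih (k - 1) (by omega)).2.1.mono (by omega)).mulVec _
      · exact InPast.zero
    · have := Finset.mem_range.1 hj
      exact ((ih j (by omega)).2.1.mono (by omega)).mulVec _

theorem closed_rep (h : Dyn A B C K u y t z) {F G : ℕ → Matrix κ τ ℝ}
    {Φ : ℕ → ℕ → Matrix κ τ ℝ}
    (hu : ∀ k, ∀ ω, u k ω = F k *ᵥ y k ω +
      (if 1 ≤ k then G k *ᵥ y (k - 1) ω else 0) +
      ∑ j ∈ Finset.range (k - 1), Φ k j *ᵥ y j ω) (k : ℕ) :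
    ∃ p r, RepAt B C K F (fun k => G k + F k * C * B * F (k - 1)) u t z k p r := by
  cases k with
  | zero =>
    refine ⟨fun _ => 0, fun _ => 0, InPast.zero, InPast.zero, fun ω => ?_, fun ω => ?_⟩
    · simp [h.z0, tp]
    · rw [hu, h.y, h.z0]; simp [tp]
  | succ k =>
    have hP := closed_past h hu
    have hD : InPast t k (fun ω => u k ω - F k *ᵥ t k ω) := by
      have h1 : InPast t k (fun ω => F k *ᵥ (C *ᵥ z k ω) +
          (if 1 ≤ k then G k *ᵥ y (k - 1) ω else 0) +
          ∑ j ∈ Finset.range (k - 1), Φ k j *ᵥ y j ω) := by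
        refine ((((hP k).1.mulVec C).mulVec (F k)).add ?_).add
          (InPast.sum (Finset.range (k - 1)) (fun j ω => Φ k j *ᵥ y j ω) fun j hj => ?_)
        · split_ifs with h1
          · exact ((hP (k - 1)).2.1.mono (by omega)).mulVec _
          · exact InPast.zero
        · have := Finset.mem_range.1 hj
          exact ((hP j).2.1.mono (by omega)).mulVec _
      refine h1.congr fun ω => ?_
      rw [hu, h.y k, mulVec_add]
      abel
    have hr : InPast t k (fun ω => A *ᵥ z k ω + B *ᵥ (u k ω - F k *ᵥ t k ω)) :=
      ((hP k).1.mulVec A).add (hD.mulVec B)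
    have hS : InPast t k (fun ω => ∑ j ∈ Finset.range k, Φ (k + 1) j *ᵥ y j ω) :=
      InPast.sum (Finset.range k) (fun j ω => Φ (k + 1) j *ᵥ y j ω) fun j hj => by
        have := Finset.mem_range.1 hj
        exact ((hP j).2.1.mono (by omega)).mulVec _
    refine ⟨_, _, (((hr.mulVec C).mulVec (F (k + 1))).add
      (((hP k).1.mulVec C).mulVec (G (k + 1)))).add hS, hr, fun ω => ?_, fun ω => ?_⟩
    · rw [h.zs]
      simp only [tp, Nat.add_sub_cancel, mulVec_sub, add_mulVec, mulVec_mulVec]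
      abel
    · rw [hu, h.y, h.zs, if_pos (by omega)]
      simp only [tp, Nat.add_sub_cancel, mulVec_sub, mulVec_add, add_mulVec, mulVec_mulVec, h.y k,
        Matrix.mul_assoc]
      abel

variable {K1 : ℕ → Matrix ι τ ℝ} {Fs F1s : ℕ → Matrix κ τ ℝ} {L : ℕ → Matrix κ ι ℝ}

theorem opt_past (h : Dyn A B C K u y t z)
    (hu0 : ∀ ω, u 0 ω = Fs 0 *ᵥ y 0 ω)
    (hu : ∀ k ω, u (k + 1) ω =
      Fs (k + 1) *ᵥ (y (k + 1) ω - C *ᵥ (A *ᵥ z k ω + B *ᵥ u k ω + K1 k *ᵥ t k ω)) +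
      F1s (k + 1) *ᵥ t k ω +
      L (k + 1) *ᵥ ((A *ᵥ z k ω + B *ᵥ u k ω + K1 k *ᵥ t k ω) - (B * Fs k + K1 k) *ᵥ t k ω))
    (hs : ∀ k, InPast s k (z k) → InPast s (k + 1) (t k)) (k : ℕ) :
    InPast s k (z k) ∧ InPast s (k + 1) (t k) ∧ InPast s k (fun ω => u k ω - Fs k *ᵥ t k ω) := by
  induction k with
  | zero =>
    have hz : InPast s 0 (z 0) := InPast.zero.congr h.z0
    refine ⟨hz, hs 0 hz, InPast.zero.congr fun ω => ?_⟩
    rw [hu0, h.y, h.z0]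
    simp
  | succ k ih =>
    obtain ⟨i1, i2, i3⟩ := ih
    have hz : InPast s (k + 1) (z (k + 1)) := by
      refine ((((i1.mulVec A).add (i3.mulVec B)).mono (Nat.le_succ k)).add
        (i2.mulVec (B * Fs k + K k))).congr fun ω => ?_
      rw [h.zs]
      simp only [mulVec_sub, add_mulVec, mulVec_mulVec]
      abel
    refine ⟨hz, hs _ hz, ?_⟩
    refine (((hz.mulVec (Fs (k + 1) * C)).add
      (i2.mulVec (F1s (k + 1) - Fs (k + 1) * C * (B * Fs k + K1 k)))).add
      ((((i1.mulVec A).add (i3.mulVec B)).mulVec (L (k + 1) - Fs (k + 1) * C)).mono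
        (Nat.le_succ k))).congr fun ω => ?_
    rw [hu, h.y]
    simp only [mulVec_sub, mulVec_add, add_mulVec, sub_mulVec, mulVec_mulVec, Matrix.mul_assoc,
      Matrix.mul_add, Matrix.sub_mul, Matrix.add_mul]
    abel

theorem opt_rep (h : Dyn A B C K u y t z)
    (hu0 : ∀ ω, u 0 ω = Fs 0 *ᵥ y 0 ω)
    (hu : ∀ k ω, u (k + 1) ω =
      Fs (k + 1) *ᵥ (y (k + 1) ω - C *ᵥ (A *ᵥ z k ω + B *ᵥ u k ω + K1 k *ᵥ t k ω)) +
      F1s (k + 1) *ᵥ t k ω +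
      L (k + 1) *ᵥ ((A *ᵥ z k ω + B *ᵥ u k ω + K1 k *ᵥ t k ω) - (B * Fs k + K1 k) *ᵥ t k ω))
    (k : ℕ) :
    ∃ r, RepAt B C K Fs (fun k => F1s k - Fs k * C * K1 (k - 1)) u t z k
      (fun ω => L k *ᵥ r ω) r ∧
      ∀ j, k = j + 1 → ∀ ω, r ω =
        (A *ᵥ z j ω + B *ᵥ u j ω + K1 j *ᵥ t j ω) - (B * Fs j + K1 j) *ᵥ t j ω := by
  cases k with
  | zero =>
    refine ⟨fun _ => 0, ⟨InPast.zero.mulVec _, InPast.zero, fun ω => ?_, fun ω => ?_⟩, ?_⟩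
    · simp [h.z0, tp]
    · rw [hu0, h.y, h.z0]; simp [tp]
    · intro j hj; omega
  | succ k =>
    obtain ⟨i1, i2, i3⟩ := opt_past (s := t) h hu0 hu (fun k _ => InPast.single (Nat.lt_succ_self k)) k
    have hr : InPast t k (fun ω =>
        (A *ᵥ z k ω + B *ᵥ u k ω + K1 k *ᵥ t k ω) - (B * Fs k + K1 k) *ᵥ t k ω) := by
      refine ((i1.mulVec A).add (i3.mulVec B)).congr fun ω => ?_
      simp only [mulVec_sub, add_mulVec, mulVec_mulVec]
      abel
    refine ⟨_, ⟨hr.mulVec _, hr, fun ω => ?_, fun ω => ?_⟩, ?_⟩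
    · rw [h.zs]
      simp only [tp, Nat.add_sub_cancel, add_mulVec, mulVec_mulVec]
      abel
    · rw [hu, h.y, h.zs]
      simp only [tp, Nat.add_sub_cancel, mulVec_sub, mulVec_add, add_mulVec, sub_mulVec,
        mulVec_mulVec, Matrix.mul_assoc]
      abel
    · intro j hj ω
      obtain rfl : k = j := by omega
      rfl

theorem opt_closed (h : Dyn A B C K u y t z)
    (hu0 : ∀ ω, u 0 ω = Fs 0 *ᵥ y 0 ω)
    (hu : ∀ k ω, u (k + 1) ω =
      Fs (k + 1) *ᵥ (y (k + 1) ω - C *ᵥ (A *ᵥ z k ω + B *ᵥ u k ω + K1 k *ᵥ t k ω)) +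
      F1s (k + 1) *ᵥ t k ω +
      L (k + 1) *ᵥ ((A *ᵥ z k ω + B *ᵥ u k ω + K1 k *ᵥ t k ω) - (B * Fs k + K1 k) *ᵥ t k ω)) :
    ∃ Φ : ℕ → ℕ → Matrix κ τ ℝ, ∀ k, ∀ ω, u k ω = Fs k *ᵥ y k ω +
      (if 1 ≤ k then (F1s k - Fs k * C * (B * Fs (k - 1) + K1 (k - 1))) *ᵥ y (k - 1) ω else 0) +
      ∑ j ∈ Finset.range (k - 1), Φ k j *ᵥ y j ω := by
  have hP := opt_past (s := y) h hu0 hu (fun k hz => by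
    refine ((InPast.single (Nat.lt_succ_self k)).sub
      ((hz.mono (Nat.le_succ k)).mulVec C)).congr fun ω => ?_
    rw [h.y]; abel)
  have key : ∀ k, ∃ Φ : ℕ → Matrix κ τ ℝ, ∀ ω, u k ω = Fs k *ᵥ y k ω +
      (if 1 ≤ k then (F1s k - Fs k * C * (B * Fs (k - 1) + K1 (k - 1))) *ᵥ y (k - 1) ω else 0) +
      ∑ j ∈ Finset.range (k - 1), Φ j *ᵥ y j ω := by
    intro k
    cases k with
    | zero => exact ⟨0, fun ω => by rw [hu0]; simp⟩
    | succ k =>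
      obtain ⟨i1, i2, i3⟩ := hP k
      obtain ⟨c, hc⟩ := (((i1.mulVec A).add (i3.mulVec B)).mulVec
        (L (k + 1) - Fs (k + 1) * C)).sub
        ((i1.mulVec C).mulVec (F1s (k + 1) - Fs (k + 1) * C * (B * Fs k + K1 k)))
      refine ⟨c, fun ω => ?_⟩
      rw [Nat.add_sub_cancel, ← hc ω, if_pos (by omega), hu, h.y k]
      simp only [mulVec_sub, mulVec_add, add_mulVec, sub_mulVec,
        mulVec_mulVec, Matrix.mul_assoc, Matrix.mul_add, Matrix.sub_mul, Matrix.add_mul]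
      abel
  choose Φ hΦ using key
  exact ⟨Φ, hΦ⟩

end Rep

section Concrete

variable {nv qv pv : Fin 3 → ℕ} {Ω : Type}

theorem dyn_of_system (A : Matrix (idx nv) (idx nv) ℝ) (B : Matrix (idx nv) (idx qv) ℝ)
    (C : Matrix (idx pv) (idx nv) ℝ) (V : Matrix (idx pv) (idx pv) ℝ)
    (W P0 : Matrix (idx nv) (idx nv) ℝ) (x0 : Ω → idx nv → ℝ)
    (w : ℕ → Ω → idx nv → ℝ) (v : ℕ → Ω → idx pv → ℝ)
    (x : ℕ → Ω → idx nv → ℝ) (u : ℕ → Ω → idx qv → ℝ) (y : ℕ → Ω → idx pv → ℝ)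
    (h0 : ∀ ω, x 0 ω = x0 ω)
    (hx : ∀ k, ∀ ω, x (k + 1) ω = A *ᵥ x k ω + B *ᵥ u k ω + w k ω)
    (hy : ∀ k, ∀ ω, y k ω = C *ᵥ x k ω + v k ω) :
    (∀ k ω, x k ω = xpred A B C V W P0 u y k ω + err A C V W P0 x0 w v k ω) ∧
    (∀ k, innov A B C V W P0 u y k = yt A C V W P0 x0 w v k) ∧
    Dyn A B C (fun k => Kgain A C V (Pmat A C V W P0 k)) u y (yt A C V W P0 x0 w v)
      (xpred A B C V W P0 u y) := by
  have hi : ∀ k, (∀ ω, x k ω = xpred A B C V W P0 u y k ω + err A C V W P0 x0 w v k ω) →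
      innov A B C V W P0 u y k = yt A C V W P0 x0 w v k := by
    intro k hk
    ext1 ω
    simp only [innov, yt, hy, hk, mulVec_add]
    abel
  have h1 : ∀ k ω, x k ω = xpred A B C V W P0 u y k ω + err A C V W P0 x0 w v k ω := by
    intro k
    induction k with
    | zero => intro ω; simp [xpred, err, h0]
    | succ k ih =>
      intro ω
      have h2 := congrFun (hi k ih) ω
      simp only [innov, yt] at h2
      simp only [hx, xpred, err, h2, ih]
      simp only [mulVec_add]
      abel
  refine ⟨h1, fun k => hi k (h1 k), fun ω => rfl, fun k ω => ?_, fun k ω => ?_⟩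
  · rw [← hi k (h1 k)]; rfl
  · rw [← hi k (h1 k)]; simp [innov]

end Concrete

end TP

namespace TP

set_option linter.unusedSectionVars false

section Riccati

variable {ι κ : Type} [Fintype ι] [Fintype κ] [DecidableEq ι] [DecidableEq κ]

theorem mulVec_dot {τ : Type} [Fintype τ] (M : Matrix κ τ ℝ) (x : τ → ℝ) (y : κ → ℝ) :
    (M *ᵥ x) ⬝ᵥ y = x ⬝ᵥ (Mᵀ *ᵥ y) := by
  rw [dotProduct_comm, dotProduct_mulVec, dotProduct_comm, mulVec_transpose]

theorem herm_T {S : Matrix ι ι ℝ} (h : S.PosSemidef) : Sᵀ = S := by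
  have := h.isHermitian
  rwa [IsHermitian, conjTranspose_eq_transpose_of_trivial] at this

theorem H_posDef {S' : Matrix ι ι ℝ} (hS : S'.PosSemidef) (B : Matrix ι κ ℝ)
    {Quu : Matrix κ κ ℝ} (hQuu : Quu.PosDef) : (Quu + Bᵀ * S' * B).PosDef := by
  have h1 : (Bᵀ * S' * B).PosSemidef := by
    have := hS.conjTranspose_mul_mul_same B
    simpa using this
  exact hQuu.add_posSemidef h1

theorem riccati_id {S' : Matrix ι ι ℝ} (hS : S'.PosSemidef) (A : Matrix ι ι ℝ) (B : Matrix ι κ ℝ)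
    (Qxx : Matrix ι ι ℝ) (Qxu : Matrix ι κ ℝ) {Quu : Matrix κ κ ℝ} (hQuu : Quu.PosDef)
    {H : Matrix κ κ ℝ} (hH : H = Quu + Bᵀ * S' * B) {L : Matrix κ ι ℝ}
    (hL : L = -(H⁻¹ * (Bᵀ * S' * A + Qxuᵀ))) (x : ι → ℝ) (u : κ → ℝ) :
    (Sum.elim x u) ⬝ᵥ (Matrix.fromBlocks Qxx Qxu Qxuᵀ Quu) *ᵥ (Sum.elim x u) +
      (A *ᵥ x + B *ᵥ u) ⬝ᵥ S' *ᵥ (A *ᵥ x + B *ᵥ u) =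
    x ⬝ᵥ (Aᵀ * S' * A + Qxx - (Aᵀ * S' * B + Qxu) * H⁻¹ * (Bᵀ * S' * A + Qxuᵀ)) *ᵥ x +
      (u - L *ᵥ x) ⬝ᵥ H *ᵥ (u - L *ᵥ x) := by
  have hHp : H.PosDef := hH ▸ H_posDef hS B hQuu
  have hdet : IsUnit H.det := (Matrix.isUnit_iff_isUnit_det _).1 hHp.isUnit
  have hHT : Hᵀ = H := herm_T hHp.posSemidef
  have hST := herm_T hS
  have h1 : H * L = -(Bᵀ * S' * A + Qxuᵀ) := by
    rw [hL, Matrix.mul_neg, ← Matrix.mul_assoc, Matrix.mul_nonsing_inv _ hdet, Matrix.one_mul]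
  have h2 : Lᵀ * H = -(Aᵀ * S' * B + Qxu) := by
    have := congrArg Matrix.transpose h1
    simpa [transpose_mul, hHT, hST, Matrix.mul_assoc] using this
  have h3 : Lᵀ * H * L = (Aᵀ * S' * B + Qxu) * H⁻¹ * (Bᵀ * S' * A + Qxuᵀ) := by
    rw [h2, hL, Matrix.neg_mul, Matrix.mul_neg, neg_neg]; simp only [Matrix.mul_assoc]
  rw [← h3, fromBlocks_mulVec, sumElim_dotProduct_sumElim]
  have e1 : (u - L *ᵥ x) ⬝ᵥ H *ᵥ (u - L *ᵥ x) =
      u ⬝ᵥ H *ᵥ u - u ⬝ᵥ (H * L) *ᵥ x - x ⬝ᵥ (Lᵀ * H) *ᵥ u + x ⬝ᵥ (Lᵀ * H * L) *ᵥ x := by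
    simp only [mulVec_sub, sub_dotProduct, dotProduct_sub, mulVec_dot, mulVec_mulVec,
      Matrix.mul_assoc]
    ring
  rw [e1, h1, h2, hH]
  simp only [Sum.elim_comp_inl, Sum.elim_comp_inr, mulVec_add, add_mulVec, sub_mulVec, neg_mulVec,
    add_dotProduct, dotProduct_add, dotProduct_sub, dotProduct_neg, mulVec_dot, mulVec_mulVec,
    Matrix.mul_assoc]
  ring

theorem riccati_psd {S' : Matrix ι ι ℝ} (hS : S'.PosSemidef) (A : Matrix ι ι ℝ) (B : Matrix ι κ ℝ)
    {Qxx : Matrix ι ι ℝ} {Qxu : Matrix ι κ ℝ} {Quu : Matrix κ κ ℝ}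
    (hQ : (Matrix.fromBlocks Qxx Qxu Qxuᵀ Quu).PosSemidef) (hQuu : Quu.PosDef) :
    (Aᵀ * S' * A + Qxx - (Aᵀ * S' * B + Qxu) * (Quu + Bᵀ * S' * B)⁻¹ *
      (Bᵀ * S' * A + Qxuᵀ)).PosSemidef := by
  have hST := herm_T hS
  have hHT := herm_T (H_posDef hS B hQuu).posSemidef
  have hQT := herm_T hQ
  rw [fromBlocks_transpose] at hQT
  have hQxx : Qxxᵀ = Qxx := by
    have := congrArg Matrix.toBlocks₁₁ hQT
    simpa using this
  refine Matrix.PosSemidef.of_dotProduct_mulVec_nonneg ?_ fun x => ?_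
  · rw [IsHermitian, conjTranspose_eq_transpose_of_trivial]
    simp only [transpose_sub, transpose_add, transpose_mul, transpose_transpose, hST, hQxx,
      transpose_nonsing_inv, Matrix.mul_assoc]
    congr 3
    rw [show Quuᵀ = Quu from herm_T hQuu.posSemidef]
  · have h := riccati_id hS A B Qxx Qxu hQuu rfl rfl x
      (-((Quu + Bᵀ * S' * B)⁻¹ * (Bᵀ * S' * A + Qxuᵀ)) *ᵥ x)
    rw [sub_self, zero_dotProduct, add_zero] at h
    rw [star_trivial, ← h]
    refine add_nonneg ?_ ?_
    · simpa using hQ.dotProduct_mulVec_nonneg (Sum.elim x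
        (-((Quu + Bᵀ * S' * B)⁻¹ * (Bᵀ * S' * A + Qxuᵀ)) *ᵥ x))
    · simpa using hS.dotProduct_mulVec_nonneg (A *ᵥ x + B *ᵥ
        (-((Quu + Bᵀ * S' * B)⁻¹ * (Bᵀ * S' * A + Qxuᵀ)) *ᵥ x))

theorem S_psd {N : ℕ} {A : Matrix ι ι ℝ} {B : Matrix ι κ ℝ}
    {Qxx : Matrix ι ι ℝ} {Qxu : Matrix ι κ ℝ} {Quu : Matrix κ κ ℝ} {Q0 : Matrix ι ι ℝ}
    (hQ : (Matrix.fromBlocks Qxx Qxu Qxuᵀ Quu).PosSemidef) (hQuu : Quu.PosDef)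
    (hQ0 : Q0.PosSemidef) {S : ℕ → Matrix ι ι ℝ} (hSN : S N = Q0)
    (hSrec : ∀ k < N, S k = Aᵀ * S (k + 1) * A + Qxx -
      (Aᵀ * S (k + 1) * B + Qxu) * (Quu + Bᵀ * S (k + 1) * B)⁻¹ *
        (Bᵀ * S (k + 1) * A + Qxuᵀ)) : ∀ k ≤ N, (S k).PosSemidef := by
  intro k hk
  induction hk using Nat.decreasingInduction with
  | self => rwa [hSN]
  | of_succ k hk ih =>
    rw [hSrec k hk]
    exact riccati_psd ih A B hQ hQuu

end Riccati

section Cost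

variable {nv qv : Fin 3 → ℕ} {Ω : Type} [MeasurableSpace Ω] {Ξ : Type} [Fintype Ξ]
  {μ : Measure Ω} {ξ : Ω → Ξ → ℝ}

theorem cost_eq {N : ℕ} {A : Matrix (idx nv) (idx nv) ℝ} {B : Matrix (idx nv) (idx qv) ℝ}
    {Qxx : Matrix (idx nv) (idx nv) ℝ} {Qxu : Matrix (idx nv) (idx qv) ℝ}
    {Quu : Matrix (idx qv) (idx qv) ℝ} {Q0 : Matrix (idx nv) (idx nv) ℝ}
    (hQ : (Matrix.fromBlocks Qxx Qxu Qxuᵀ Quu).PosSemidef) (hQuu : Quu.PosDef)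
    (hQ0 : Q0.PosSemidef) {S : ℕ → Matrix (idx nv) (idx nv) ℝ} (hSN : S N = Q0)
    (hSrec : ∀ k < N, S k = Aᵀ * S (k + 1) * A + Qxx -
      (Aᵀ * S (k + 1) * B + Qxu) * (Quu + Bᵀ * S (k + 1) * B)⁻¹ *
        (Bᵀ * S (k + 1) * A + Qxuᵀ))
    (hξ : HasGaussianLaw ξ μ)
    {H : ℕ → Matrix (idx qv) (idx qv) ℝ} {L : ℕ → Matrix (idx qv) (idx nv) ℝ}
    (hH : ∀ k, H k = Quu + Bᵀ * S (k + 1) * B)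
    (hL : ∀ k, L k = -((H k)⁻¹ * (Bᵀ * S (k + 1) * A + Qxuᵀ)))
    {x : ℕ → Ω → idx nv → ℝ} {u : ℕ → Ω → idx qv → ℝ} {w : ℕ → Ω → idx nv → ℝ}
    (hx : ∀ k, ∀ ω, x (k + 1) ω = A *ᵥ x k ω + B *ᵥ u k ω + w k ω)
    (lx : ∀ k ≤ N, Lin ξ (x k)) (lu : ∀ k < N, Lin ξ (u k)) (lw : ∀ k < N, Lin ξ (w k))
    (hcv : ∀ k < N, cv μ (fun ω => A *ᵥ x k ω + B *ᵥ u k ω) (w k) = 0) :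
    cost μ Qxx Qxu Quu Q0 N x u = ∫ ω, x 0 ω ⬝ᵥ S 0 *ᵥ x 0 ω ∂μ +
      ∑ k ∈ Finset.range N,
        (∫ ω, (u k ω - L k *ᵥ x k ω) ⬝ᵥ H k *ᵥ (u k ω - L k *ᵥ x k ω) ∂μ +
          ∫ ω, w k ω ⬝ᵥ S (k + 1) *ᵥ w k ω ∂μ) := by
  have hS := S_psd hQ hQuu hQ0 hSN hSrec
  -- the stage cost
  have lxu : ∀ k < N, Lin ξ (fun ω => Sum.elim (x k ω) (u k ω)) := by
    intro k hk
    obtain ⟨M, hM⟩ := lx k hk.le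
    obtain ⟨M', hM'⟩ := lu k hk
    refine ⟨Matrix.fromRows M M', fun ω => ?_⟩
    simp only [hM, hM', fromRows_mulVec]
  have istage : ∀ k < N, Integrable (fun ω => (Sum.elim (x k ω) (u k ω)) ⬝ᵥ
        (Matrix.fromBlocks Qxx Qxu Qxuᵀ Quu) *ᵥ (Sum.elim (x k ω) (u k ω))) μ :=
    fun k hk => int_quad hξ (lxu k hk) (lxu k hk) _
  have step : ∀ k < N, ∫ ω, (Sum.elim (x k ω) (u k ω)) ⬝ᵥ
        (Matrix.fromBlocks Qxx Qxu Qxuᵀ Quu) *ᵥ (Sum.elim (x k ω) (u k ω)) ∂μ +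
        ∫ ω, x (k + 1) ω ⬝ᵥ S (k + 1) *ᵥ x (k + 1) ω ∂μ =
      ∫ ω, x k ω ⬝ᵥ S k *ᵥ x k ω ∂μ +
        (∫ ω, (u k ω - L k *ᵥ x k ω) ⬝ᵥ H k *ᵥ (u k ω - L k *ᵥ x k ω) ∂μ +
          ∫ ω, w k ω ⬝ᵥ S (k + 1) *ᵥ w k ω ∂μ) := by
    intro k hk
    have l1 := ((lx k hk.le).mulVec A).add ((lu k hk).mulVec B)
    have l2 := (lu k hk).sub ((lx k hk.le).mulVec (L k))
    have q := quad_add hξ l1 (lw k hk) (hcv k hk) (S (k + 1))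
    simp only [hx]
    rw [q, ← add_assoc, ← integral_add (istage k hk) (int_quad hξ l1 l1 _), ← add_assoc,
      ← integral_add (int_quad hξ (lx k hk.le) (lx k hk.le) _) (int_quad hξ l2 l2 _)]
    congr 2
    ext ω
    rw [hSrec k hk, ← hH]
    exact riccati_id (hS (k + 1) hk) A B Qxx Qxu hQuu (hH k) (hL k) (x k ω) (u k ω)
  have tel : ∀ n ≤ N, ∑ k ∈ Finset.range n, ∫ ω, (Sum.elim (x k ω) (u k ω)) ⬝ᵥ
        (Matrix.fromBlocks Qxx Qxu Qxuᵀ Quu) *ᵥ (Sum.elim (x k ω) (u k ω)) ∂μ +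
        ∫ ω, x n ω ⬝ᵥ S n *ᵥ x n ω ∂μ = ∫ ω, x 0 ω ⬝ᵥ S 0 *ᵥ x 0 ω ∂μ +
      ∑ k ∈ Finset.range n,
        (∫ ω, (u k ω - L k *ᵥ x k ω) ⬝ᵥ H k *ᵥ (u k ω - L k *ᵥ x k ω) ∂μ +
          ∫ ω, w k ω ⬝ᵥ S (k + 1) *ᵥ w k ω ∂μ) := by
    intro n
    induction n with
    | zero => intro _; simp
    | succ n ih =>
      intro hn
      have := ih (by omega)
      have := step n (by omega)
      rw [Finset.sum_range_succ, Finset.sum_range_succ]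
      linarith
  rw [← tel N le_rfl, cost, integral_add, integral_finsetSum, hSN]
  · exact fun k hk => istage k (Finset.mem_range.1 hk)
  · exact integrable_finsetSum _ fun k hk => istage k (Finset.mem_range.1 hk)
  · exact int_quad hξ (lx N le_rfl) (lx N le_rfl) _

end Cost

end TP

namespace TP

set_option linter.unusedSectionVars false

section LeastSquares

variable {E : Type} [AddCommGroup E] [Module ℝ E]

/-- Least squares problems on a subspace have a minimiser. -/
theorem exists_lsq {ι : Type} [Fintype ι] (T : E →ₗ[ℝ] (ι → ℝ)) (b : ι → ℝ)
    (s : Submodule ℝ E) :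
    ∃ θ ∈ s, ∀ θ' ∈ s, ∑ i, (T θ i + b i) ^ 2 ≤ ∑ i, (T θ' i + b i) ^ 2 := by
  let T' : E →ₗ[ℝ] EuclideanSpace ℝ ι := (WithLp.linearEquiv 2 ℝ (ι → ℝ)).symm.toLinearMap ∘ₗ T
  let U : Submodule ℝ (EuclideanSpace ℝ ι) := s.map T'
  let c : EuclideanSpace ℝ ι := WithLp.toLp 2 (-b)
  have hnorm : ∀ θ, ∑ i, (T θ i + b i) ^ 2 = ‖c - T' θ‖ ^ 2 := by
    intro θ
    rw [EuclideanSpace.norm_sq_eq]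
    refine Finset.sum_congr rfl fun i _ => ?_
    simp only [Real.norm_eq_abs, sq_abs]
    have : (c - T' θ) i = -b i - T θ i := rfl
    rw [this]; ring
  obtain ⟨v, hv, hmin⟩ := Submodule.exists_norm_eq_iInf_of_complete_subspace U
    (completeSpace_coe_iff_isComplete.mp (FiniteDimensional.complete ℝ U)) c
  obtain ⟨θ, hθ, rfl⟩ := hv
  refine ⟨θ, hθ, fun θ' hθ' => ?_⟩
  rw [hnorm, hnorm]
  refine pow_le_pow_left₀ (norm_nonneg _) ?_ 2
  rw [hmin]
  exact ciInf_le ⟨0, by rintro _ ⟨w, rfl⟩; exact norm_nonneg _⟩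
    (⟨T' θ', Submodule.mem_map_of_mem hθ'⟩ : (U : Set (EuclideanSpace ℝ ι)))

open scoped MatrixOrder Matrix.Norms.L2Operator in
theorem psd_factor {ι : Type} [Fintype ι] [DecidableEq ι] {H : Matrix ι ι ℝ}
    (hH : H.PosSemidef) : ∃ R : Matrix ι ι ℝ, H = Rᵀ * R := by
  obtain ⟨R, hR⟩ := CStarAlgebra.nonneg_iff_eq_star_mul_self.mp hH.nonneg
  refine ⟨R, ?_⟩
  rw [hR, star_eq_conjTranspose, conjTranspose_eq_transpose_of_trivial]

/-- `J` is a finite sum of squares of affine functions. -/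
def IsSOS (J : E → ℝ) : Prop :=
  ∃ (ι : Type) (_ : Fintype ι) (T : E →ₗ[ℝ] (ι → ℝ)) (b : ι → ℝ),
    ∀ θ, J θ = ∑ i, (T θ i + b i) ^ 2

theorem IsSOS.exists_min {J : E → ℝ} (h : IsSOS J) (s : Submodule ℝ E) :
    ∃ θ ∈ s, ∀ θ' ∈ s, J θ ≤ J θ' := by
  obtain ⟨ι, _, T, b, hJ⟩ := h
  simp only [hJ]
  exact exists_lsq T b s

theorem IsSOS.zero : IsSOS (fun _ : E => 0) :=
  ⟨Empty, inferInstance, 0, 0, fun θ => by simp⟩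

theorem IsSOS.add {J J' : E → ℝ} (h : IsSOS J) (h' : IsSOS J') : IsSOS (fun θ => J θ + J' θ) := by
  obtain ⟨ι, _, T, b, hJ⟩ := h
  obtain ⟨ι', _, T', b', hJ'⟩ := h'
  refine ⟨ι ⊕ ι', inferInstance,
    { toFun := fun θ => Sum.elim (T θ) (T' θ)
      map_add' := fun x y => by ext (i | i) <;> simp
      map_smul' := fun x y => by ext (i | i) <;> simp }, Sum.elim b b', fun θ => ?_⟩
  simp [hJ, hJ']

theorem IsSOS.sum (s : Finset ℕ) (J : ℕ → E → ℝ) (h : ∀ k ∈ s, IsSOS (J k)) :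
    IsSOS (fun θ => ∑ k ∈ s, J k θ) := by
  classical
  induction s using Finset.induction_on with
  | empty => simpa using IsSOS.zero
  | insert a s ha ih =>
    have := (h a (by simp)).add (ih fun j hj => h j (by simp [hj]))
    simpa [Finset.sum_insert ha] using this

variable {Ω : Type} [MeasurableSpace Ω] {Ξ ι : Type} [Fintype Ξ] [Fintype ι]
  {μ : Measure Ω} {ξ : Ω → Ξ → ℝ}

theorem isSOS_quad (hξ : HasGaussianLaw ξ μ) {H : Matrix ι ι ℝ} (hH : H.PosSemidef)
    (T : E →ₗ[ℝ] Matrix ι Ξ ℝ) (M0 : Matrix ι Ξ ℝ) :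
    IsSOS (fun θ => ∫ ω, ((T θ + M0) *ᵥ ξ ω) ⬝ᵥ H *ᵥ ((T θ + M0) *ᵥ ξ ω) ∂μ) := by
  classical
  have lξ : Lin ξ ξ := ⟨1, fun ω => by simp⟩
  obtain ⟨R, hR⟩ := psd_factor hH
  obtain ⟨D, hD⟩ := psd_factor (cv_posSemidef hξ lξ)
  refine ⟨ι × Ξ, inferInstance,
    { toFun := fun θ ij => (R * T θ * Dᵀ) ij.1 ij.2
      map_add' := fun x y => by ext ij; simp [Matrix.mul_add, Matrix.add_mul]
      map_smul' := fun x y => by ext ij; simp }, fun ij => (R * M0 * Dᵀ) ij.1 ij.2, fun θ => ?_⟩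
  beta_reduce
  rw [quad_eq hξ (lξ.mulVec _) (lξ.mulVec _), cv_mulVec_left hξ lξ (lξ.mulVec _),
    cv_mulVec_right hξ lξ lξ, hD, hR]
  have e : (Rᵀ * R * ((T θ + M0) * (Dᵀ * D * (T θ + M0)ᵀ))).trace =
      ((R * (T θ + M0) * Dᵀ) * (R * (T θ + M0) * Dᵀ)ᵀ).trace := by
    rw [Matrix.mul_assoc Rᵀ, Matrix.trace_mul_comm Rᵀ]
    simp only [transpose_mul, transpose_transpose, Matrix.mul_assoc]
  rw [e, Fintype.sum_prod_type]
  simp only [trace, Matrix.diag, Matrix.mul_apply (M := R * (T θ + M0) * Dᵀ), transpose_apply]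
  refine Finset.sum_congr rfl fun i _ => Finset.sum_congr rfl fun j _ => ?_
  simp only [LinearMap.coe_mk, AddHom.coe_mk, Matrix.mul_add, Matrix.add_mul, Matrix.add_apply]
  ring

end LeastSquares

end TP

namespace TP

set_option linter.unusedSectionVars false

section LawCost

variable {nv qv pv : Fin 3 → ℕ} {Ω : Type} [MeasurableSpace Ω] {Ξ ι κ : Type} [Fintype Ξ]
  [Fintype ι] [Fintype κ]
variable {μ : Measure Ω} {N : ℕ}
    {A : Matrix (idx nv) (idx nv) ℝ} {C : Matrix (idx pv) (idx nv) ℝ}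
    {P0 W : Matrix (idx nv) (idx nv) ℝ}
    {V : Matrix (idx pv) (idx pv) ℝ} {x0 : Ω → idx nv → ℝ}
    {w : ℕ → Ω → idx nv → ℝ} {v : ℕ → Ω → idx pv → ℝ} {ξ : Ω → Ξ → ℝ}

theorem lin_past (h : NoiseLin μ N P0 W V x0 w v ξ) {m : ℕ} (hm : m ≤ N) {X : Ω → ι → ℝ}
    (hX : InPast (yt A C V W P0 x0 w v) m X) : Lin ξ X := by
  obtain ⟨c, hc⟩ := hX
  have : X = fun ω => ∑ j ∈ Finset.range m, c j *ᵥ yt A C V W P0 x0 w v j ω := funext hc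
  rw [this]
  refine Lin.sum (Finset.range m) (fun j ω => c j *ᵥ yt A C V W P0 x0 w v j ω) fun j hj => ?_
  exact (lin_yt h (by have := Finset.mem_range.1 hj; omega)).mulVec _

theorem cv_past (h : NoiseLin μ N P0 W V x0 w v ξ) {m : ℕ} (hm : m ≤ N) {X : Ω → ι → ℝ}
    (hX : InPast (yt A C V W P0 x0 w v) m X) {Y : Ω → κ → ℝ} (hY : Lin ξ Y)
    (h0 : ∀ j < m, cv μ (yt A C V W P0 x0 w v j) Y = 0) : cv μ X Y = 0 := by
  obtain ⟨c, hc⟩ := hX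
  have : X = fun ω => ∑ j ∈ Finset.range m, c j *ᵥ yt A C V W P0 x0 w v j ω := funext hc
  have hl : ∀ j ∈ Finset.range m, Lin ξ (yt A C V W P0 x0 w v j) := fun j hj =>
    lin_yt h (by have := Finset.mem_range.1 hj; omega)
  rw [this]
  refine cv_sum_left_zero h.gauss (Finset.range m)
    (fun j ω => c j *ᵥ yt A C V W P0 x0 w v j ω) hY (fun j hj => (hl j hj).mulVec _) fun j hj => ?_
  rw [cv_mulVec_left h.gauss (hl j hj) hY, h0 j (Finset.mem_range.1 hj), Matrix.mul_zero]

theorem tp_past (t : ℕ → Ω → ι → ℝ) (k : ℕ) : InPast t k (tp t k) := by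
  cases k with
  | zero => exact InPast.zero
  | succ k => exact InPast.single (Nat.lt_succ_self k)

theorem cv_past_tp (h : NoiseLin μ N P0 W V x0 w v ξ) (hV : V.PosDef) {k : ℕ} (hk : k ≤ N)
    {X : Ω → ι → ℝ} (hX : InPast (yt A C V W P0 x0 w v) (k - 1) X) :
    cv μ X (tp (yt A C V W P0 x0 w v) k) = 0 := by
  refine cv_past h (by omega) hX (lin_past h hk (tp_past _ k)) fun j hj => ?_
  cases k with
  | zero => omega
  | succ k => exact cv_zero_comm (cv_yt_yt h hV (by omega) (by simpa using hj))

/-- The part of the stage cost that depends on the gains only. -/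
def Jk (μ : Measure Ω) (B : Matrix (idx nv) (idx qv) ℝ) (C : Matrix (idx pv) (idx nv) ℝ)
    (K : ℕ → Matrix (idx nv) (idx pv) ℝ) (H : ℕ → Matrix (idx qv) (idx qv) ℝ)
    (L : ℕ → Matrix (idx qv) (idx nv) ℝ) (t : ℕ → Ω → idx pv → ℝ) (e : ℕ → Ω → idx nv → ℝ)
    (k : ℕ) (F G : ℕ → Matrix (idx qv) (idx pv) ℝ) : ℝ :=
  ∫ ω, (F k *ᵥ t k ω - L k *ᵥ e k ω) ⬝ᵥ H k *ᵥ (F k *ᵥ t k ω - L k *ᵥ e k ω) ∂μ +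
  ∫ ω, ((F k * C * K (k - 1) + G k - L k * (B * F (k - 1) + K (k - 1))) *ᵥ tp t k ω) ⬝ᵥ
    H k *ᵥ ((F k * C * K (k - 1) + G k - L k * (B * F (k - 1) + K (k - 1))) *ᵥ tp t k ω) ∂μ

theorem stage_split (h : NoiseLin μ N P0 W V x0 w v ξ) (hV : V.PosDef)
    {B : Matrix (idx nv) (idx qv) ℝ} {K : ℕ → Matrix (idx nv) (idx pv) ℝ}
    {F G : ℕ → Matrix (idx qv) (idx pv) ℝ} {u : ℕ → Ω → idx qv → ℝ}
    {z : ℕ → Ω → idx nv → ℝ} {p : Ω → idx qv → ℝ} {r : Ω → idx nv → ℝ} {k : ℕ} (hk : k < N)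
    (hrep : RepAt B C K F G u (yt A C V W P0 x0 w v) z k p r)
    {x : ℕ → Ω → idx nv → ℝ} (hx : ∀ ω, x k ω = z k ω + err A C V W P0 x0 w v k ω)
    (H : ℕ → Matrix (idx qv) (idx qv) ℝ) (L : ℕ → Matrix (idx qv) (idx nv) ℝ) :
    ∫ ω, (u k ω - L k *ᵥ x k ω) ⬝ᵥ H k *ᵥ (u k ω - L k *ᵥ x k ω) ∂μ =
      Jk μ B C K H L (yt A C V W P0 x0 w v) (err A C V W P0 x0 w v) k F G +
      ∫ ω, (p ω - L k *ᵥ r ω) ⬝ᵥ H k *ᵥ (p ω - L k *ᵥ r ω) ∂μ := by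
  obtain ⟨hp, hr, hz, hu⟩ := hrep
  have hg := h.gauss
  have lt := lin_yt (A := A) (C := C) h hk
  have le := lin_err (A := A) (C := C) h hk.le
  have l1 := (lt.mulVec (F k)).sub (le.mulVec (L k))
  have i2 := (tp_past (yt A C V W P0 x0 w v) k).mulVec
    (F k * C * K (k - 1) + G k - L k * (B * F (k - 1) + K (k - 1)))
  have i3 := hp.sub (hr.mulVec (L k))
  have l2 := lin_past h hk.le i2
  have l3 := lin_past h (by omega) i3
  have i23 := i2.add (i3.mono (by omega))
  have l23 := lin_past h hk.le i23
  have c1 := cv_zero_comm (cv_past h hk.le i23 l1 fun j hj => by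
    rw [cv_sub_right hg (lt.mulVec (F k)) (le.mulVec (L k)) (lin_yt h (by omega)),
      cv_mulVec_right hg lt (lin_yt h (by omega)), cv_mulVec_right hg le (lin_yt h (by omega)),
      cv_zero_comm (cv_yt_yt h hV hk hj), cv_zero_comm (cv_err_yt h hV k hk.le j hj)]
    simp)
  have c2 := cv_zero_comm (cv_past_tp h hV hk.le i3)
  have c2' := cv_mulVec_left hg (lin_past h hk.le (tp_past (yt A C V W P0 x0 w v) k)) l3
    (F k * C * K (k - 1) + G k - L k * (B * F (k - 1) + K (k - 1)))
  rw [c2, Matrix.mul_zero] at c2'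
  have q1 := quad_add hg l1 l23 c1 (H k)
  have q2 := quad_add hg l2 l3 c2' (H k)
  rw [q2, ← add_assoc] at q1
  rw [Jk, ← q1]
  congr 1
  ext ω
  have e : u k ω - L k *ᵥ x k ω = (F k *ᵥ yt A C V W P0 x0 w v k ω -
      L k *ᵥ err A C V W P0 x0 w v k ω) +
      ((F k * C * K (k - 1) + G k - L k * (B * F (k - 1) + K (k - 1))) *ᵥ
        tp (yt A C V W P0 x0 w v) k ω + (p ω - L k *ᵥ r ω)) := by
    rw [hx, hz, hu]
    simp only [mulVec_add, add_mulVec, sub_mulVec, mulVec_mulVec, Matrix.mul_add]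
    abel
  rw [e]

theorem law_cost (h : NoiseLin μ N P0 W V x0 w v ξ) (hV : V.PosDef)
    {B : Matrix (idx nv) (idx qv) ℝ}
    {Qxx : Matrix (idx nv) (idx nv) ℝ} {Qxu : Matrix (idx nv) (idx qv) ℝ}
    {Quu : Matrix (idx qv) (idx qv) ℝ} {Q0 : Matrix (idx nv) (idx nv) ℝ}
    (hQ : (Matrix.fromBlocks Qxx Qxu Qxuᵀ Quu).PosSemidef) (hQuu : Quu.PosDef)
    (hQ0 : Q0.PosSemidef) {S : ℕ → Matrix (idx nv) (idx nv) ℝ} (hSN : S N = Q0)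
    (hSrec : ∀ k < N, S k = Aᵀ * S (k + 1) * A + Qxx -
      (Aᵀ * S (k + 1) * B + Qxu) * (Quu + Bᵀ * S (k + 1) * B)⁻¹ *
        (Bᵀ * S (k + 1) * A + Qxuᵀ))
    {H : ℕ → Matrix (idx qv) (idx qv) ℝ} {L : ℕ → Matrix (idx qv) (idx nv) ℝ}
    (hH : ∀ k, H k = Quu + Bᵀ * S (k + 1) * B)
    (hL : ∀ k, L k = -((H k)⁻¹ * (Bᵀ * S (k + 1) * A + Qxuᵀ)))
    {K : ℕ → Matrix (idx nv) (idx pv) ℝ}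
    {F G : ℕ → Matrix (idx qv) (idx pv) ℝ} {u : ℕ → Ω → idx qv → ℝ}
    {z x : ℕ → Ω → idx nv → ℝ} {p : ℕ → Ω → idx qv → ℝ} {r : ℕ → Ω → idx nv → ℝ}
    (hrep : ∀ k, RepAt B C K F G u (yt A C V W P0 x0 w v) z k (p k) (r k))
    (hx0 : ∀ ω, x 0 ω = x0 ω)
    (hx : ∀ k, ∀ ω, x (k + 1) ω = A *ᵥ x k ω + B *ᵥ u k ω + w k ω)
    (hxz : ∀ k ω, x k ω = z k ω + err A C V W P0 x0 w v k ω) :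
    cost μ Qxx Qxu Quu Q0 N x u = (∫ ω, x0 ω ⬝ᵥ S 0 *ᵥ x0 ω ∂μ +
      ∑ k ∈ Finset.range N, ∫ ω, w k ω ⬝ᵥ S (k + 1) *ᵥ w k ω ∂μ) +
      ∑ k ∈ Finset.range N,
        Jk μ B C K H L (yt A C V W P0 x0 w v) (err A C V W P0 x0 w v) k F G +
      ∑ k ∈ Finset.range N,
        ∫ ω, (p k ω - L k *ᵥ r k ω) ⬝ᵥ H k *ᵥ (p k ω - L k *ᵥ r k ω) ∂μ := by
  have hg := h.gauss
  have iz : ∀ k, InPast (yt A C V W P0 x0 w v) k (z k) := fun k =>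
    (((tp_past _ k).mulVec _).add ((hrep k).2.1.mono (by omega))).congr (hrep k).2.2.1
  have iu : ∀ k, InPast (yt A C V W P0 x0 w v) (k + 1) (u k) := fun k =>
    ((((InPast.single (Nat.lt_succ_self k)).mulVec _).add
      (((tp_past _ k).mono (Nat.le_succ k)).mulVec _)).add ((hrep k).1.mono (by omega))).congr
      (hrep k).2.2.2
  have ex : ∀ k, x k = fun ω => z k ω + err A C V W P0 x0 w v k ω := fun k => funext (hxz k)
  have lx : ∀ k ≤ N, Lin ξ (x k) := fun k hk => by
    rw [ex]; exact (lin_past h hk (iz k)).add (lin_err h hk)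
  have lu : ∀ k < N, Lin ξ (u k) := fun k hk => lin_past h hk (iu k)
  have hcv : ∀ k < N, cv μ (fun ω => A *ᵥ x k ω + B *ᵥ u k ω) (w k) = 0 := by
    intro k hk
    have lw := h.linw k hk
    have lz := lin_past h hk.le (iz k)
    have le := lin_err (A := A) (C := C) h hk.le
    have hcz : cv μ (z k) (w k) = 0 := cv_past h hk.le (iz k) lw fun j hj => cv_yt_w h hk hj.le
    have hcu : cv μ (u k) (w k) = 0 := cv_past h hk (iu k) lw fun j hj =>
      cv_yt_w h hk (by omega)
    have hcx : cv μ (x k) (w k) = 0 := by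
      rw [ex, cv_add_left hg lz le lw, hcz, (cv_err_w_v h k k hk le_rfl).1, add_zero]
    rw [cv_add_left hg ((lx k hk.le).mulVec A) ((lu k hk).mulVec B) lw,
      cv_mulVec_left hg (lx k hk.le) lw, cv_mulVec_left hg (lu k hk) lw, hcx, hcu]
    simp
  rw [cost_eq hQ hQuu hQ0 hSN hSrec hg hH hL hx lx lu h.linw hcv]
  simp only [hx0]
  rw [Finset.sum_add_distrib, Finset.sum_congr rfl fun k hk =>
    stage_split h hV (Finset.mem_range.1 hk) (hrep k) (hxz k) H L, Finset.sum_add_distrib]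
  ring

end LawCost

end TP

namespace TP

set_option linter.unusedSectionVars false

section Sparse

variable {a b c : Fin 3 → ℕ}

theorem fin3_ne (i : Fin 3) : i ≠ i + 1 := by
  revert i; decide

theorem BlockDiag.mul' {M : Matrix (idx a) (idx b) ℝ} {M' : Matrix (idx b) (idx c) ℝ}
    (h : BlockDiag M) (h' : BlockDiag M') : BlockDiag (M * M') := by
  intro i j hij
  rw [Matrix.mul_apply]
  refine Finset.sum_eq_zero fun l _ => ?_
  by_cases hl : i.1 = l.1
  · rw [h' l j (by rw [← hl]; exact hij), mul_zero]
  · rw [h i l hl, zero_mul]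

theorem BlockDiag.mul_cyc {M : Matrix (idx a) (idx b) ℝ} {M' : Matrix (idx b) (idx c) ℝ}
    (h : BlockDiag M) (h' : CyclicSparse M') : CyclicSparse (M * M') := by
  intro i j hij
  rw [Matrix.mul_apply]
  refine Finset.sum_eq_zero fun l _ => ?_
  by_cases hl : i.1 = l.1
  · rw [h' l j (by rw [← hl]; exact hij), mul_zero]
  · rw [h i l hl, zero_mul]

theorem BlockDiag.cyc {M : Matrix (idx a) (idx b) ℝ} (h : BlockDiag M) : CyclicSparse M :=
  fun i j hij => h i j (by rw [hij]; exact fin3_ne _)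

theorem CyclicSparse.add' {M M' : Matrix (idx a) (idx b) ℝ} (h : CyclicSparse M)
    (h' : CyclicSparse M') : CyclicSparse (M + M') := fun i j hij => by
  simp [h i j hij, h' i j hij]

theorem CyclicSparse.sub' {M M' : Matrix (idx a) (idx b) ℝ} (h : CyclicSparse M)
    (h' : CyclicSparse M') : CyclicSparse (M - M') := fun i j hij => by
  simp [h i j hij, h' i j hij]

theorem notMem_Sset (i : Fin 3) : i + 1 ∉ Sset i := by
  revert i; decide

theorem K1mat_cyc (A : Matrix (idx a) (idx a) ℝ) (C : Matrix (idx b) (idx a) ℝ)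
    (V : Matrix (idx b) (idx b) ℝ) (P : Matrix (idx a) (idx a) ℝ) :
    CyclicSparse (K1mat A C V P) := by
  intro i j hij
  rw [K1mat, dif_neg]
  rw [hij]
  exact notMem_Sset _

end Sparse

section Exists

variable {nv qv pv : Fin 3 → ℕ} {Ω : Type} [MeasurableSpace Ω] {Ξ : Type} [Fintype Ξ]
variable {μ : Measure Ω} {N : ℕ}
    {A : Matrix (idx nv) (idx nv) ℝ} {C : Matrix (idx pv) (idx nv) ℝ}
    {P0 W : Matrix (idx nv) (idx nv) ℝ}
    {V : Matrix (idx pv) (idx pv) ℝ} {x0 : Ω → idx nv → ℝ}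
    {w : ℕ → Ω → idx nv → ℝ} {v : ℕ → Ω → idx pv → ℝ} {ξ : Ω → Ξ → ℝ}

theorem isSOS_Jk (hξ : HasGaussianLaw ξ μ) (B : Matrix (idx nv) (idx qv) ℝ)
    (K : ℕ → Matrix (idx nv) (idx pv) ℝ) (H : ℕ → Matrix (idx qv) (idx qv) ℝ)
    (L : ℕ → Matrix (idx qv) (idx nv) ℝ) {t : ℕ → Ω → idx pv → ℝ} {e : ℕ → Ω → idx nv → ℝ} {k : ℕ}
    (hH : (H k).PosSemidef) (ht : Lin ξ (t k)) (he : Lin ξ (e k)) (htp : Lin ξ (tp t k)) :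
    IsSOS (fun θ : ℕ → Matrix (idx qv) (idx pv) ℝ × Matrix (idx qv) (idx pv) ℝ =>
      Jk μ B C K H L t e k (fun k => (θ k).1) (fun k => (θ k).2)) := by
  obtain ⟨Mt, ht⟩ := ht
  obtain ⟨Me, he⟩ := he
  obtain ⟨Mp, hp⟩ := htp
  have s1 := isSOS_quad (E := ℕ → Matrix (idx qv) (idx pv) ℝ × Matrix (idx qv) (idx pv) ℝ) hξ hH
    { toFun := fun θ => (θ k).1 * Mt
      map_add' := fun x y => by simp [Matrix.add_mul]
      map_smul' := fun x y => by simp } (- (L k * Me))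
  have s2 := isSOS_quad (E := ℕ → Matrix (idx qv) (idx pv) ℝ × Matrix (idx qv) (idx pv) ℝ) hξ hH
    { toFun := fun θ => ((θ k).1 * C * K (k - 1) + (θ k).2 - L k * (B * (θ (k - 1)).1)) * Mp
      map_add' := fun x y => by
        simp only [Pi.add_apply, Prod.fst_add, Prod.snd_add, Matrix.add_mul, Matrix.mul_add,
          Matrix.sub_mul]
        abel
      map_smul' := fun c y => by
        simp [Matrix.smul_mul, Matrix.mul_smul, smul_sub, smul_add, Matrix.add_mul,
          Matrix.sub_mul] } (- (L k * K (k - 1) * Mp))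
  convert s1.add s2 using 2 with θ
  rw [Jk]
  congr 2
  · ext ω
    have : (θ k).1 *ᵥ t k ω - L k *ᵥ e k ω = ((θ k).1 * Mt + - (L k * Me)) *ᵥ ξ ω := by
      rw [ht, he, add_mulVec, neg_mulVec, mulVec_mulVec, mulVec_mulVec, sub_eq_add_neg]
    rw [this]; rfl
  · ext ω
    have : ((θ k).1 * C * K (k - 1) + (θ k).2 - L k * (B * (θ (k - 1)).1 + K (k - 1))) *ᵥ tp t k ω =
      (((θ k).1 * C * K (k - 1) + (θ k).2 - L k * (B * (θ (k - 1)).1)) * Mp +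
        - (L k * K (k - 1) * Mp)) *ᵥ ξ ω := by
      rw [hp]
      simp only [add_mulVec, sub_mulVec, neg_mulVec, mulVec_mulVec, Matrix.mul_add,
        Matrix.add_mul, Matrix.sub_mul]
      abel
    rw [this]; rfl

theorem exists_gains (h : NoiseLin μ N P0 W V x0 w v ξ) (B : Matrix (idx nv) (idx qv) ℝ)
    (K : ℕ → Matrix (idx nv) (idx pv) ℝ) (H : ℕ → Matrix (idx qv) (idx qv) ℝ)
    (L : ℕ → Matrix (idx qv) (idx nv) ℝ) (hH : ∀ k < N, (H k).PosSemidef) :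
    ∃ F G : ℕ → Matrix (idx qv) (idx pv) ℝ, (∀ k, BlockDiag (F k)) ∧ (∀ k, CyclicSparse (G k)) ∧
      ∀ F' G' : ℕ → Matrix (idx qv) (idx pv) ℝ, (∀ k, BlockDiag (F' k)) →
        (∀ k, CyclicSparse (G' k)) →
        ∑ k ∈ Finset.range N,
          Jk μ B C K H L (yt A C V W P0 x0 w v) (err A C V W P0 x0 w v) k F G ≤
        ∑ k ∈ Finset.range N,
          Jk μ B C K H L (yt A C V W P0 x0 w v) (err A C V W P0 x0 w v) k F' G' := by
  let s : Submodule ℝ (ℕ → Matrix (idx qv) (idx pv) ℝ × Matrix (idx qv) (idx pv) ℝ) :=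
    { carrier := {θ | (∀ k, BlockDiag (θ k).1) ∧ ∀ k, CyclicSparse (θ k).2}
      add_mem' := fun {x y} hx hy => ⟨fun k i j hij => by
        simp [hx.1 k i j hij, hy.1 k i j hij], fun k i j hij => by
        simp [hx.2 k i j hij, hy.2 k i j hij]⟩
      zero_mem' := ⟨fun k i j hij => by simp, fun k i j hij => by simp⟩
      smul_mem' := fun c x hx => ⟨fun k i j hij => by
        simp [hx.1 k i j hij], fun k i j hij => by
        simp [hx.2 k i j hij]⟩ }
  have hs := IsSOS.sum (Finset.range N)
    (fun k (θ : ℕ → Matrix (idx qv) (idx pv) ℝ × Matrix (idx qv) (idx pv) ℝ) =>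
      Jk μ B C K H L (yt A C V W P0 x0 w v) (err A C V W P0 x0 w v) k
        (fun k => (θ k).1) (fun k => (θ k).2)) fun k hk => by
      have hk := Finset.mem_range.1 hk
      exact isSOS_Jk h.gauss B K H L (hH k hk) (lin_yt h hk) (lin_err h hk.le)
        (lin_past h hk.le (tp_past _ k))
  obtain ⟨θ, hθ, hmin⟩ := hs.exists_min s
  exact ⟨fun k => (θ k).1, fun k => (θ k).2, hθ.1, hθ.2, fun F' G' hF hG =>
    hmin (fun k => (F' k, G' k)) ⟨hF, hG⟩⟩

end Exists

end TP

namespace TP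

set_option linter.unusedSectionVars false

section Cond

theorem measurable_past {Ω ι τ : Type} [Fintype ι] [Fintype τ] {mΩ : MeasurableSpace Ω}
    {s : ℕ → Ω → τ → ℝ} {m : ℕ} (hs : ∀ j < m, Measurable (s j)) {X : Ω → ι → ℝ}
    (hX : InPast s m X) : Measurable X := by
  obtain ⟨c, hc⟩ := hX
  have : X = fun ω => ∑ j ∈ Finset.range m, c j *ᵥ s j ω := by ext1 ω; exact hc ω
  rw [this]
  refine Finset.measurable_fun_sum _ fun j hj => ?_
  exact measurable_of_lin (hs j (Finset.mem_range.1 hj)) ⟨c j, fun _ => rfl⟩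

theorem measurable_stack {Ω τ : Type} {mΩ : MeasurableSpace Ω} {m : ℕ} {t : ℕ → Ω → τ → ℝ}
    (hT : Measurable (fun ω (a : Fin m × τ) => t a.1 ω a.2)) (i : Fin m) : Measurable (t i) :=
  measurable_pi_iff.2 fun b => (measurable_pi_apply (i, b)).comp hT

variable {nv qv pv : Fin 3 → ℕ} {Ω : Type} [MeasurableSpace Ω] {Ξ ι : Type} [Fintype Ξ]
  [Fintype ι] {μ : Measure Ω} {ξ : Ω → Ξ → ℝ}

theorem lin_integral_zero [IsProbabilityMeasure μ] (hξ : HasGaussianLaw ξ μ)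
    (h0 : ∀ a, ∫ ω, ξ ω a ∂μ = 0)
    {d : Ω → ι → ℝ} (hd : Lin ξ d) : ∫ ω, d ω ∂μ = 0 := by
  ext i
  rw [eval_integral (fun i => (hd.memLp hξ i).integrable (by norm_num))]
  exact hd.mean hξ h0 i

theorem condExp_past [IsProbabilityMeasure μ] (hξ : HasGaussianLaw ξ μ)
    (h0 : ∀ a, ∫ ω, ξ ω a ∂μ = 0) {y t : ℕ → Ω → idx pv → ℝ} {m : ℕ}
    (htm : ∀ j, Measurable (t j)) (ht : ∀ j < m, Lin ξ (t j))
    (hy : ∀ j, InPast t (j + 1) (y j)) {x r d : Ω → ι → ℝ}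
    (hr : InPast y m r) (hrl : Lin ξ r) (hd : Lin ξ d) (hdm : Measurable d)
    (hcv : ∀ j < m, cv μ d (t j) = 0) (hx : ∀ ω, x ω = r ω + d ω) :
    r =ᵐ[μ] μ[x | pastSigma y (m + 1)] := by
  have hyj : ∀ j < m, Measurable[pastSigma y (m + 1)] (y j) := fun j hj =>
    Measurable.mono (comap_measurable (y j))
      (le_iSup₂_of_le (f := fun j (_ : j ∈ Finset.range (m + 1 - 1)) =>
        MeasurableSpace.comap (y j) inferInstance) j (by simpa using hj) le_rfl) le_rfl
  have hle : pastSigma y (m + 1) ≤ ‹MeasurableSpace Ω› := by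
    refine iSup₂_le fun j _ => ?_
    exact (measurable_past (fun i _ => htm i) (hy j)).comap_le
  let T : Ω → (Fin m × idx pv) → ℝ := fun ω a => t a.1 ω a.2
  have hT : Lin ξ T := by
    have : ∀ j : Fin m, ∃ M : Matrix (idx pv) Ξ ℝ, ∀ ω, t j ω = M *ᵥ ξ ω := fun j => ht j j.2
    choose M hM using this
    refine ⟨fun a => M a.1 a.2, fun ω => ?_⟩
    ext a
    simp only [T, hM]
    rfl
  have hcT : cv μ d T = 0 := by
    ext i a
    have := congrFun (congrFun (hcv a.1 a.1.2) i) a.2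
    exact this
  have hind : IndepFun d T μ := indep_of_cv hξ h0 hd hT hcT
  have hsT : pastSigma y (m + 1) ≤ MeasurableSpace.comap T inferInstance := by
    refine iSup₂_le fun j hj => ?_
    have hj : j < m := by simpa using hj
    refine Measurable.comap_le ?_
    refine measurable_past (fun i hi => ?_) (hy j)
    have hTm : Measurable[MeasurableSpace.comap T inferInstance] T := comap_measurable T
    exact measurable_stack hTm ⟨i, by omega⟩
  have hindep : Indep (MeasurableSpace.comap d inferInstance) (pastSigma y (m + 1)) μ :=
    indep_of_indep_of_le_right hind hsT
  have hxe : x = r + d := by ext1 ω; exact hx ω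
  have hri : Integrable r μ := (hrl.gauss hξ).integrable
  have hdi : Integrable d μ := (hd.gauss hξ).integrable
  have e1 : μ[r | pastSigma y (m + 1)] = r :=
    condExp_of_stronglyMeasurable hle (measurable_past hyj hr).stronglyMeasurable hri
  have e2 := condExp_indep_eq hdm.comap_le hle
    (f := d) (comap_measurable d).stronglyMeasurable hindep
  rw [hxe]
  have e3 := condExp_add hri hdi (pastSigma y (m + 1))
  rw [e1] at e3
  filter_upwards [e2, e3] with ω h2 h3
  rw [h3, Pi.add_apply, h2, lin_integral_zero hξ h0 hd, add_zero]

theorem meas_err_yt (A : Matrix (idx nv) (idx nv) ℝ) (C : Matrix (idx pv) (idx nv) ℝ)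
    (P0 W : Matrix (idx nv) (idx nv) ℝ) (V : Matrix (idx pv) (idx pv) ℝ)
    {x0 : Ω → idx nv → ℝ} {w : ℕ → Ω → idx nv → ℝ} {v : ℕ → Ω → idx pv → ℝ}
    (h0 : Measurable x0) (hw : ∀ k, Measurable (w k)) (hv : ∀ k, Measurable (v k)) (k : ℕ) :
    Measurable (err A C V W P0 x0 w v k) ∧ Measurable (yt A C V W P0 x0 w v k) := by
  have hmul : ∀ {a b : Fin 3 → ℕ} (M : Matrix (idx a) (idx b) ℝ) {X : Ω → idx b → ℝ},
      Measurable X → Measurable (fun ω => M *ᵥ X ω) := fun M X hX =>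
    measurable_of_lin hX ⟨M, fun _ => rfl⟩
  have hyt : ∀ k, Measurable (err A C V W P0 x0 w v k) → Measurable (yt A C V W P0 x0 w v k) :=
    fun k hk => by
      rw [yt_eq]
      exact (hmul C hk).add (hv k)
  suffices h : Measurable (err A C V W P0 x0 w v k) from ⟨h, hyt k h⟩
  induction k with
  | zero => exact h0
  | succ k ih =>
    rw [err_succ]
    exact ((hmul A ih).add (hw k)).sub (hmul _ (hyt k ih))

end Cond

end TP

/-- there exist gains `F*(k)` (block diagonal) and `F¹*(k)` (with zero blocks
at `(1,2), (2,3), (3,1)`) such that the admissible control law determined recursively by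
`u(k) = F*(k)(y(k) − C x̂¹(k)) + F¹*(k)(y(k−1) − C x̂(k−1|k−2)) + L(k) x̂(k)`, with
`x̂(k) = x̂¹(k) − (B F*(k−1) + K¹(k−1))(y(k−1) − C x̂(k−1|k−2))`, minimizes the cost `J`
over all admissible control laws; moreover, along this law,
`x̂(k) = E[x(k) | σ(y(0),…,y(k−2))]` almost surely for every `k`. -/
theorem stmt0 {nv qv pv : Fin 3 → ℕ} {Ω : Type} [MeasurableSpace Ω]
    (μ : Measure Ω) [IsProbabilityMeasure μ] (N : ℕ)
    (A : Matrix (idx nv) (idx nv) ℝ) (B : Matrix (idx nv) (idx qv) ℝ)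
    (C : Matrix (idx pv) (idx nv) ℝ)
    (hA : CyclicSparse A) (hB : BlockDiag B) (hC : BlockDiag C)
    (P0 W : Matrix (idx nv) (idx nv) ℝ) (V : Matrix (idx pv) (idx pv) ℝ)
    (hV : V.PosDef)
    (x0 : Ω → idx nv → ℝ) (w : ℕ → Ω → idx nv → ℝ) (v : ℕ → Ω → idx pv → ℝ)
    (hnoise : NoiseOK μ N P0 W V x0 w v)
    (Qxx : Matrix (idx nv) (idx nv) ℝ) (Qxu : Matrix (idx nv) (idx qv) ℝ)
    (Quu : Matrix (idx qv) (idx qv) ℝ) (Q0 : Matrix (idx nv) (idx nv) ℝ)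
    (hQ : (Matrix.fromBlocks Qxx Qxu Qxuᵀ Quu).PosSemidef) (hQuu : Quu.PosDef)
    (hQ0 : Q0.PosSemidef)
    (S : ℕ → Matrix (idx nv) (idx nv) ℝ) (hSN : S N = Q0)
    (hSrec : ∀ k < N, S k = Aᵀ * S (k + 1) * A + Qxx -
      (Aᵀ * S (k + 1) * B + Qxu) * (Quu + Bᵀ * S (k + 1) * B)⁻¹ *
        (Bᵀ * S (k + 1) * A + Qxuᵀ)) :
    ∃ Fs F1s : ℕ → Matrix (idx qv) (idx pv) ℝ,
      (∀ k, BlockDiag (Fs k)) ∧ (∀ k, CyclicSparse (F1s k)) ∧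
      ∀ x u y,
        OptLoop A B C V W P0 x0 w v Fs F1s
          (fun k => -((Quu + Bᵀ * S (k + 1) * B)⁻¹ * (Bᵀ * S (k + 1) * A + Qxuᵀ)))
          x u y →
        -- the recursively defined law is admissible
        (∃ G Φ, (∀ k, CyclicSparse (G k)) ∧ ClosedLoop A B C x0 w v Fs G Φ x u y) ∧
        -- it minimizes the cost over all admissible control laws
        (∀ F G Φ x' u' y', Admissible F G → ClosedLoop A B C x0 w v F G Φ x' u' y' →
          cost μ Qxx Qxu Quu Q0 N x u ≤ cost μ Qxx Qxu Quu Q0 N x' u') ∧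
        -- along this law, x̂(k) = E[x(k) | σ(y(0),…,y(k−2))] a.s. for every k
        ((fun _ => (0 : idx nv → ℝ)) =ᵐ[μ] (μ[x 0 | pastSigma y 0])) ∧
        (∀ k, 1 ≤ k → k ≤ N →
          (fun ω => xh1 A B C V W P0 u y k ω -
            (B * Fs (k - 1) + K1mat A C V (Pmat A C V W P0 (k - 1))) *ᵥ
              innov A B C V W P0 u y (k - 1) ω)
            =ᵐ[μ] (μ[x k | pastSigma y k])) := by
  obtain ⟨ξ, h⟩ := TP.exists_noiseLin μ N P0 W V x0 w v hnoise
  obtain ⟨hm0, hmw, hmv, -⟩ := hnoise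
  let H : ℕ → Matrix (idx qv) (idx qv) ℝ := fun k => Quu + Bᵀ * S (k + 1) * B
  let L : ℕ → Matrix (idx qv) (idx nv) ℝ := fun k =>
    -((Quu + Bᵀ * S (k + 1) * B)⁻¹ * (Bᵀ * S (k + 1) * A + Qxuᵀ))
  let K : ℕ → Matrix (idx nv) (idx pv) ℝ := fun k => Kgain A C V (Pmat A C V W P0 k)
  let K1 : ℕ → Matrix (idx nv) (idx pv) ℝ := fun k => K1mat A C V (Pmat A C V W P0 k)
  have hSp := TP.S_psd hQ hQuu hQ0 hSN hSrec
  have hHp : ∀ k < N, (H k).PosSemidef := fun k hk =>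
    (TP.H_posDef (hSp (k + 1) hk) B hQuu).posSemidef
  obtain ⟨F, G', hF, hG', hmin⟩ := TP.exists_gains (A := A) (C := C) h B K H L hHp
  have hFC : ∀ k, BlockDiag (F k * C) := fun k => TP.BlockDiag.mul' (hF k) hC
  have hK1 : ∀ k, CyclicSparse (K1 k) := fun k => TP.K1mat_cyc A C V _
  have hF1 : ∀ k, CyclicSparse (G' k + F k * C * K1 (k - 1)) := fun k =>
    TP.CyclicSparse.add' (hG' k) (TP.BlockDiag.mul_cyc (hFC k) (hK1 _))
  refine ⟨F, fun k => G' k + F k * C * K1 (k - 1), hF, hF1, ?_⟩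
  intro x u y hopt
  obtain ⟨hx0, hx, hy, hu0, hu⟩ := hopt
  obtain ⟨hxz, hinn, hdyn⟩ := TP.dyn_of_system A B C V W P0 x0 w v x u y hx0 hx hy
  have hu' : ∀ k ω, u (k + 1) ω =
      F (k + 1) *ᵥ (y (k + 1) ω - C *ᵥ (A *ᵥ xpred A B C V W P0 u y k ω + B *ᵥ u k ω +
        K1 k *ᵥ TP.yt A C V W P0 x0 w v k ω)) +
      (G' (k + 1) + F (k + 1) * C * K1 (k + 1 - 1)) *ᵥ TP.yt A C V W P0 x0 w v k ω +
      L (k + 1) *ᵥ ((A *ᵥ xpred A B C V W P0 u y k ω + B *ᵥ u k ω +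
        K1 k *ᵥ TP.yt A C V W P0 x0 w v k ω) -
        (B * F k + K1 k) *ᵥ TP.yt A C V W P0 x0 w v k ω) := by
    intro k ω
    have := hu (k + 1) (by omega) ω
    simp only [xh1, hinn, Nat.add_sub_cancel] at this
    exact this
  refine ⟨?_, ?_, ?_, ?_⟩
  · -- admissibility
    obtain ⟨Φ, hΦ⟩ := TP.opt_closed (F1s := fun k => G' k + F k * C * K1 (k - 1)) hdyn hu0 hu'
    refine ⟨_, Φ, fun k => ?_, hx0, hx, hy, hΦ⟩
    exact TP.CyclicSparse.sub' (hF1 k) (TP.BlockDiag.mul_cyc (hFC k)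
      (TP.CyclicSparse.add' (TP.BlockDiag.cyc (TP.BlockDiag.mul' hB (hF _))) (hK1 _)))
  · -- optimality
    intro Fc Gc Φ x' u' y' hadm hcl
    obtain ⟨hx0', hx', hy', huc⟩ := hcl
    obtain ⟨hxz', -, hdyn'⟩ := TP.dyn_of_system A B C V W P0 x0 w v x' u' y' hx0' hx' hy'
    have r1 := TP.opt_rep (F1s := fun k => G' k + F k * C * K1 (k - 1)) hdyn hu0 hu'
    choose r hr using r1
    have r2 := TP.closed_rep hdyn' huc
    choose p' r' hr' using r2
    have c1 := TP.law_cost h hV hQ hQuu hQ0 hSN hSrec (H := H) (L := L) (fun _ => rfl)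
      (fun _ => rfl) (fun k => (hr k).1) hx0 hx hxz
    have c2 := TP.law_cost h hV hQ hQuu hQ0 hSN hSrec (H := H) (L := L) (fun _ => rfl)
      (fun _ => rfl) hr' hx0' hx' hxz'
    have hG : (fun k => G' k + F k * C * K1 (k - 1) - F k * C * K1 (k - 1)) = G' := by
      funext k; exact add_sub_cancel_right _ _
    have hz : ∑ k ∈ Finset.range N, ∫ ω, (L k *ᵥ r k ω - L k *ᵥ r k ω) ⬝ᵥ
        H k *ᵥ (L k *ᵥ r k ω - L k *ᵥ r k ω) ∂μ = 0 := by
      refine Finset.sum_eq_zero fun k _ => ?_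
      simp
    have hn : 0 ≤ ∑ k ∈ Finset.range N, ∫ ω, (p' k ω - L k *ᵥ r' k ω) ⬝ᵥ
        H k *ᵥ (p' k ω - L k *ᵥ r' k ω) ∂μ := by
      refine Finset.sum_nonneg fun k hk => integral_nonneg fun ω => ?_
      have := (hHp k (Finset.mem_range.1 hk)).dotProduct_mulVec_nonneg (p' k ω - L k *ᵥ r' k ω)
      simpa using this
    have hm := hmin Fc (fun k => Gc k + Fc k * C * B * Fc (k - 1)) hadm.1 (fun k =>
      TP.CyclicSparse.add' (hadm.2 k) (TP.BlockDiag.cyc (TP.BlockDiag.mul'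
        (TP.BlockDiag.mul' (TP.BlockDiag.mul' (hadm.1 k) hC) hB) (hadm.1 _))))
    rw [hG, hz] at c1
    rw [c1, c2]
    linarith
  · -- the estimate at time zero
    have hb : pastSigma y 0 = ⊥ := by simp [pastSigma]
    have h0 : x 0 = x0 := by ext1 ω; exact hx0 ω
    rw [hb, condExp_bot, h0, TP.lin_integral_zero h.gauss h.mean h.lin0]
  · -- the estimate at later times
    intro k hk1 hkN
    obtain ⟨m, rfl⟩ : ∃ m, k = m + 1 := ⟨k - 1, by omega⟩
    obtain ⟨r, ⟨-, hrp, hzr, -⟩, hrj⟩ :=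
      TP.opt_rep (F1s := fun k => G' k + F k * C * K1 (k - 1)) hdyn hu0 hu' (m + 1)
    obtain ⟨Φ, hΦ⟩ := TP.opt_closed (F1s := fun k => G' k + F k * C * K1 (k - 1)) hdyn hu0 hu'
    have hyt : ∀ j, TP.InPast (TP.yt A C V W P0 x0 w v) (j + 1) (y j) := fun j =>
      (TP.closed_past hdyn hΦ j).2.1
    have hty : ∀ j, TP.InPast y (j + 1) (TP.yt A C V W P0 x0 w v j) := fun j =>
      (TP.opt_past (s := y) (F1s := fun k => G' k + F k * C * K1 (k - 1)) hdyn hu0 hu'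
        (fun i hi => ((TP.InPast.single (Nat.lt_succ_self i)).sub
          ((hi.mono (Nat.le_succ i)).mulVec C)).congr fun ω => by
            rw [hdyn.y i ω]; simp) j).2.1
    have hrp : TP.InPast (TP.yt A C V W P0 x0 w v) m r := hrp
    have hry : TP.InPast y m r := by
      obtain ⟨c, hc⟩ := hrp
      exact (TP.InPast.sum (Finset.range m) (fun j ω => c j *ᵥ TP.yt A C V W P0 x0 w v j ω)
        (fun j hj => ((hty j).mono (Finset.mem_range.1 hj)).mulVec (c j))).congr hc
    have hfun : (fun ω => xh1 A B C V W P0 u y (m + 1) ω -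
            (B * F (m + 1 - 1) + K1mat A C V (Pmat A C V W P0 (m + 1 - 1))) *ᵥ
              innov A B C V W P0 u y (m + 1 - 1) ω) = r := by
      funext ω
      rw [hrj m rfl ω]
      simp only [xh1, hinn, Nat.add_sub_cancel]
      rfl
    rw [hfun]
    have hlt := TP.lin_yt (A := A) (C := C) h (k := m) (by omega)
    have hle := TP.lin_err (A := A) (C := C) h hkN
    have hmeas := TP.meas_err_yt A C P0 W V hm0 hmw hmv
    have hml : TP.Lin (TP.yt A C V W P0 x0 w v m)
        (fun ω => (B * F m + K m) *ᵥ TP.yt A C V W P0 x0 w v m ω) := ⟨_, fun _ => rfl⟩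
    refine TP.condExp_past h.gauss h.mean (t := TP.yt A C V W P0 x0 w v)
      (d := fun ω => (B * F m + K m) *ᵥ TP.yt A C V W P0 x0 w v m ω +
        TP.err A C V W P0 x0 w v (m + 1) ω) (fun j => (hmeas j).2)
      (fun j hj => TP.lin_yt h (by omega)) hyt hry (TP.lin_past h (by omega) hrp)
      ((hlt.mulVec _).add hle)
      ((TP.measurable_of_lin (hmeas m).2 hml).add (hmeas (m + 1)).1) ?_ ?_
    · intro j hj
      have hlj := TP.lin_yt (A := A) (C := C) h (k := j) (by omega)
      rw [TP.cv_add_left h.gauss (hlt.mulVec _) hle hlj, TP.cv_mulVec_left h.gauss hlt hlj,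
        TP.cv_yt_yt h hV (by omega) hj, TP.cv_err_yt h hV (m + 1) hkN j (by omega)]
      simp
    · intro ω
      rw [hxz (m + 1) ω, hzr ω]
      simp only [TP.tp, Nat.add_sub_cancel, K]
      abel

end
end

section
/- Fix an admissible control law. For every k ≥ 1 and every i ∈ {1,2,3}, let I¹_i(k) be the σ-algebra generated by the random vectors {y_j(k−1) : j ∈ S_i} together with y(0),…,y(k−2). Then the conditional expectation E[x_i(k) | I¹_i(k)] equals the i-th block of x̂¹(k) = A x̂(k−1|k−2) + B u(k−1) + K¹(k−1)(y(k−1) − C x̂(k−1|k−2)) almost surely; equivalently, the stacked vector of the three conditional expectations equals x̂¹(k) almost surely. -/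
open MeasureTheory ProbabilityTheory Matrix Finset

noncomputable section

variable {nv qv pv : Fin 3 → ℕ}

variable {Ω : Type} [MeasurableSpace Ω]

/-- `I¹ᵢ(k)`: the σ-algebra generated by `{yⱼ(k−1) : j ∈ Sᵢ}` together with
`y(0), …, y(k−2)`. -/
def localSigma (y : ℕ → Ω → idx pv → ℝ) (i : Fin 3) (k : ℕ) : MeasurableSpace Ω :=
  (⨆ j ∈ Sset i,
    MeasurableSpace.comap (fun ω (b : Fin (pv j)) => y (k - 1) ω ⟨j, b⟩) inferInstance) ⊔
    pastSigma y k


/-- All coordinates of the random vector lie in `H`. -/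
def VH {d : Type} (H : Submodule ℝ (Ω → ℝ)) (X : Ω → d → ℝ) : Prop :=
  ∀ i, (fun ω => X ω i) ∈ H

/-- `H` is a centered Gaussian space. -/
structure GaussSpace (μ : Measure Ω) (H : Submodule ℝ (Ω → ℝ)) : Prop where
  meas : ∀ f ∈ H, Measurable f
  memLp : ∀ f ∈ H, MemLp f 2 μ
  mean : ∀ f ∈ H, ∫ ω, f ω ∂μ = 0
  gauss : ∀ (κ : Type) [Finite κ] (Z : κ → Ω → ℝ), (∀ k, Z k ∈ H) →
    HasGaussianLaw (fun ω k => Z k ω) μ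

theorem VH.add {d : Type} {H : Submodule ℝ (Ω → ℝ)} {X Y : Ω → d → ℝ} (hX : VH H X) (hY : VH H Y) :
    VH H (fun ω => X ω + Y ω) := fun i => H.add_mem (hX i) (hY i)

theorem VH.sub {d : Type} {H : Submodule ℝ (Ω → ℝ)} {X Y : Ω → d → ℝ} (hX : VH H X) (hY : VH H Y) :
    VH H (fun ω => X ω - Y ω) := fun i => H.sub_mem (hX i) (hY i)

theorem VH.zero {d : Type} {H : Submodule ℝ (Ω → ℝ)} :
    VH H (fun _ => (0 : d → ℝ)) := fun _ => H.zero_mem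

theorem VH.sum {d : Type} {H : Submodule ℝ (Ω → ℝ)} (s : Finset ℕ) {X : ℕ → Ω → d → ℝ}
    (hX : ∀ j ∈ s, VH H (X j)) : VH H (fun ω => ∑ j ∈ s, X j ω) := by
  intro i
  have := H.sum_mem (fun j hj => hX j hj i)
  convert this using 1
  ext ω
  simp

theorem VH.mulVec {d d' : Type} [Fintype d] {H : Submodule ℝ (Ω → ℝ)} {X : Ω → d → ℝ}
    (hX : VH H X) (M : Matrix d' d ℝ) : VH H (fun ω => M *ᵥ X ω) := by
  intro i
  have : (∑ j, M i j • fun ω => X ω j) ∈ H := H.sum_mem (fun j _ => H.smul_mem _ (hX j))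
  convert this using 1
  ext ω
  simp [Matrix.mulVec, dotProduct]

theorem isGaussianVec_hasGaussianLaw {d : Type} [Fintype d] {μ : Measure Ω} {X : Ω → d → ℝ}
    (hm : Measurable X) (h : IsGaussianVec μ X) : HasGaussianLaw X μ := by
  classical
  refine ⟨isGaussian_of_map_eq_gaussianReal fun L => ?_⟩
  obtain ⟨m, s, hs⟩ := h (fun i => L (Pi.single i 1))
  refine ⟨m, s, ?_⟩
  rw [Measure.map_map (by fun_prop) hm, ← hs]
  congr 1
  ext ω
  simp only [Function.comp]
  conv_lhs => rw [← Finset.univ_sum_single (X ω)]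
  rw [map_sum]
  refine Finset.sum_congr rfl fun i _ => ?_
  have : Pi.single i (X ω i) = X ω i • (Pi.single i (1:ℝ) : d → ℝ) := by
    rw [← Pi.single_smul]; simp
  rw [this, map_smul, smul_eq_mul, mul_comm]

theorem exists_gaussSpace {μ : Measure Ω} [IsProbabilityMeasure μ] {N : ℕ}
    {P0 W : Matrix (idx nv) (idx nv) ℝ}
    {V : Matrix (idx pv) (idx pv) ℝ} {x0 : Ω → idx nv → ℝ}
    {w : ℕ → Ω → idx nv → ℝ} {v : ℕ → Ω → idx pv → ℝ} (h : NoiseOK μ N P0 W V x0 w v) :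
    ∃ H : Submodule ℝ (Ω → ℝ), GaussSpace μ H ∧ VH H x0 ∧ (∀ k < N, VH H (w k)) ∧
      (∀ k < N, VH H (v k)) := by
  obtain ⟨mx, mw, mv, hind, gx, gw, gv, ex, -, ew, -, ev, -⟩ := h
  let X : (Unit ⊕ Fin N ⊕ Fin N) → Ω → (idx nv ⊕ idx pv → ℝ) :=
    Sum.elim (fun _ ω => Sum.elim (x0 ω) 0)
      (Sum.elim (fun k ω => Sum.elim (w k ω) 0) (fun k ω => Sum.elim 0 (v k ω)))
  have cl : ∀ f : Ω → idx nv → ℝ, @Measurable _ _ (MeasurableSpace.comap f inferInstance) _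
      (fun ω => (Sum.elim (f ω) 0 : idx nv ⊕ idx pv → ℝ)) := by
    intro f
    refine (measurable_pi_iff.2 ?_ : Measurable fun g : idx nv → ℝ =>
      (Sum.elim g 0 : idx nv ⊕ idx pv → ℝ)).comp (comap_measurable f)
    rintro (a | a)
    · exact measurable_pi_apply a
    · exact measurable_const
  have cr : ∀ f : Ω → idx pv → ℝ, @Measurable _ _ (MeasurableSpace.comap f inferInstance) _
      (fun ω => (Sum.elim 0 (f ω) : idx nv ⊕ idx pv → ℝ)) := by
    intro f
    refine (measurable_pi_iff.2 ?_ : Measurable fun g : idx pv → ℝ =>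
      (Sum.elim 0 g : idx nv ⊕ idx pv → ℝ)).comp (comap_measurable f)
    rintro (a | a)
    · exact measurable_const
    · exact measurable_pi_apply a
  have gl : ∀ f : Ω → idx nv → ℝ, HasGaussianLaw f μ →
      HasGaussianLaw (fun ω => (Sum.elim (f ω) 0 : idx nv ⊕ idx pv → ℝ)) μ := by
    intro f hf
    let L : (idx nv → ℝ) →L[ℝ] (idx nv ⊕ idx pv → ℝ) :=
      ContinuousLinearMap.pi (Sum.elim (fun a => ContinuousLinearMap.proj a) 0)
    have e : (fun ω => (Sum.elim (f ω) 0 : idx nv ⊕ idx pv → ℝ)) = fun ω => L (f ω) := by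
      funext ω a
      rcases a with a | a <;> simp [L]
    rw [e]
    exact hf.map_fun L
  have gr : ∀ f : Ω → idx pv → ℝ, HasGaussianLaw f μ →
      HasGaussianLaw (fun ω => (Sum.elim 0 (f ω) : idx nv ⊕ idx pv → ℝ)) μ := by
    intro f hf
    let L : (idx pv → ℝ) →L[ℝ] (idx nv ⊕ idx pv → ℝ) :=
      ContinuousLinearMap.pi (Sum.elim 0 (fun a => ContinuousLinearMap.proj a))
    have e : (fun ω => (Sum.elim 0 (f ω) : idx nv ⊕ idx pv → ℝ)) = fun ω => L (f ω) := by
      funext ω a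
      rcases a with a | a <;> simp [L]
    rw [e]
    exact hf.map_fun L
  have hXi : iIndepFun X μ := by
    refine iIndep_of_iIndep_of_le hind ?_
    rintro (a | a | a)
    · exact (cl x0).comap_le
    · exact (cl (w a)).comap_le
    · exact (cr (v a)).comap_le
  have hXg : ∀ i, HasGaussianLaw (X i) μ := by
    rintro (a | a | a)
    · exact gl _ (isGaussianVec_hasGaussianLaw mx gx)
    · exact gl _ (isGaussianVec_hasGaussianLaw (mw a) (gw a a.2))
    · exact gr _ (isGaussianVec_hasGaussianLaw (mv a) (gv a a.2))
  have hG := hXi.hasGaussianLaw hXg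
  let E := (Unit ⊕ Fin N ⊕ Fin N) → (idx nv ⊕ idx pv → ℝ)
  let S : Set (Ω → ℝ) := {f | ∃ (i : Unit ⊕ Fin N ⊕ Fin N) (a : idx nv ⊕ idx pv), f = fun ω => X i ω a}
  have hL : ∀ f ∈ Submodule.span ℝ S, ∃ L : E →L[ℝ] ℝ, ∀ ω, f ω = L (fun i => X i ω) := by
    intro f hf
    induction hf using Submodule.span_induction with
    | mem f hf =>
      obtain ⟨i, a, rfl⟩ := hf
      exact ⟨(ContinuousLinearMap.proj a).comp
        (ContinuousLinearMap.proj (R := ℝ) (φ := fun _ => idx nv ⊕ idx pv → ℝ) i), fun ω => rfl⟩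
    | zero => exact ⟨0, fun ω => rfl⟩
    | add f g _ _ hf hg =>
      obtain ⟨L, hL⟩ := hf
      obtain ⟨M, hM⟩ := hg
      exact ⟨L + M, fun ω => by simp [hL, hM]⟩
    | smul c f _ hf =>
      obtain ⟨L, hL⟩ := hf
      exact ⟨c • L, fun ω => by simp [hL]⟩
  have hmX : ∀ i, Measurable (X i) := by
    rintro (a | a | a)
    · exact (cl x0).mono mx.comap_le le_rfl
    · exact (cl (w a)).mono (mw a).comap_le le_rfl
    · exact (cr (v a)).mono (mv a).comap_le le_rfl
  have hgauss : ∀ (κ : Type) [Finite κ] (Z : κ → Ω → ℝ), (∀ k, Z k ∈ Submodule.span ℝ S) →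
      HasGaussianLaw (fun ω k => Z k ω) μ := by
    intro κ _ Z hZ
    have := Fintype.ofFinite κ
    choose L hL using fun k => hL _ (hZ k)
    have e : (fun ω k => Z k ω) = fun ω => ContinuousLinearMap.pi L (fun i => X i ω) := by
      funext ω k
      simp [hL]
    rw [e]
    exact hG.map_fun (ContinuousLinearMap.pi L)
  have hmem : ∀ f ∈ Submodule.span ℝ S, MemLp f 2 μ := by
    intro f hf
    have := (hgauss Unit (fun _ => f) (fun _ => hf)).map_fun (ContinuousLinearMap.proj ())
    exact this.memLp_two
  refine ⟨Submodule.span ℝ S, ⟨?_, hmem, ?_, hgauss⟩, ?_, ?_, ?_⟩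
  · intro f hf
    obtain ⟨L, hL⟩ := hL f hf
    have : f = L ∘ (fun ω i => X i ω) := funext hL
    rw [this]
    exact L.continuous.measurable.comp (measurable_pi_iff.2 hmX)
  · intro f hf
    induction hf using Submodule.span_induction with
    | mem f hf =>
      obtain ⟨i, a, rfl⟩ := hf
      rcases i with i | i | i <;> rcases a with a | a <;> simp [X, ex, ew, ev]
    | zero => simp
    | add f g hf hg h1 h2 =>
      have := integral_add ((hmem f hf).integrable (by norm_num))
        ((hmem g hg).integrable (by norm_num))
      simp only [Pi.add_apply, this, h1, h2, add_zero]
    | smul c f _ hf =>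
      simp [integral_const_mul, hf]
  · intro a
    exact Submodule.subset_span ⟨Sum.inl (), Sum.inl a, rfl⟩
  · intro k hk a
    exact Submodule.subset_span ⟨Sum.inr (Sum.inl ⟨k, hk⟩), Sum.inl a, rfl⟩
  · intro k hk a
    exact Submodule.subset_span ⟨Sum.inr (Sum.inr ⟨k, hk⟩), Sum.inr a, rfl⟩

theorem GaussSpace.indep {μ : Measure Ω} [IsProbabilityMeasure μ]
    {H : Submodule ℝ (Ω → ℝ)} (hH : GaussSpace μ H) {κ : Type} [Finite κ] (Z : κ → Ω → ℝ)
    (hZ : ∀ k, Z k ∈ H) (r : Ω → ℝ) (hr : r ∈ H) (h0 : ∀ k, ∫ ω, r ω * Z k ω ∂μ = 0) :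
    IndepFun r (fun ω k => Z k ω) μ := by
  have hind : IndepFun (fun ω (_ : Unit) => r ω) (fun ω k => Z k ω) μ := by
    have := Fintype.ofFinite κ
    refine HasGaussianLaw.indepFun_of_covariance_eval (X := fun _ => r) (Y := Z) ?_ ?_
    · have h1 := hH.gauss (Unit ⊕ κ) (Sum.elim (fun _ => r) Z) (by rintro (a | a) <;> simp [hr, hZ])
      let L : (Unit ⊕ κ → ℝ) →L[ℝ] (Unit → ℝ) × (κ → ℝ) := ContinuousLinearMap.prod
        (ContinuousLinearMap.pi fun _ => ContinuousLinearMap.proj (Sum.inl ()))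
        (ContinuousLinearMap.pi fun k => ContinuousLinearMap.proj (Sum.inr k))
      exact h1.map_fun L
    · intro _ k
      rw [covariance_eq_sub (hH.memLp _ hr) (hH.memLp _ (hZ k)), hH.mean _ hr]
      simp [h0 k]
  exact hind.comp (φ := fun g : Unit → ℝ => g ()) (ψ := id) (measurable_pi_apply _) measurable_id

theorem GaussSpace.condExp_zero {Ω : Type} (m : MeasurableSpace Ω) [m0 : MeasurableSpace Ω]
    {μ : Measure Ω} [IsProbabilityMeasure μ]
    {H : Submodule ℝ (Ω → ℝ)} (hH : GaussSpace μ H) {κ : Type} [Finite κ] (Z : κ → Ω → ℝ)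
    (hZ : ∀ k, Z k ∈ H) (r : Ω → ℝ) (hr : r ∈ H) (h0 : ∀ k, ∫ ω, r ω * Z k ω ∂μ = 0)
    (hm : m ≤ MeasurableSpace.comap (fun ω k => Z k ω) inferInstance) :
    μ[r | m] =ᵐ[μ] fun _ => (0 : ℝ) := by
  have hZm : Measurable (fun ω k => Z k ω) := measurable_pi_iff.2 fun k => hH.meas _ (hZ k)
  have hind2 := hH.indep Z hZ r hr h0
  have hle : m ≤ m0 := hm.trans hZm.comap_le
  have := condExp_indep_eq (μ := μ) (f := r) (hH.meas _ hr).comap_le hle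
    (comap_measurable r).stronglyMeasurable
    (indep_of_indep_of_le_right ((IndepFun_iff_Indep _ _ _).1 hind2) hm)
  rwa [hH.mean _ hr] at this


/-- Cross second moment matrix of two random vectors. -/
def crm {d d' : Type} (μ : Measure Ω) (X : Ω → d → ℝ) (Y : Ω → d' → ℝ) : Matrix d d' ℝ :=
  fun i j => ∫ ω, X ω i * Y ω j ∂μ

theorem crm_transpose {d d' : Type} (μ : Measure Ω) (X : Ω → d → ℝ) (Y : Ω → d' → ℝ) :
    (crm μ X Y)ᵀ = crm μ Y X := by
  ext i j
  simp [crm, mul_comm]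

section crmSec
variable {μ : Measure Ω} {H : Submodule ℝ (Ω → ℝ)} {d d' d'' : Type}

theorem GaussSpace.intg (hH : GaussSpace μ H) {f g : Ω → ℝ} (hf : f ∈ H) (hg : g ∈ H) :
    Integrable (fun ω => f ω * g ω) μ :=
  (hH.memLp f hf).integrable_mul (hH.memLp g hg)

theorem crm_add_left (hH : GaussSpace μ H) {X X' : Ω → d → ℝ} {Y : Ω → d' → ℝ}
    (hX : VH H X) (hX' : VH H X') (hY : VH H Y) :
    crm μ (fun ω => X ω + X' ω) Y = crm μ X Y + crm μ X' Y := by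
  ext i j
  simp only [crm, Matrix.add_apply, Pi.add_apply, add_mul]
  exact integral_add (hH.intg (hX i) (hY j)) (hH.intg (hX' i) (hY j))

theorem crm_sub_left (hH : GaussSpace μ H) {X X' : Ω → d → ℝ} {Y : Ω → d' → ℝ}
    (hX : VH H X) (hX' : VH H X') (hY : VH H Y) :
    crm μ (fun ω => X ω - X' ω) Y = crm μ X Y - crm μ X' Y := by
  ext i j
  simp only [crm, Matrix.sub_apply, Pi.sub_apply, sub_mul]
  exact integral_sub (hH.intg (hX i) (hY j)) (hH.intg (hX' i) (hY j))

theorem crm_mulVec_left [Fintype d] (hH : GaussSpace μ H) {X : Ω → d → ℝ} {Y : Ω → d' → ℝ}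
    (hX : VH H X) (hY : VH H Y) (M : Matrix d'' d ℝ) :
    crm μ (fun ω => M *ᵥ X ω) Y = M * crm μ X Y := by
  ext i j
  simp only [crm, Matrix.mul_apply, Matrix.mulVec, dotProduct, Finset.sum_mul, mul_assoc]
  rw [integral_finsetSum _ (fun k _ => (hH.intg (hX k) (hY j)).const_mul _)]
  simp [integral_const_mul]

theorem crm_add_right (hH : GaussSpace μ H) {X X' : Ω → d → ℝ} {Y : Ω → d' → ℝ}
    (hX : VH H X) (hX' : VH H X') (hY : VH H Y) :
    crm μ Y (fun ω => X ω + X' ω) = crm μ Y X + crm μ Y X' := by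
  rw [← crm_transpose, crm_add_left hH hX hX' hY, Matrix.transpose_add, crm_transpose,
    crm_transpose]

theorem crm_sub_right (hH : GaussSpace μ H) {X X' : Ω → d → ℝ} {Y : Ω → d' → ℝ}
    (hX : VH H X) (hX' : VH H X') (hY : VH H Y) :
    crm μ Y (fun ω => X ω - X' ω) = crm μ Y X - crm μ Y X' := by
  rw [← crm_transpose, crm_sub_left hH hX hX' hY, Matrix.transpose_sub, crm_transpose,
    crm_transpose]

theorem crm_mulVec_right [Fintype d] (hH : GaussSpace μ H) {X : Ω → d → ℝ} {Y : Ω → d' → ℝ}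
    (hX : VH H X) (hY : VH H Y) (M : Matrix d'' d ℝ) :
    crm μ Y (fun ω => M *ᵥ X ω) = crm μ Y X * Mᵀ := by
  rw [← crm_transpose, crm_mulVec_left hH hX hY, Matrix.transpose_mul, crm_transpose]

theorem crm_posSemidef [Fintype d] (hH : GaussSpace μ H) {X : Ω → d → ℝ} (hX : VH H X) :
    (crm μ X X).PosSemidef := by
  refine Matrix.PosSemidef.of_dotProduct_mulVec_nonneg ?_ ?_
  · rw [Matrix.IsHermitian, Matrix.conjTranspose_eq_transpose_of_trivial, crm_transpose]
  · intro c
    have hc : ∀ i, VH H (fun ω (_ : Unit) => X ω i) := fun i _ => hX i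
    have h1 := crm_mulVec_left hH hX (hX.mulVec (Matrix.of fun (_ : Unit) j => c j))
      (Matrix.of fun (_ : Unit) j => c j)
    rw [crm_mulVec_right hH hX hX] at h1
    have h2 : star c ⬝ᵥ (crm μ X X *ᵥ c) = ((Matrix.of fun (_ : Unit) j => c j) *
        (crm μ X X * (Matrix.of fun (_ : Unit) j => c j)ᵀ)) () () := by
      simp [Matrix.mul_apply, dotProduct, Matrix.mulVec]
    rw [h2, ← h1]
    exact integral_nonneg fun ω => mul_self_nonneg _

end crmSec

/-- The cross moments of the noise. -/
structure NoiseCross (μ : Measure Ω) (N : ℕ) (P0 W : Matrix (idx nv) (idx nv) ℝ)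
    (V : Matrix (idx pv) (idx pv) ℝ) (x0 : Ω → idx nv → ℝ)
    (w : ℕ → Ω → idx nv → ℝ) (v : ℕ → Ω → idx pv → ℝ) : Prop where
  xx : crm μ x0 x0 = P0
  ww : ∀ k < N, crm μ (w k) (w k) = W
  vv : ∀ k < N, crm μ (v k) (v k) = V
  wx : ∀ k < N, crm μ (w k) x0 = 0
  vx : ∀ k < N, crm μ (v k) x0 = 0
  ww' : ∀ k < N, ∀ j < N, k ≠ j → crm μ (w k) (w j) = 0
  vv' : ∀ k < N, ∀ j < N, k ≠ j → crm μ (v k) (v j) = 0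
  wv : ∀ k < N, ∀ j < N, crm μ (w k) (v j) = 0

theorem crm_indep {d d' : Type} {μ : Measure Ω} {X : Ω → d → ℝ} {Y : Ω → d' → ℝ}
    (hX : Measurable X) (hY : Measurable Y) (h0 : ∀ i, ∫ ω, X ω i ∂μ = 0)
    (h : Indep (MeasurableSpace.comap X inferInstance) (MeasurableSpace.comap Y inferInstance) μ) :
    crm μ X Y = 0 := by
  ext i j
  have h1 : IndepFun X Y μ := (IndepFun_iff_Indep _ _ _).2 h
  have m1 : Measurable (fun g : d → ℝ => g i) := measurable_pi_apply i
  have m2 : Measurable (fun g : d' → ℝ => g j) := measurable_pi_apply j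
  have h2 := h1.comp m1 m2
  have h3 := h2.integral_fun_mul_eq_mul_integral
    ((measurable_pi_apply i).comp hX).aestronglyMeasurable
    ((measurable_pi_apply j).comp hY).aestronglyMeasurable
  simp only [Function.comp] at h3
  simp [crm, h3, h0]

theorem NoiseOK.cross {μ : Measure Ω} {N : ℕ}
    {P0 W : Matrix (idx nv) (idx nv) ℝ}
    {V : Matrix (idx pv) (idx pv) ℝ} {x0 : Ω → idx nv → ℝ}
    {w : ℕ → Ω → idx nv → ℝ} {v : ℕ → Ω → idx pv → ℝ} (h : NoiseOK μ N P0 W V x0 w v) :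
    NoiseCross μ N P0 W V x0 w v := by
  obtain ⟨mx, mw, mv, hind, -, -, -, ex, cx, ew, cw, ev, cv⟩ := h
  refine ⟨?_, ?_, ?_, ?_, ?_, ?_, ?_, ?_⟩
  · ext i j; exact cx i j
  · intro k hk; ext i j; exact cw k hk i j
  · intro k hk; ext i j; exact cv k hk i j
  · intro k hk
    exact crm_indep (mw k) mx (ew k hk)
      (hind.indep (i := Sum.inr (Sum.inl ⟨k, hk⟩)) (j := Sum.inl ()) (by simp))
  · intro k hk
    exact crm_indep (mv k) mx (ev k hk)
      (hind.indep (i := Sum.inr (Sum.inr ⟨k, hk⟩)) (j := Sum.inl ()) (by simp))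
  · intro k hk j hj hkj
    exact crm_indep (mw k) (mw j) (ew k hk)
      (hind.indep (i := Sum.inr (Sum.inl ⟨k, hk⟩)) (j := Sum.inr (Sum.inl ⟨j, hj⟩)) (by simpa using hkj))
  · intro k hk j hj hkj
    exact crm_indep (mv k) (mv j) (ev k hk)
      (hind.indep (i := Sum.inr (Sum.inr ⟨k, hk⟩)) (j := Sum.inr (Sum.inr ⟨j, hj⟩)) (by simpa using hkj))
  · intro k hk j hj
    exact crm_indep (mw k) (mv j) (ew k hk)
      (hind.indep (i := Sum.inr (Sum.inl ⟨k, hk⟩)) (j := Sum.inr (Sum.inr ⟨j, hj⟩)) (by simp))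


theorem kalman_aux {μ : Measure Ω} {N : ℕ} {H : Submodule ℝ (Ω → ℝ)} (hH : GaussSpace μ H)
    (A : Matrix (idx nv) (idx nv) ℝ) (C : Matrix (idx pv) (idx nv) ℝ)
    {P0 W : Matrix (idx nv) (idx nv) ℝ}
    {V : Matrix (idx pv) (idx pv) ℝ} {x0 : Ω → idx nv → ℝ}
    {w : ℕ → Ω → idx nv → ℝ} {v : ℕ → Ω → idx pv → ℝ} (h : NoiseCross μ N P0 W V x0 w v)
    (hx0 : VH H x0) (hw : ∀ k < N, VH H (w k)) (hv : ∀ k < N, VH H (v k))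
    (K : ℕ → Matrix (idx nv) (idx pv) ℝ)
    (e : ℕ → Ω → idx nv → ℝ) (yt : ℕ → Ω → idx pv → ℝ)
    (he0 : e 0 = x0)
    (heS : ∀ k, e (k + 1) = fun ω => A *ᵥ e k ω + w k ω - K k *ᵥ yt k ω)
    (hyt : ∀ k, yt k = fun ω => C *ᵥ e k ω + v k ω) :
    (∀ k ≤ N, VH H (e k)) ∧ (∀ k < N, VH H (yt k)) ∧
    (∀ k ≤ N, ∀ j < N, k ≤ j → crm μ (w j) (e k) = 0 ∧ crm μ (v j) (e k) = 0) ∧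
    (∀ k < N, ∀ j < N, k ≤ j → crm μ (w j) (yt k) = 0) ∧
    (∀ k < N, ∀ j < N, k < j → crm μ (v j) (yt k) = 0) := by
  have hE : ∀ k ≤ N, VH H (e k) := by
    intro k
    induction k with
    | zero => intro _; rw [he0]; exact hx0
    | succ k ih =>
      intro hk
      have := ih (by omega)
      have hy : VH H (yt k) := by rw [hyt]; exact (this.mulVec C).add (hv k (by omega))
      rw [heS]
      exact ((this.mulVec A).add (hw k (by omega))).sub (hy.mulVec _)
  have hY : ∀ k < N, VH H (yt k) := by
    intro k hk
    rw [hyt]; exact ((hE k hk.le).mulVec C).add (hv k hk)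
  have key : ∀ k ≤ N, ∀ j < N, k ≤ j → crm μ (w j) (e k) = 0 ∧ crm μ (v j) (e k) = 0 := by
    intro k
    induction k with
    | zero => intro _ j hj _; rw [he0]; exact ⟨h.wx j hj, h.vx j hj⟩
    | succ k ih =>
      intro hk j hj hkj
      obtain ⟨h1, h2⟩ := ih (by omega) j hj (by omega)
      have hkN : k < N := by omega
      have hek := hE k (by omega)
      have hyk := hY k hkN
      have hvw : crm μ (v j) (w k) = 0 := by rw [← crm_transpose, h.wv k hkN j hj]; simp
      rw [heS]
      constructor
      · rw [crm_sub_right hH ((hek.mulVec A).add (hw k hkN)) (hyk.mulVec _) (hw j hj),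
          crm_add_right hH (hek.mulVec A) (hw k hkN) (hw j hj),
          crm_mulVec_right hH hek (hw j hj), crm_mulVec_right hH hyk (hw j hj), hyt,
          crm_add_right hH (hek.mulVec C) (hv k hkN) (hw j hj),
          crm_mulVec_right hH hek (hw j hj), h1, h.ww' j hj k hkN (by omega), h.wv j hj k hkN]
        simp
      · rw [crm_sub_right hH ((hek.mulVec A).add (hw k hkN)) (hyk.mulVec _) (hv j hj),
          crm_add_right hH (hek.mulVec A) (hw k hkN) (hv j hj),
          crm_mulVec_right hH hek (hv j hj), crm_mulVec_right hH hyk (hv j hj), hyt,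
          crm_add_right hH (hek.mulVec C) (hv k hkN) (hv j hj),
          crm_mulVec_right hH hek (hv j hj), h2, h.vv' j hj k hkN (by omega), hvw]
        simp
  refine ⟨hE, hY, key, ?_, ?_⟩
  · intro k hk j hj hkj
    rw [hyt, crm_add_right hH ((hE k hk.le).mulVec C) (hv k hk) (hw j hj),
      crm_mulVec_right hH (hE k hk.le) (hw j hj), (key k hk.le j hj hkj).1, h.wv j hj k hk]
    simp
  · intro k hk j hj hkj
    rw [hyt, crm_add_right hH ((hE k hk.le).mulVec C) (hv k hk) (hv j hj),
      crm_mulVec_right hH (hE k hk.le) (hv j hj), (key k hk.le j hj hkj.le).2,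
      h.vv' j hj k hk (by omega)]
    simp

theorem posDef_innov {d d' : Type} [Fintype d] [Fintype d'] (C : Matrix d' d ℝ)
    (P : Matrix d d ℝ) (hP : P.PosSemidef) {V : Matrix d' d' ℝ} (hV : V.PosDef) :
    (C * P * Cᵀ + V).PosDef := by
  have := hP.mul_mul_conjTranspose_same C
  rw [Matrix.conjTranspose_eq_transpose_of_trivial] at this
  exact Matrix.PosDef.posSemidef_add this hV

theorem kalman_main {μ : Measure Ω} {N : ℕ} {H : Submodule ℝ (Ω → ℝ)} (hH : GaussSpace μ H)
    (A : Matrix (idx nv) (idx nv) ℝ) (C : Matrix (idx pv) (idx nv) ℝ)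
    {P0 W : Matrix (idx nv) (idx nv) ℝ}
    {V : Matrix (idx pv) (idx pv) ℝ} (hV : V.PosDef) {x0 : Ω → idx nv → ℝ}
    {w : ℕ → Ω → idx nv → ℝ} {v : ℕ → Ω → idx pv → ℝ} (h : NoiseCross μ N P0 W V x0 w v)
    (hx0 : VH H x0) (hw : ∀ k < N, VH H (w k)) (hv : ∀ k < N, VH H (v k))
    (e : ℕ → Ω → idx nv → ℝ) (yt : ℕ → Ω → idx pv → ℝ)
    (he0 : e 0 = x0)
    (heS : ∀ k, e (k + 1) = fun ω => A *ᵥ e k ω + w k ω -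
      Kgain A C V (Pmat A C V W P0 k) *ᵥ yt k ω)
    (hyt : ∀ k, yt k = fun ω => C *ᵥ e k ω + v k ω) :
    ∀ k ≤ N, crm μ (e k) (e k) = Pmat A C V W P0 k ∧ ∀ j < k, crm μ (e k) (yt j) = 0 := by
  obtain ⟨hE, hY, hn1, hn2, hn3⟩ := kalman_aux hH A C h hx0 hw hv _ e yt he0 heS hyt
  intro k
  induction k with
  | zero =>
    intro _
    exact ⟨by rw [he0, h.xx]; rfl, fun j hj => absurd hj (by omega)⟩
  | succ k ih =>
    intro hk
    obtain ⟨hP, hO⟩ := ih (by omega)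
    have hkN : k < N := by omega
    have hek := hE k hkN.le
    have hyk := hY k hkN
    have hwk := hw k hkN
    have hvk := hv k hkN
    have hpsd : (Pmat A C V W P0 k).PosSemidef := by rw [← hP]; exact crm_posSemidef hH hek
    have hsymm : (Pmat A C V W P0 k)ᵀ = Pmat A C V W P0 k := by rw [← hP, crm_transpose]
    have hpd := posDef_innov C _ hpsd hV
    have hev : crm μ (e k) (v k) = 0 := by
      rw [← crm_transpose, (hn1 k hkN.le k hkN le_rfl).2]; simp
    have hew : crm μ (e k) (w k) = 0 := by
      rw [← crm_transpose, (hn1 k hkN.le k hkN le_rfl).1]; simp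
    have hyw : crm μ (yt k) (w k) = 0 := by
      rw [← crm_transpose, hn2 k hkN k hkN le_rfl]; simp
    have hey : crm μ (e k) (yt k) = Pmat A C V W P0 k * Cᵀ := by
      rw [hyt, crm_add_right hH (hek.mulVec C) hvk hek, crm_mulVec_right hH hek hek, hev, hP,
        add_zero]
    have hye : crm μ (yt k) (e k) = C * Pmat A C V W P0 k := by
      rw [← crm_transpose, hey, Matrix.transpose_mul, hsymm, Matrix.transpose_transpose]
    have hvy : crm μ (v k) (yt k) = V := by
      rw [hyt, crm_add_right hH (hek.mulVec C) hvk hvk, crm_mulVec_right hH hek hvk,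
        (hn1 k hkN.le k hkN le_rfl).2, h.vv k hkN]
      simp
    have hyy : crm μ (yt k) (yt k) = C * Pmat A C V W P0 k * Cᵀ + V := by
      conv_lhs => enter [2]; rw [hyt]
      rw [crm_add_left hH (hek.mulVec C) hvk hyk, crm_mulVec_left hH hek hyk, hey, hvy,
        Matrix.mul_assoc]
    have hgen : ∀ {d : Type} (Y : Ω → d → ℝ), VH H Y → crm μ (e (k+1)) Y =
        A * crm μ (e k) Y + crm μ (w k) Y -
          Kgain A C V (Pmat A C V W P0 k) * crm μ (yt k) Y := by
      intro d Y hYY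
      rw [heS, crm_sub_left hH ((hek.mulVec A).add hwk) (hyk.mulVec _) hYY,
        crm_add_left hH (hek.mulVec A) hwk hYY, crm_mulVec_left hH hek hYY,
        crm_mulVec_left hH hyk hYY]
    have hOk : crm μ (e (k+1)) (yt k) = 0 := by
      rw [hgen _ hyk, hey, hn2 k hkN k hkN le_rfl, hyy, Kgain,
        Matrix.mul_assoc _ _ (C * _ * Cᵀ + V),
        Matrix.nonsing_inv_mul _ ((Matrix.isUnit_iff_isUnit_det _).1 hpd.isUnit)]
      simp [Matrix.mul_assoc]
    refine ⟨?_, ?_⟩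
    · have hek1 := hE (k+1) hk
      conv_lhs => enter [3]; rw [heS]
      rw [crm_sub_right hH ((hek.mulVec A).add hwk) (hyk.mulVec _) hek1,
        crm_add_right hH (hek.mulVec A) hwk hek1, crm_mulVec_right hH hek hek1,
        crm_mulVec_right hH hyk hek1, hOk, hgen _ hek, hgen _ hwk, hP, hew, hyw, hye,
        (hn1 k hkN.le k hkN le_rfl).1, h.ww k hkN, Pmat]
      simp only [Matrix.mul_zero, Matrix.zero_mul, add_zero, zero_add, sub_zero,
        Matrix.sub_mul, Matrix.mul_assoc]
      abel
    · intro j hj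
      rcases Nat.lt_succ_iff_lt_or_eq.1 hj with hj | rfl
      · have hjN : j < N := by omega
        have hyj := hY j hjN
        have hyyj : crm μ (yt k) (yt j) = 0 := by
          conv_lhs => enter [2]; rw [hyt]
          rw [crm_add_left hH (hek.mulVec C) hvk hyj, crm_mulVec_left hH hek hyj, hO j hj,
            hn3 j hjN k hkN hj]
          simp
        rw [hgen _ hyj, hO j hj, hn2 j hjN k hkN hj.le, hyyj]
        simp
      · exact hOk


theorem sum_ridx {t : Fin 3 → ℕ} (S : Finset (Fin 3)) (g : idx t → ℝ)
    (h : ∀ c, c.1 ∉ S → g c = 0) : ∑ c, g c = ∑ c : ridx t S, g c.1 := by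
  rw [← Finset.sum_subtype (Finset.univ.filter fun c : idx t => c.1 ∈ S) (by simp) g]
  symm
  apply Finset.sum_subset (Finset.subset_univ _)
  intro c _ hc
  exact h c (by simpa using hc)

theorem mul_transpose_ridx {d : Type} (S : Finset (Fin 3)) (C : Matrix (idx pv) (idx nv) ℝ)
    (hC : BlockDiag C) (M : Matrix d (idx nv) ℝ) (a : d) (b : ridx pv S) :
    (M * Cᵀ) a b.1 = (M.submatrix id (Subtype.val : ridx nv S → idx nv) * (subBB C S S)ᵀ) a b := by
  simp only [Matrix.mul_apply, Matrix.transpose_apply, subBB, Matrix.submatrix_apply, id]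
  apply sum_ridx S (fun c => M a c * C b.1 c)
  intro c hc
  show M a c * C b.1 c = 0
  rw [hC, mul_zero]
  intro h
  exact hc (h ▸ b.2)

theorem K1mat_eq (A : Matrix (idx nv) (idx nv) ℝ) (C : Matrix (idx pv) (idx nv) ℝ)
    (hC : BlockDiag C)
    {V : Matrix (idx pv) (idx pv) ℝ} (P : Matrix (idx nv) (idx nv) ℝ)
    (hpd : (C * P * Cᵀ + V).PosDef) (i : Fin 3) (a : Fin (nv i)) (b : idx pv)
    (hb : b.1 ∈ Sset i) :
    (K1mat A C V P * (C * P * Cᵀ + V)) ⟨i, a⟩ b = (A * (P * Cᵀ)) ⟨i, a⟩ b := by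
  have E1 : subBB C (Sset i) (Sset i) * subBB P (Sset i) (Sset i) * (subBB C (Sset i) (Sset i))ᵀ
      + subBB V (Sset i) (Sset i) = (C * P * Cᵀ + V).submatrix (Subtype.val : ridx pv (Sset i) → idx pv)
          (Subtype.val : ridx pv (Sset i) → idx pv) := by
    ext a b
    simp only [Matrix.add_apply, Matrix.submatrix_apply]
    rw [mul_transpose_ridx _ C hC]
    have : ∀ c : ridx nv (Sset i), (C * P) a.1 c.1 =
        (subBB C (Sset i) (Sset i) * subBB P (Sset i) (Sset i)) a c := by
      intro c
      simp only [Matrix.mul_apply, subBB]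
      apply sum_ridx
      intro c hc
      rw [hC, zero_mul]
      intro h
      exact hc (h ▸ a.2)
    rw [Matrix.mul_apply, Matrix.mul_apply]
    simp only [Matrix.submatrix_apply, id, this]
    rfl
  have E2 : ∀ c : ridx pv (Sset i), (blockRow A i * subCols P (Sset i) *
      (subBB C (Sset i) (Sset i))ᵀ) a c = (A * (P * Cᵀ)) ⟨i, a⟩ c.1 := by
    intro c
    rw [← Matrix.mul_assoc, mul_transpose_ridx _ C hC]
    rfl
  have hpd' := hpd.submatrix (e := (Subtype.val : ridx pv (Sset i) → idx pv))
    Subtype.val_injective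
  rw [← E2 ⟨b, hb⟩, Matrix.mul_apply, sum_ridx (Sset i)]
  · have : ∀ c : ridx pv (Sset i), K1mat A C V P ⟨i, a⟩ c.1 =
        (blockRow A i * subCols P (Sset i) * (subBB C (Sset i) (Sset i))ᵀ *
        ((C * P * Cᵀ + V).submatrix (Subtype.val : ridx pv (Sset i) → idx pv)
          (Subtype.val : ridx pv (Sset i) → idx pv))⁻¹) a c := by
      intro c
      rw [← E1, K1mat, dif_pos c.2]
    simp only [this]
    have h2 := congrFun (congrFun (Matrix.nonsing_inv_mul_cancel_right _ (blockRow A i * subCols P (Sset i) * (subBB C (Sset i) (Sset i))ᵀ)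
      ((Matrix.isUnit_iff_isUnit_det _).1 hpd'.isUnit)) a) ⟨b, hb⟩
    rw [← h2, Matrix.mul_apply]
    rfl
  · intro c hc
    rw [K1mat, dif_neg hc, zero_mul]

theorem mulVec_mem {d d' : Type} [Fintype d] {H : Submodule ℝ (Ω → ℝ)} {X : Ω → d → ℝ}
    (M : Matrix d' d ℝ) (a : d') (h : ∀ c, M a c ≠ 0 → (fun ω => X ω c) ∈ H) :
    (fun ω => (M *ᵥ X ω) a) ∈ H := by
  have : (∑ j, M a j • fun ω => X ω j) ∈ H := by
    refine H.sum_mem (fun j _ => ?_)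
    by_cases hj : M a j = 0
    · rw [hj, zero_smul]; exact H.zero_mem
    · exact H.smul_mem _ (h j hj)
  convert this using 1
  ext ω
  simp [Matrix.mulVec, dotProduct]

/-- The functions measurable with respect to a given sigma-algebra. -/
def measSub {Ω : Type} (m : MeasurableSpace Ω) : Submodule ℝ (Ω → ℝ) where
  carrier := {f | Measurable[m] f}
  add_mem' := fun hf hg => Measurable.add hf hg
  zero_mem' := measurable_const
  smul_mem' := fun c _ hf => Measurable.const_smul hf c

theorem ctrl_past {H : Submodule ℝ (Ω → ℝ)} {A : Matrix (idx nv) (idx nv) ℝ}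
    {B : Matrix (idx nv) (idx qv) ℝ}
    {C : Matrix (idx pv) (idx nv) ℝ} {x0 : Ω → idx nv → ℝ}
    {w : ℕ → Ω → idx nv → ℝ} {v : ℕ → Ω → idx pv → ℝ}
    {F G : ℕ → Matrix (idx qv) (idx pv) ℝ} {Φ : ℕ → ℕ → Matrix (idx qv) (idx pv) ℝ}
    {x : ℕ → Ω → idx nv → ℝ} {u : ℕ → Ω → idx qv → ℝ} {y : ℕ → Ω → idx pv → ℝ}
    (hcl : ClosedLoop A B C x0 w v F G Φ x u y) (t : ℕ) (hy : ∀ j < t, VH H (y j)) :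
    ∃ f : Ω → idx qv → ℝ, VH H f ∧ ∀ ω, u t ω = F t *ᵥ y t ω + f ω := by
  refine ⟨fun ω => (if 1 ≤ t then G t *ᵥ y (t - 1) ω else 0) +
    ∑ j ∈ Finset.range (t - 1), Φ t j *ᵥ y j ω, ?_, ?_⟩
  · refine VH.add ?_ ?_
    · by_cases h : 1 ≤ t
      · simp only [h, if_true]
        exact (hy (t - 1) (by omega)).mulVec _
      · simp only [h, if_false]
        exact VH.zero
    · exact VH.sum _ (X := fun j ω => Φ t j *ᵥ y j ω) (fun j hj => (hy j (by
        have := Finset.mem_range.1 hj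
        omega)).mulVec _)
  · intro ω
    rw [hcl.2.2.2 t ω, add_assoc]

theorem ctrl_VH {H : Submodule ℝ (Ω → ℝ)} {A : Matrix (idx nv) (idx nv) ℝ}
    {B : Matrix (idx nv) (idx qv) ℝ}
    {C : Matrix (idx pv) (idx nv) ℝ} {x0 : Ω → idx nv → ℝ}
    {w : ℕ → Ω → idx nv → ℝ} {v : ℕ → Ω → idx pv → ℝ}
    {F G : ℕ → Matrix (idx qv) (idx pv) ℝ} {Φ : ℕ → ℕ → Matrix (idx qv) (idx pv) ℝ}
    {x : ℕ → Ω → idx nv → ℝ} {u : ℕ → Ω → idx qv → ℝ} {y : ℕ → Ω → idx pv → ℝ}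
    (hcl : ClosedLoop A B C x0 w v F G Φ x u y) (t : ℕ) (hy : ∀ j ≤ t, VH H (y j)) :
    VH H (u t) := by
  obtain ⟨f, hf, hu⟩ := ctrl_past hcl t (fun j hj => hy j hj.le)
  have : u t = fun ω => F t *ᵥ y t ω + f ω := funext hu
  rw [this]
  exact ((hy t le_rfl).mulVec _).add hf

theorem xpred_VH {H : Submodule ℝ (Ω → ℝ)} {A : Matrix (idx nv) (idx nv) ℝ}
    {B : Matrix (idx nv) (idx qv) ℝ}
    {C : Matrix (idx pv) (idx nv) ℝ} (V : Matrix (idx pv) (idx pv) ℝ)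
    (W P0 : Matrix (idx nv) (idx nv) ℝ) {x0 : Ω → idx nv → ℝ}
    {w : ℕ → Ω → idx nv → ℝ} {v : ℕ → Ω → idx pv → ℝ}
    {F G : ℕ → Matrix (idx qv) (idx pv) ℝ} {Φ : ℕ → ℕ → Matrix (idx qv) (idx pv) ℝ}
    {x : ℕ → Ω → idx nv → ℝ} {u : ℕ → Ω → idx qv → ℝ} {y : ℕ → Ω → idx pv → ℝ}
    (hcl : ClosedLoop A B C x0 w v F G Φ x u y) (t : ℕ) (hy : ∀ j < t, VH H (y j)) :
    VH H (xpred A B C V W P0 u y t) := by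
  induction t with
  | zero => exact VH.zero
  | succ t ih =>
    have h1 := ih (fun j hj => hy j (by omega))
    have h2 := ctrl_VH hcl t (fun j hj => hy j (by omega))
    exact ((h1.mulVec A).add (h2.mulVec B)).add (((hy t (by omega)).sub (h1.mulVec C)).mulVec _)

theorem y_VH {H : Submodule ℝ (Ω → ℝ)} {A : Matrix (idx nv) (idx nv) ℝ}
    {B : Matrix (idx nv) (idx qv) ℝ}
    {C : Matrix (idx pv) (idx nv) ℝ} (V : Matrix (idx pv) (idx pv) ℝ)
    (W P0 : Matrix (idx nv) (idx nv) ℝ) {x0 : Ω → idx nv → ℝ}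
    {w : ℕ → Ω → idx nv → ℝ} {v : ℕ → Ω → idx pv → ℝ}
    {F G : ℕ → Matrix (idx qv) (idx pv) ℝ} {Φ : ℕ → ℕ → Matrix (idx qv) (idx pv) ℝ}
    {x : ℕ → Ω → idx nv → ℝ} {u : ℕ → Ω → idx qv → ℝ} {y : ℕ → Ω → idx pv → ℝ}
    (hcl : ClosedLoop A B C x0 w v F G Φ x u y) (t : ℕ)
    (hy : ∀ j < t, VH H (innov A B C V W P0 u y j)) :
    ∀ j < t, VH H (y j) := by
  intro j
  induction j using Nat.strong_induction_on with
  | _ j ih =>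
    intro hj
    have h1 := xpred_VH (H := H) V W P0 hcl j (fun l hl => ih l hl (by omega))
    have h2 := (hy j hj).add (h1.mulVec C)
    have : y j = fun ω => innov A B C V W P0 u y j ω + C *ᵥ xpred A B C V W P0 u y j ω := by
      funext ω
      simp [innov]
    rw [this]
    exact h2

theorem self_mem_Sset (i : Fin 3) : i ∈ Sset i := by
  fin_cases i <;> simp [Sset]

theorem localSigma_past (y : ℕ → Ω → idx pv → ℝ) (i : Fin 3) (t j : ℕ) (hj : j < t) :
    VH (measSub (localSigma y i (t + 1))) (y j) := by
  intro b
  have h1 : MeasurableSpace.comap (y j) inferInstance ≤ localSigma y i (t + 1) := by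
    refine le_trans ?_ le_sup_right
    exact le_iSup₂_of_le (f := fun j (_ : j ∈ Finset.range (t + 1 - 1)) =>
      MeasurableSpace.comap (y j) inferInstance) j (by simpa using hj) le_rfl
  have h2 : @Measurable _ _ (localSigma y i (t + 1)) _ (y j) := measurable_iff_comap_le.2 h1
  exact (measurable_pi_apply b).comp h2

theorem localSigma_cur (y : ℕ → Ω → idx pv → ℝ) (i : Fin 3) (t : ℕ) (b : idx pv)
    (hb : b.1 ∈ Sset i) :
    (fun ω => y t ω b) ∈ measSub (localSigma y i (t + 1)) := by
  obtain ⟨j, b⟩ := b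
  have h1 : MeasurableSpace.comap (fun ω (b : Fin (pv j)) => y t ω ⟨j, b⟩) inferInstance ≤
      localSigma y i (t + 1) := by
    refine le_trans ?_ le_sup_left
    exact le_iSup₂_of_le (f := fun j (_ : j ∈ Sset i) =>
      MeasurableSpace.comap (fun ω (b : Fin (pv j)) => y (t + 1 - 1) ω ⟨j, b⟩) inferInstance)
        j hb le_rfl
  have h2 : @Measurable _ _ (localSigma y i (t + 1)) _
    (fun ω (b : Fin (pv j)) => y t ω ⟨j, b⟩) := measurable_iff_comap_le.2 h1
  exact (measurable_pi_apply b).comp h2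

theorem localSigma_le (y : ℕ → Ω → idx pv → ℝ) (i : Fin 3) (t : ℕ) (m : MeasurableSpace Ω)
    (h1 : ∀ b : idx pv, b.1 ∈ Sset i → (fun ω => y t ω b) ∈ measSub m)
    (h2 : ∀ j < t, VH (measSub m) (y j)) : localSigma y i (t + 1) ≤ m := by
  refine sup_le (iSup₂_le fun j hj => ?_) (iSup₂_le fun j hj => ?_)
  · refine measurable_iff_comap_le.1 (measurable_pi_iff.2 fun b => ?_)
    exact h1 ⟨j, b⟩ hj
  · refine measurable_iff_comap_le.1 (measurable_pi_iff.2 fun b => ?_)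
    exact h2 j (by simpa using hj) b

/-- for every `k ≥ 1` and every player `i`, the conditional expectation
`E[xᵢ(k) | I¹ᵢ(k)]` equals the `i`-th block of
`x̂¹(k) = A x̂(k−1|k−2) + B u(k−1) + K¹(k−1)(y(k−1) − C x̂(k−1|k−2))` almost surely. -/
theorem stmt1 {nv qv pv : Fin 3 → ℕ} {Ω : Type} [MeasurableSpace Ω]
    (μ : Measure Ω) [IsProbabilityMeasure μ] (N : ℕ)
    (A : Matrix (idx nv) (idx nv) ℝ) (B : Matrix (idx nv) (idx qv) ℝ)
    (C : Matrix (idx pv) (idx nv) ℝ)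
    (hA : CyclicSparse A) (hB : BlockDiag B) (hC : BlockDiag C)
    (P0 W : Matrix (idx nv) (idx nv) ℝ) (V : Matrix (idx pv) (idx pv) ℝ)
    (hV : V.PosDef)
    (x0 : Ω → idx nv → ℝ) (w : ℕ → Ω → idx nv → ℝ) (v : ℕ → Ω → idx pv → ℝ)
    (hnoise : NoiseOK μ N P0 W V x0 w v)
    (F G : ℕ → Matrix (idx qv) (idx pv) ℝ) (Φ : ℕ → ℕ → Matrix (idx qv) (idx pv) ℝ)
    (hadm : Admissible F G)
    (x : ℕ → Ω → idx nv → ℝ) (u : ℕ → Ω → idx qv → ℝ) (y : ℕ → Ω → idx pv → ℝ)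
    (hcl : ClosedLoop A B C x0 w v F G Φ x u y) :
    ∀ k, 1 ≤ k → k ≤ N → ∀ (i : Fin 3) (a : Fin (nv i)),
      (μ[fun ω => x k ω ⟨i, a⟩ | localSigma y i k]) =ᵐ[μ]
        fun ω => xh1 A B C V W P0 u y k ω ⟨i, a⟩ := by
  intro k hk1 hkN i a
  obtain ⟨t, rfl⟩ : ∃ t, k = t + 1 := ⟨k - 1, by omega⟩
  have htN : t < N := by omega
  obtain ⟨H, hH, hx0, hw, hv⟩ := exists_gaussSpace hnoise
  have hcr := hnoise.cross
  have hclx := hcl.2.1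
  have hcly := hcl.2.2.1
  -- error and innovation processes
  let e : ℕ → Ω → idx nv → ℝ := fun k ω => x k ω - xpred A B C V W P0 u y k ω
  let yt : ℕ → Ω → idx pv → ℝ := fun k => innov A B C V W P0 u y k
  have he0 : e 0 = x0 := by
    funext ω
    simp [e, xpred, hcl.1]
  have heS : ∀ k, e (k + 1) = fun ω => A *ᵥ e k ω + w k ω -
      Kgain A C V (Pmat A C V W P0 k) *ᵥ yt k ω := by
    intro k
    funext ω
    simp only [e, yt, xpred, innov, hclx, Matrix.mulVec_sub]
    abel
  have hyt : ∀ k, yt k = fun ω => C *ᵥ e k ω + v k ω := by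
    intro k
    funext ω
    simp only [e, yt, innov, hcly, Matrix.mulVec_sub]
    abel
  obtain ⟨hE, hY, hn1, hn2, hn3⟩ := kalman_aux hH A C hcr hx0 hw hv _ e yt he0 heS hyt
  obtain ⟨hP, hO⟩ := kalman_main hH A C hV hcr hx0 hw hv e yt he0 heS hyt t htN.le
  have hyH : ∀ j < N, VH H (y j) := y_VH V W P0 hcl N hY
  have het := hE t htN.le
  have hyt' := hY t htN
  have hwt := hw t htN
  have hvt := hv t htN
  have hpsd : (Pmat A C V W P0 t).PosSemidef := by rw [← hP]; exact crm_posSemidef hH het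
  have hpd := posDef_innov C _ hpsd hV
  have hev : crm μ (e t) (v t) = 0 := by
    rw [← crm_transpose, (hn1 t htN.le t htN le_rfl).2]; simp
  have hey : crm μ (e t) (yt t) = Pmat A C V W P0 t * Cᵀ := by
    rw [hyt, crm_add_right hH (het.mulVec C) hvt het, crm_mulVec_right hH het het, hev, hP,
      add_zero]
  have hvy : crm μ (v t) (yt t) = V := by
    rw [hyt, crm_add_right hH (het.mulVec C) hvt hvt, crm_mulVec_right hH het hvt,
      (hn1 t htN.le t htN le_rfl).2, hcr.vv t htN]
    simp
  have hyy : crm μ (yt t) (yt t) = C * Pmat A C V W P0 t * Cᵀ + V := by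
    conv_lhs => enter [2]; rw [hyt]
    rw [crm_add_left hH (het.mulVec C) hvt hyt', crm_mulVec_left hH het hyt', hey, hvy,
      Matrix.mul_assoc]
  -- the residual
  let R : Ω → idx nv → ℝ := fun ω => A *ᵥ e t ω + w t ω -
    K1mat A C V (Pmat A C V W P0 t) *ᵥ yt t ω
  have hR : VH H R := ((het.mulVec A).add hwt).sub (hyt'.mulVec _)
  have hRg : ∀ Y : Ω → idx pv → ℝ, VH H Y → crm μ R Y =
      A * crm μ (e t) Y + crm μ (w t) Y -
        K1mat A C V (Pmat A C V W P0 t) * crm μ (yt t) Y := by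
    intro Y hYY
    rw [crm_sub_left hH ((het.mulVec A).add hwt) (hyt'.mulVec _) hYY,
      crm_add_left hH (het.mulVec A) hwt hYY, crm_mulVec_left hH het hYY,
      crm_mulVec_left hH hyt' hYY]
  have hRcur : ∀ b : idx pv, b.1 ∈ Sset i → crm μ R (yt t) ⟨i, a⟩ b = 0 := by
    intro b hb
    rw [hRg _ hyt', hey, hyy, hn2 t htN t htN le_rfl, Matrix.sub_apply, add_zero,
      K1mat_eq A C hC _ hpd i a b hb, sub_self]
  have hRpast : ∀ j < t, crm μ R (yt j) = 0 := by
    intro j hj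
    have hjN : j < N := by omega
    have hyj := hY j hjN
    have hyyj : crm μ (yt t) (yt j) = 0 := by
      conv_lhs => enter [2]; rw [hyt]
      rw [crm_add_left hH (het.mulVec C) hvt hyj, crm_mulVec_left hH het hyj, hO j hj,
        hn3 j hjN t htN hj]
      simp
    rw [hRg _ hyj, hO j hj, hn2 j hjN t htN hj.le, hyyj]
    simp
  -- innovation coordinates
  let Z : ridx pv (Sset i) ⊕ (Fin t × idx pv) → Ω → ℝ :=
    Sum.elim (fun b ω => yt t ω b.1) (fun p ω => yt p.1 ω p.2)
  have hZ : ∀ c, Z c ∈ H := by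
    rintro (b | ⟨j, b⟩)
    · exact hyt' b.1
    · exact hY j (by omega) b
  have hZ0 : ∀ c, ∫ ω, R ω ⟨i, a⟩ * Z c ω ∂μ = 0 := by
    rintro (b | ⟨j, b⟩)
    · exact hRcur b.1 b.2
    · exact congrFun (congrFun (hRpast j j.2) ⟨i, a⟩) b
  have hle : localSigma y i (t + 1) ≤
      MeasurableSpace.comap (fun ω c => Z c ω) inferInstance := by
    have hZm : ∀ c, Z c ∈ measSub (MeasurableSpace.comap (fun ω c => Z c ω) inferInstance) := by
      intro c
      have h0 : Measurable[MeasurableSpace.comap (fun ω c => Z c ω) inferInstance]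
        (fun ω c => Z c ω) := comap_measurable _
      exact (measurable_pi_apply c).comp h0
    have hp := y_VH (H := measSub (MeasurableSpace.comap (fun ω c => Z c ω) inferInstance))
      V W P0 hcl t (fun j hj b => hZm (Sum.inr (⟨j, hj⟩, b)))
    refine localSigma_le y i t _ ?_ hp
    intro b hb
    have h1 := hZm (Sum.inl ⟨b, hb⟩)
    have h2 := (xpred_VH V W P0 hcl t hp).mulVec C b
    have h3 := Submodule.add_mem _ h1 h2
    convert h3 using 1
    funext ω
    simp [Z, yt, innov]
  have hcond := hH.condExp_zero (localSigma y i (t + 1)) Z hZ _ (hR ⟨i, a⟩) hZ0 hle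
  have hZmm : Measurable (fun ω c => Z c ω) := measurable_pi_iff.2 fun c => hH.meas _ (hZ c)
  have hle0 := hle.trans hZmm.comap_le
  -- the estimate is measurable for the local information
  have hpastL := fun j hj => localSigma_past y i t j hj
  have hxpL := xpred_VH V W P0 hcl t hpastL
  have hmeas : (fun ω => xh1 A B C V W P0 u y (t + 1) ω ⟨i, a⟩) ∈
      measSub (localSigma y i (t + 1)) := by
    obtain ⟨f, hf, hu⟩ := ctrl_past hcl t hpastL
    refine Submodule.add_mem _ (Submodule.add_mem _ (hxpL.mulVec A ⟨i, a⟩) ?_) ?_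
    · refine mulVec_mem B _ fun c hc => ?_
      have hci : c.1 = i := by
        by_contra h
        exact hc (hB _ _ fun h' => h h'.symm)
      have h1 : (fun ω => (F t *ᵥ y t ω) c) ∈ measSub (localSigma y i (t + 1)) := by
        refine mulVec_mem (F t) c fun d hd => localSigma_cur y i t d ?_
        have hcd : c.1 = d.1 := by
          by_contra h
          exact hd (hadm.1 t _ _ h)
        rw [← hcd, hci]
        exact self_mem_Sset i
      have h2 := Submodule.add_mem _ h1 (hf c)
      convert h2 using 1
      funext ω
      exact congrFun (hu ω) c
    · refine mulVec_mem _ _ fun c hc => ?_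
      have hcS : c.1 ∈ Sset i := by
        by_contra h
        exact hc (by rw [K1mat, dif_neg h])
      exact Submodule.sub_mem _ (localSigma_cur y i t c hcS) (hxpL.mulVec C c)
  have hxpH := xpred_VH V W P0 hcl t (fun j hj => hyH j (by omega))
  have hxhH : VH H (xh1 A B C V W P0 u y (t + 1)) :=
    ((hxpH.mulVec A).add ((ctrl_VH hcl t (fun j hj => hyH j (by omega))).mulVec B)).add
      (hyt'.mulVec _)
  have hInteg : ∀ g ∈ H, Integrable g μ := fun g hg => (hH.memLp g hg).integrable (by norm_num)
  have hdec : (fun ω => x (t + 1) ω ⟨i, a⟩) =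
      (fun ω => R ω ⟨i, a⟩) + fun ω => xh1 A B C V W P0 u y (t + 1) ω ⟨i, a⟩ := by
    funext ω
    have : x (t + 1) ω = R ω + xh1 A B C V W P0 u y (t + 1) ω := by
      simp only [R, xh1, e, yt, hclx, Matrix.mulVec_sub, Nat.add_sub_cancel]
      abel
    exact congrFun this _
  rw [hdec]
  have hadd := condExp_add (hInteg _ (hR ⟨i, a⟩)) (hInteg _ (hxhH ⟨i, a⟩)) (localSigma y i (t + 1))
  have hself := condExp_of_stronglyMeasurable hle0 (Measurable.stronglyMeasurable hmeas)
    (hInteg _ (hxhH ⟨i, a⟩))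
  rw [hself] at hadd
  filter_upwards [hadd, hcond] with ω h1 h2
  rw [h1, Pi.add_apply, h2, zero_add]

end
end
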